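/- arXiv:math/0511401 — 2 statements merged into one kernel-verified Lean document; each statement's English description precedes it below -/
import Mathlib

section
/- Let c₁ and c₂ each satisfy [H1] and [H2], and for j = 1, 2 suppose the Jost solutions U_{1,j}, U_{2,j} : ℝ × {Im k ≥ 0} → ℂ at each k depend holomorphically on k in {Im k > 0} and continuously on {Im k ≥ 0} (together with their x-derivatives). For each real k ≠ 0 let R₂(k; c_j) denote the reflection coefficient of c_j, determined by U_{1,j}(·,k) = (R₂(k;c_j)/T_j(k)) U_{2,j}(·,k) + (1/T_j(k)) conj(U_{2,j}(·,k)) with T_j(k) ≠ 0. If R₂(k; c₁) = R₂(k; c₂) for all real k ≠ 0, then ∫_ℝ Q₁(x) dx = ∫_ℝ Q₂(x) dx, where Q_j = 1 − 1/c_j. -/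
open MeasureTheory Filter Topology

noncomputable section

/-- Hypothesis [H1]: `c` is essentially bounded below away from `0` and bounded above. -/
def HypH1 (c : ℝ → ℝ) : Prop :=
  ∃ c₀ > (0 : ℝ), ∃ cM > (0 : ℝ), ∀ᵐ x : ℝ, c₀ < c x ∧ c x ≤ cM

/-- Hypothesis [H1] with explicit constants `c₀`, `cM`. -/
def HypH1c (c : ℝ → ℝ) (c₀ cM : ℝ) : Prop :=
  0 < c₀ ∧ 0 < cM ∧ ∀ᵐ x : ℝ, c₀ < c x ∧ c x ≤ cM

/-- Hypothesis [H2]: `|c(x) - 1| ≤ C ⟨x⟩^{-1-δ}` almost everywhere. -/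
def HypH2 (c : ℝ → ℝ) : Prop :=
  ∃ C > (0 : ℝ), ∃ δ > (0 : ℝ),
    ∀ᵐ x : ℝ, |c x - 1| ≤ C * (1 + x ^ 2) ^ (-(1 + δ) / 2)

/-- `u` is continuously differentiable, its derivative is locally absolutely continuous,
and `u'' + (k²/c²) u = 0` holds almost everywhere (equivalently, the integral formulation
of the second-order equation holds). -/
def SolvesHelmholtz (c : ℝ → ℝ) (k : ℂ) (u : ℝ → ℂ) : Prop :=
  ContDiff ℝ 1 u ∧
  ∀ a b : ℝ, deriv u b = deriv u a + ∫ x in a..b, -(k ^ 2 / ((c x : ℂ) ^ 2)) * u x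

/-- The Jost solution from `+∞` at `k` : `e^{-ikx} u(x) → 1` as `x → +∞`. -/
def IsJostPlus (c : ℝ → ℝ) (k : ℂ) (u : ℝ → ℂ) : Prop :=
  SolvesHelmholtz c k u ∧
  Tendsto (fun x : ℝ => Complex.exp (-(Complex.I * k * (x : ℂ))) * u x) atTop (𝓝 1)

/-- The Jost solution from `-∞` at `k` : `e^{ikx} u(x) → 1` as `x → -∞`. -/
def IsJostMinus (c : ℝ → ℝ) (k : ℂ) (u : ℝ → ℂ) : Prop :=
  SolvesHelmholtz c k u ∧
  Tendsto (fun x : ℝ => Complex.exp (Complex.I * k * (x : ℂ)) * u x) atBot (𝓝 1)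

/-- `q = 1 - 1/c²`. -/
def qfun (c : ℝ → ℝ) (x : ℝ) : ℝ := 1 - 1 / (c x) ^ 2

/-- `Q = 1 - 1/c`. -/
def Qfun (c : ℝ → ℝ) (x : ℝ) : ℝ := 1 - 1 / c x

/-- Regularity in `k` of a family of solutions: holomorphy on the open upper half-plane
and continuity up to the real axis, for the solution and its `x`-derivative. -/
def JostFamilyRegular (U : ℂ → ℝ → ℂ) : Prop :=
  ∀ y : ℝ,
    DifferentiableOn ℂ (fun k => U k y) {k : ℂ | 0 < k.im} ∧
    ContinuousOn (fun k => U k y) {k : ℂ | 0 ≤ k.im} ∧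
    DifferentiableOn ℂ (fun k => deriv (U k) y) {k : ℂ | 0 < k.im} ∧
    ContinuousOn (fun k => deriv (U k) y) {k : ℂ | 0 ≤ k.im}

namespace Refl

section Calc
variable {E : Type*} [NormedAddCommGroup E] [NormedSpace ℝ E]

lemma lip_Icc {f : ℝ → E} (hf : LocallyLipschitz f) (A B : ℝ) :
    ∃ K : NNReal, LipschitzOnWith K f (Set.Icc A B) := by
  have := hf.locallyLipschitzOn (s := Set.Icc A B)
  exact this.exists_lipschitzOnWith_of_compact isCompact_Icc

lemma ftc [CompleteSpace E] [SecondCountableTopology E] {f g : ℝ → E} (hf : LocallyLipschitz f)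
    (hd : ∀ᵐ x, HasDerivAt f (g x) x) (a b : ℝ) :
    IntervalIntegrable g volume a b ∧ ∫ x in a..b, g x = f b - f a := by
  have key : ∀ A B : ℝ, ∃ K : ℝ, ∀ᵐ x, x ∈ Set.Icc A B → ‖g x‖ ≤ K := by
    intro A B
    obtain ⟨K, hK⟩ := lip_Icc hf (A - 1) (B + 1)
    refine ⟨K, ?_⟩
    filter_upwards [hd] with x hx hx'
    rw [← hx.deriv]
    refine norm_deriv_le_of_lipschitzOn (s := Set.Icc (A-1) (B+1)) ?_ hK
    apply Icc_mem_nhds <;> linarith [hx'.1, hx'.2]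
  have hgm : AEStronglyMeasurable g volume := by
    refine (stronglyMeasurable_deriv f).aestronglyMeasurable.congr ?_
    filter_upwards [hd] with x hx using hx.deriv
  have hii : ∀ A B : ℝ, IntervalIntegrable g volume A B := by
    intro A B
    obtain ⟨K, hK⟩ := key (min A B) (max A B)
    rw [intervalIntegrable_iff]
    refine IntegrableOn.of_bound (by simp) hgm.restrict K ?_
    rw [ae_restrict_iff' measurableSet_uIoc]
    filter_upwards [hK] with x hx hx'
    exact hx (Set.uIoc_subset_uIcc hx')
  refine ⟨hii a b, ?_⟩
  obtain ⟨K₁, hK₁⟩ := lip_Icc hf (min a b) (max a b)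
  obtain ⟨K₂, hK₂⟩ := key (min a b) (max a b)
  have hac1 : AbsolutelyContinuousOnInterval f a b :=
    LipschitzOnWith.absolutelyContinuousOnInterval hK₁
  have hac2 : AbsolutelyContinuousOnInterval (fun x => ∫ t in a..x, g t) a b := by
    refine LipschitzOnWith.absolutelyContinuousOnInterval (K := K₂.toNNReal) ?_
    rw [lipschitzOnWith_iff_norm_sub_le]
    intro x hx y hy
    rw [intervalIntegral.integral_interval_sub_left (hii _ _) (hii _ _), Real.norm_eq_abs]
    refine (intervalIntegral.norm_integral_le_of_norm_le_const_ae (C := K₂.toNNReal) ?_)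
    filter_upwards [hK₂] with t ht ht'
    refine (ht ?_).trans (Real.le_coe_toNNReal _)
    exact (Set.uIcc_subset_uIcc hy hx) (Set.uIoc_subset_uIcc ht')
  have := (hac1.sub hac2).const_of_ae_hasDerivAt_zero (by
    filter_upwards [hd, (hii a b).ae_hasDerivAt_integral] with x h1 h2 h3
    have := h1.sub (h2 h3 a (by simp))
    simpa using this)
  obtain ⟨C, hC⟩ := this
  have h1 := hC a (by simp)
  have h2 := hC b (by simp)
  simp at h1 h2
  rw [← h1] at h2
  rw [← h2]; abel

lemma prim_lip [CompleteSpace E] {g : ℝ → E} (hgm : AEStronglyMeasurable g volume)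
    (hb : ∀ A B : ℝ, ∃ K : ℝ, ∀ᵐ x, x ∈ Set.Icc A B → ‖g x‖ ≤ K) (a : ℝ) :
    LocallyLipschitz (fun x => ∫ t in a..x, g t) ∧
    ∀ᵐ x, HasDerivAt (fun x => ∫ t in a..x, g t) (g x) x := by
  have hii : ∀ A B : ℝ, IntervalIntegrable g volume A B := by
    intro A B
    obtain ⟨K, hK⟩ := hb (min A B) (max A B)
    rw [intervalIntegrable_iff]
    refine IntegrableOn.of_bound (by simp) hgm.restrict K ?_
    rw [ae_restrict_iff' measurableSet_uIoc]
    filter_upwards [hK] with x hx hx'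
    exact hx (Set.uIoc_subset_uIcc hx')
  constructor
  · intro x₀
    obtain ⟨K₂, hK₂⟩ := hb (x₀ - 1) (x₀ + 1)
    refine ⟨K₂.toNNReal, Set.Icc (x₀-1) (x₀+1), Icc_mem_nhds (by linarith) (by linarith), ?_⟩
    rw [lipschitzOnWith_iff_norm_sub_le]
    intro x hx y hy
    rw [intervalIntegral.integral_interval_sub_left (hii _ _) (hii _ _), Real.norm_eq_abs]
    refine (intervalIntegral.norm_integral_le_of_norm_le_const_ae (C := K₂.toNNReal) ?_)
    filter_upwards [hK₂] with t ht ht'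
    refine (ht ?_).trans (Real.le_coe_toNNReal _)
    have := Set.uIoc_subset_uIcc ht'
    exact (Set.ordConnected_Icc.uIcc_subset hy hx) this
  · have : LocallyIntegrable g volume := by
      rw [locallyIntegrable_iff]
      intro k hk
      obtain ⟨A, B, hAB⟩ : ∃ A B, k ⊆ Set.Icc A B := by
        obtain ⟨A, hA⟩ := hk.bddBelow
        obtain ⟨B, hB⟩ := hk.bddAbove
        exact ⟨A, B, fun x hx => ⟨hA hx, hB hx⟩⟩
      obtain ⟨K, hK⟩ := hb A B
      refine IntegrableOn.of_bound hk.measure_lt_top hgm.restrict K ?_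
      rw [ae_restrict_iff' hk.measurableSet]
      filter_upwards [hK] with x hx hx' using hx (hAB hx')
    filter_upwards [LocallyIntegrable.ae_hasDerivAt_integral this] with x hx
    exact hx a

lemma lip_add {f g : ℝ → E} (hf : LocallyLipschitz f) (hg : LocallyLipschitz g) :
    LocallyLipschitz (fun x => f x + g x) := by
  have : ContDiff ℝ 1 (fun p : E × E => p.1 + p.2) := by fun_prop
  exact this.locallyLipschitz.comp (hf.prodMk hg)

lemma lip_sub {f g : ℝ → E} (hf : LocallyLipschitz f) (hg : LocallyLipschitz g) :
    LocallyLipschitz (fun x => f x - g x) := by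
  have : ContDiff ℝ 1 (fun p : E × E => p.1 - p.2) := by fun_prop
  exact this.locallyLipschitz.comp (hf.prodMk hg)

lemma lip_mul {f g : ℝ → ℂ} (hf : LocallyLipschitz f) (hg : LocallyLipschitz g) :
    LocallyLipschitz (fun x => f x * g x) := by
  have : ContDiff ℝ 1 (fun p : ℂ × ℂ => p.1 * p.2) := by fun_prop
  exact this.locallyLipschitz.comp (hf.prodMk hg)

lemma lip_cexp {f : ℝ → ℂ} (hf : LocallyLipschitz f) :
    LocallyLipschitz (fun x => Complex.exp (f x)) := by
  have : ContDiff ℝ 1 (fun p : ℂ => Complex.exp p) := by fun_prop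
  exact this.locallyLipschitz.comp hf

lemma lip_conj {f : ℝ → ℂ} (hf : LocallyLipschitz f) :
    LocallyLipschitz (fun x => (starRingEnd ℂ) (f x)) :=
  (Complex.isometry_conj.lipschitz.locallyLipschitz).comp hf

lemma lip_re {f : ℝ → ℂ} (hf : LocallyLipschitz f) :
    LocallyLipschitz (fun x => (f x).re) :=
  (Complex.reCLM.lipschitz.locallyLipschitz).comp hf

lemma lip_inv {f : ℝ → ℂ} (hf : LocallyLipschitz f) (h0 : ∀ x, f x ≠ 0) :
    LocallyLipschitz (fun x => (f x)⁻¹) := by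
  intro x
  obtain ⟨K, t, ht, hK⟩ := hf x
  have hc : ContDiffAt ℝ 1 (fun z : ℂ => z⁻¹) (f x) := contDiffAt_inv ℝ (h0 x)
  obtain ⟨K', t', ht', hK'⟩ := hc.exists_lipschitzOnWith
  refine ⟨K' * K, t ∩ f ⁻¹' t', inter_mem ht (hf.continuous.continuousAt ht'), ?_⟩
  exact hK'.comp (hK.mono Set.inter_subset_left) (fun y hy => hy.2)

lemma lip_expmul (s : ℂ) : LocallyLipschitz (fun x : ℝ => Complex.exp (s * x)) := by
  have : ContDiff ℝ 1 (fun x : ℝ => Complex.exp (s * x)) := by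
    have : ContDiff ℝ 1 (fun x : ℝ => (x:ℂ)) := Complex.ofRealCLM.contDiff
    fun_prop
  exact this.locallyLipschitz

lemma deriv_expmul (s : ℂ) (x : ℝ) :
    HasDerivAt (fun x : ℝ => Complex.exp (s * x)) (s * Complex.exp (s * x)) x := by
  have h1 : HasDerivAt (fun z : ℂ => Complex.exp (s * z)) (s * Complex.exp (s * x)) (x:ℂ) := by
    have := ((hasDerivAt_id (x:ℂ)).const_mul s).cexp
    simpa [mul_comm] using this
  exact h1.comp_ofReal
end Calc
end Refl

namespace Refl

/-- standing assumptions on `q` -/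
structure QHyp (q : ℝ → ℝ) : Prop where
  int : Integrable q
  bd : ∃ M : ℝ, ∀ᵐ x, |q x| ≤ M
  le1 : ∀ᵐ x, q x ≤ 1

/-- first-order system -/
structure Sys (q : ℝ → ℝ) (s : ℂ) (u v : ℝ → ℂ) : Prop where
  lu : LocallyLipschitz u
  lv : LocallyLipschitz v
  du : ∀ᵐ x, HasDerivAt u (-s * v x) x
  dv : ∀ᵐ x, HasDerivAt v (-s * (1 - q x) * u x) x

def al (s : ℂ) (u v : ℝ → ℂ) (x : ℝ) : ℂ := Complex.exp (s * x) * (u x + v x)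
def be (s : ℂ) (u v : ℝ → ℂ) (x : ℝ) : ℂ := Complex.exp (-s * x) * (u x - v x)

variable {q : ℝ → ℝ} {s : ℂ} {u v : ℝ → ℂ}

lemma al_lip (h : Sys q s u v) : LocallyLipschitz (al s u v) :=
  lip_mul (lip_expmul s) (lip_add h.lu h.lv)

lemma be_lip (h : Sys q s u v) : LocallyLipschitz (be s u v) :=
  lip_mul (lip_expmul (-s)) (lip_sub h.lu h.lv)

lemma al_deriv (h : Sys q s u v) :
    ∀ᵐ x, HasDerivAt (al s u v) (s * q x * (Complex.exp (s * x) * u x)) x := by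
  filter_upwards [h.du, h.dv] with x h1 h2
  have := (deriv_expmul s x).mul (h1.add h2)
  refine this.congr_deriv ?_
  simp only [Pi.add_apply]; ring

lemma be_deriv (h : Sys q s u v) :
    ∀ᵐ x, HasDerivAt (be s u v) (-s * q x * (Complex.exp (-s * x) * u x)) x := by
  filter_upwards [h.du, h.dv] with x h1 h2
  have := (deriv_expmul (-s) x).mul (h1.sub h2)
  refine this.congr_deriv ?_
  simp only [Pi.sub_apply]; ring

lemma qint_mono (hq : QHyp q) {x y : ℝ} (hxy : x ≤ y) :
    ∫ t in x..y, |q t| ≤ ∫ t in Set.Ioi x, |q t| := by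
  rw [intervalIntegral.integral_of_le hxy]
  exact setIntegral_mono_set hq.int.abs.integrableOn (Eventually.of_forall fun _ => abs_nonneg _)
    (Set.Ioc_subset_Ioi_self.eventuallyLE)

lemma qint_Ioi (hq : QHyp q) (x : ℝ) : ∫ t in Set.Ioi x, |q t| ≤ ∫ t, |q t| :=
  setIntegral_le_integral hq.int.abs (Eventually.of_forall fun _ => abs_nonneg _)

lemma al_diff (hq : QHyp q) (h : Sys q s u v) {C x y : ℝ} (hxy : x ≤ y)
    (hC : ∀ t ∈ Set.Icc x y, ‖Complex.exp (s * t) * u t‖ ≤ C) :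
    ‖al s u v y - al s u v x‖ ≤ ‖s‖ * C * ∫ t in x..y, |q t| := by
  rw [← (ftc (al_lip h) (al_deriv h) x y).2, ← intervalIntegral.integral_const_mul]
  refine intervalIntegral.norm_integral_le_of_norm_le hxy ?_ ?_
  · refine Eventually.of_forall fun t ht => ?_
    rw [norm_mul, norm_mul, Complex.norm_real, Real.norm_eq_abs]
    have := hC t ⟨ht.1.le, ht.2⟩
    calc _ ≤ ‖s‖ * |q t| * C := by gcongr
      _ = _ := by ring
  · exact (hq.int.abs.intervalIntegrable).const_mul _

lemma exp_split (s : ℂ) (x : ℝ) : Complex.exp (-s * x) = Complex.exp (-(2 * s) * x) * Complex.exp (s * x) := by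
  rw [← Complex.exp_add]; congr 1; ring

lemma norm_exp_s (s : ℂ) (x : ℝ) : ‖Complex.exp (s * x)‖ = Real.exp (s.re * x) := by
  rw [Complex.norm_exp]; simp

lemma be_diff (hq : QHyp q) (h : Sys q s u v) (hs : 0 ≤ s.re) {C x y : ℝ} (hxy : x ≤ y)
    (hC : ∀ t ∈ Set.Icc x y, ‖Complex.exp (s * t) * u t‖ ≤ C) :
    ‖be s u v y - be s u v x‖ ≤ ‖s‖ * C * Real.exp (-(2 * s.re) * x) * ∫ t in x..y, |q t| := by
  rw [← (ftc (be_lip h) (be_deriv h) x y).2, ← intervalIntegral.integral_const_mul]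
  refine intervalIntegral.norm_integral_le_of_norm_le hxy ?_ ?_
  · refine Eventually.of_forall fun t ht => ?_
    rw [exp_split, mul_assoc (Complex.exp _), norm_mul, norm_mul, norm_mul, norm_neg, Complex.norm_real, Real.norm_eq_abs,
      norm_exp_s]
    have := hC t ⟨ht.1.le, ht.2⟩
    have h2 : Real.exp ((-(2 * s)).re * t) ≤ Real.exp (-(2 * s.re) * x) := by
      apply Real.exp_le_exp.2
      simp
      nlinarith [ht.1]
    calc _ ≤ ‖s‖ * |q t| * (Real.exp (-(2 * s.re) * x) * C) := by gcongr
      _ = _ := by ring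
  · exact (hq.int.abs.intervalIntegrable).const_mul _

/-- a differentiable-a.e. function with derivative bounded by `K |q|` on a half line converges -/
lemma conv_top {f g : ℝ → ℂ} (hq : QHyp q) (hf : LocallyLipschitz f) (hd : ∀ᵐ x, HasDerivAt f (g x) x)
    {K x₀ : ℝ} (hK : ∀ x, x₀ ≤ x → ‖g x‖ ≤ K * |q x|) : ∃ l, Tendsto f atTop (𝓝 l) := by
  have hgm : AEStronglyMeasurable g volume := by
    refine (stronglyMeasurable_deriv f).aestronglyMeasurable.congr ?_
    filter_upwards [hd] with x hx using hx.deriv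
  have hi : IntegrableOn g (Set.Ioi x₀) := by
    refine Integrable.mono' ((hq.int.abs.const_mul K).integrableOn (s := Set.Ioi x₀)) hgm.restrict ?_
    rw [ae_restrict_iff' measurableSet_Ioi]
    exact Eventually.of_forall fun x hx => hK x (le_of_lt hx)
  have h1 := intervalIntegral_tendsto_integral_Ioi x₀ hi tendsto_id
  refine ⟨f x₀ + ∫ x in Set.Ioi x₀, g x, ?_⟩
  refine (h1.const_add (f x₀)).congr fun x => ?_
  simp only [id]
  rw [(ftc hf hd x₀ x).2]; abel

lemma osc {s γ : ℂ} (hs : s.re = 0) (hs0 : s ≠ 0)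
    (h : Tendsto (fun x : ℝ => Complex.exp (2 * s * x)) atTop (𝓝 γ)) : False := by
  have him : s.im ≠ 0 := fun h => hs0 (Complex.ext hs h)
  have h2 : Tendsto (fun x : ℝ => Complex.exp (2 * s * ((x + Real.pi / (2 * s.im) : ℝ) : ℂ))) atTop (𝓝 γ) :=
    h.comp (tendsto_atTop_add_const_right _ _ tendsto_id)
  have h3 : (fun x : ℝ => Complex.exp (2 * s * ((x + Real.pi / (2 * s.im) : ℝ) : ℂ))) =
      fun x : ℝ => - Complex.exp (2 * s * x) := by
    funext x
    have : 2 * s * ((x + Real.pi / (2 * s.im) : ℝ) : ℂ) = 2 * s * x + Real.pi * Complex.I := by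
      have hse : s = s.im * Complex.I := by
        apply Complex.ext <;> simp [hs]
      push_cast
      rw [mul_add]
      congr 1
      have : (s.im : ℂ) ≠ 0 := by exact_mod_cast him
      rw [hse]; simp; field_simp
    rw [this, Complex.exp_add, Complex.exp_pi_mul_I]; ring
  rw [h3] at h2
  have h4 := tendsto_nhds_unique h2 h.neg
  have h5 : γ = 0 := by
    have : γ = -γ := h4
    linear_combination this / 2
  have h6 : Tendsto (fun x : ℝ => ‖Complex.exp (2 * s * x)‖) atTop (𝓝 ‖γ‖) := h.norm
  have h7 : (fun x : ℝ => ‖Complex.exp (2 * s * x)‖) = fun _ => 1 := by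
    funext x; rw [norm_exp_s]; simp [hs]
  rw [h7, h5, norm_zero] at h6
  exact one_ne_zero (tendsto_nhds_unique tendsto_const_nhds h6)

/-- L3 : asymptotics at `+∞` -/
lemma jost_asymp (hq : QHyp q) (h : Sys q s u v) (hs : 0 ≤ s.re) (hs0 : s ≠ 0)
    (hl : Tendsto (fun x : ℝ => Complex.exp (s * x) * u x) atTop (𝓝 1)) :
    Tendsto (be s u v) atTop (𝓝 0) ∧
    Tendsto (fun x : ℝ => Complex.exp (s * x) * (u x - v x)) atTop (𝓝 0) ∧
    Tendsto (al s u v) atTop (𝓝 2) := by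
  obtain ⟨x₀, hx₀⟩ : ∃ x₀ : ℝ, ∀ x, x₀ ≤ x → ‖Complex.exp (s * x) * u x‖ ≤ 2 := by
    have := hl.norm.eventually (gt_mem_nhds (show ‖(1:ℂ)‖ < 2 by simp))
    obtain ⟨x₀, h0⟩ := eventually_atTop.1 this
    exact ⟨x₀, fun x hx => (h0 x hx).le⟩
  obtain ⟨A, hA⟩ := conv_top hq (al_lip h) (al_deriv h) (K := ‖s‖ * 2) (x₀ := x₀) (by
    intro x hx
    rw [norm_mul, norm_mul, Complex.norm_real, Real.norm_eq_abs]
    have := hx₀ x hx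
    calc _ ≤ ‖s‖ * |q x| * 2 := by gcongr
      _ = _ := by ring)
  have hexp : ∀ x : ℝ, Complex.exp (s * x) * (u x - v x) = 2 * (Complex.exp (s * x) * u x) - al s u v x := by
    intro x; simp only [al]; ring
  have hbe : ∀ x : ℝ, be s u v x = Complex.exp (-(2*s) * x) * (Complex.exp (s * x) * (u x - v x)) := by
    intro x; simp only [be]; rw [exp_split, mul_assoc]
  have hbe' : ∀ x : ℝ, Complex.exp (2*s * x) * be s u v x = (Complex.exp (s * x) * (u x - v x)) := by
    intro x; rw [hbe, ← mul_assoc, ← Complex.exp_add]; simp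
  have hG : Tendsto (fun x : ℝ => Complex.exp (s * x) * (u x - v x)) atTop (𝓝 (2 * 1 - A)) := by
    simp_rw [hexp]
    exact (hl.const_mul 2).sub hA
  have hB0 : Tendsto (be s u v) atTop (𝓝 0) := by
    rcases hs.lt_or_eq with hpos | hz
    · have he : Tendsto (fun x : ℝ => Complex.exp (-(2*s) * x)) atTop (𝓝 0) := by
        rw [tendsto_zero_iff_norm_tendsto_zero]
        simp_rw [norm_exp_s]
        apply Real.tendsto_exp_atBot.comp
        refine tendsto_id.const_mul_atTop_of_neg ?_
        simp; linarith
      have := he.mul hG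
      rw [zero_mul] at this
      exact this.congr fun x => (hbe x).symm
    · obtain ⟨B, hB⟩ := conv_top hq (be_lip h) (be_deriv h) (K := ‖s‖ * 2) (x₀ := x₀) (by
        intro x hx
        rw [exp_split, mul_assoc (Complex.exp _), norm_mul, norm_mul, norm_mul, norm_neg, Complex.norm_real, Real.norm_eq_abs,
          norm_exp_s]
        have := hx₀ x hx
        have h1 : (-(2*s)).re = 0 := by simp [← hz]
        rw [h1, zero_mul, Real.exp_zero, one_mul]
        calc _ ≤ ‖s‖ * |q x| * 2 := by gcongr
          _ = _ := by ring)
      by_cases hB0 : B = 0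
      · rwa [hB0] at hB
      · exfalso
        have h1 := hG.div hB hB0
        refine osc hz.symm hs0 (h1.congr' ?_)
        filter_upwards [hB.eventually_ne hB0] with x hx
        rw [Pi.div_apply, ← hbe', mul_div_cancel_right₀ _ hx]
  have hE0 : Tendsto (fun x : ℝ => Complex.exp (s * x) * (u x - v x)) atTop (𝓝 0) := by
    have ht : Tendsto (fun x : ℝ => ‖s‖ * 2 * ∫ t in Set.Ioi x, |q t|) atTop (𝓝 0) := by
      simpa using (tendsto_integral_Ioi_zero (μ := volume) (f := fun t => |q t|) (tendsto_id (α := ℝ) (x := atTop))).const_mul (‖s‖ * 2)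
    refine squeeze_zero_norm' ?_ ht
    filter_upwards [eventually_ge_atTop x₀] with x hx
    have h1 : ‖be s u v x‖ ≤ ‖s‖ * 2 * Real.exp (-(2 * s.re) * x) * ∫ t in Set.Ioi x, |q t| := by
      have h2 : Tendsto (fun y => ‖be s u v y - be s u v x‖) atTop (𝓝 ‖0 - be s u v x‖) :=
        (hB0.sub_const _).norm
      rw [zero_sub, norm_neg] at h2
      refine le_of_tendsto h2 ?_
      filter_upwards [eventually_ge_atTop x] with y hy
      refine (be_diff hq h hs hy (C := 2) (fun t ht => hx₀ t (hx.trans ht.1))).trans ?_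
      gcongr
      exact qint_mono hq hy
    rw [← hbe', norm_mul, norm_exp_s]
    calc _ ≤ Real.exp ((2*s).re * x) * (‖s‖ * 2 * Real.exp (-(2 * s.re) * x) * ∫ t in Set.Ioi x, |q t|) := by gcongr
      _ = (Real.exp ((2*s).re * x) * Real.exp (-(2 * s.re) * x)) * (‖s‖ * 2 * ∫ t in Set.Ioi x, |q t|) := by ring
      _ = _ := by rw [← Real.exp_add]; simp
  refine ⟨hB0, hE0, ?_⟩
  have := (hl.const_mul 2).sub hE0
  rw [mul_one, sub_zero] at this
  refine this.congr fun x => ?_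
  simp only [al]; ring

lemma normsq_id (a b : ℂ) : ‖a + b‖^2 - ‖a - b‖^2 = 4 * (a * (starRingEnd ℂ) b).re := by
  rw [← Complex.normSq_eq_norm_sq, ← Complex.normSq_eq_norm_sq, Complex.normSq_add, Complex.normSq_sub]
  ring

/-- flux -/
lemma flux_antitone (hq : QHyp q) (h : Sys q s u v) (hs : 0 ≤ s.re) {x y : ℝ} (hxy : x ≤ y) :
    (u y * (starRingEnd ℂ) (v y)).re ≤ (u x * (starRingEnd ℂ) (v x)).re := by
  have hL := lip_re (lip_mul h.lu (lip_conj h.lv))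
  have hD : ∀ᵐ x, HasDerivAt (fun x => (u x * (starRingEnd ℂ) (v x)).re)
      (- s.re * (Complex.normSq (v x) + (1 - q x) * Complex.normSq (u x))) x := by
    filter_upwards [h.du, h.dv] with x h1 h2
    have h3 : HasDerivAt (fun x => (starRingEnd ℂ) (v x)) ((starRingEnd ℂ) (-s * (1 - q x) * u x)) x :=
      (Complex.conjCLE.hasFDerivAt.comp_hasDerivAt x h2)
    have h4 := Complex.reCLM.hasFDerivAt.comp_hasDerivAt x (h1.mul h3)
    refine h4.congr_deriv ?_
    simp [Complex.normSq_apply]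
    ring
  have := (ftc hL hD x y).2
  have h2 : ∫ x in x..y, - s.re * (Complex.normSq (v x) + (1 - q x) * Complex.normSq (u x)) ≤ 0 := by
    have h3 : 0 ≤ ∫ x in x..y, s.re * (Complex.normSq (v x) + (1 - q x) * Complex.normSq (u x)) := by
      refine intervalIntegral.integral_nonneg_of_ae hxy ?_
      filter_upwards [hq.le1] with t ht
      have := Complex.normSq_nonneg (v t)
      have := Complex.normSq_nonneg (u t)
      have h1 : 0 ≤ 1 - q t := by linarith
      simp only [Pi.zero_apply]
      positivity
    simp_rw [neg_mul]
    rw [intervalIntegral.integral_neg]; linarith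
  linarith

lemma norm_lt (hq : QHyp q) (h : Sys q s u v) (hs : 0 ≤ s.re) (hs0 : s ≠ 0)
    (hl : Tendsto (fun x : ℝ => Complex.exp (s * x) * u x) atTop (𝓝 1)) (x : ℝ) :
    ‖u x - v x‖ < ‖u x + v x‖ := by
  obtain ⟨-, h1, h2⟩ := jost_asymp hq h hs hs0 hl
  have e1 := h1.norm.eventually (gt_mem_nhds (show ‖(0:ℂ)‖ < 1 by simp))
  have e2 := h2.norm.eventually (lt_mem_nhds (show 1 < ‖(2:ℂ)‖ by simp))
  obtain ⟨y, hy1, hy2, hy⟩ := (e1.and (e2.and (eventually_ge_atTop x))).exists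
  have h3 : ‖u y - v y‖ < ‖u y + v y‖ := by
    have := hy1.trans hy2
    simp only [al] at this
    rw [norm_mul, norm_mul] at this
    exact lt_of_mul_lt_mul_left this (norm_nonneg _)
  have h4 := flux_antitone hq h hs hy
  have h5 := normsq_id (u y) (v y)
  have h6 := normsq_id (u x) (v x)
  have h7 : ‖u y - v y‖^2 < ‖u y + v y‖^2 := by gcongr
  have h8 : ‖u x - v x‖^2 < ‖u x + v x‖^2 := by linarith
  exact lt_of_pow_lt_pow_left₀ 2 (norm_nonneg _) h8

end Refl

namespace Refl

structure Jost (q : ℝ → ℝ) (s : ℂ) (u v : ℝ → ℂ) : Prop where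
  sys : Sys q s u v
  hs : 0 ≤ s.re
  hs0 : s ≠ 0
  hl : Tendsto (fun x : ℝ => Complex.exp (s * x) * u x) atTop (𝓝 1)

def rr (u v : ℝ → ℂ) (x : ℝ) : ℂ := (u x - v x) / (u x + v x)
def JJ (q : ℝ → ℝ) (u v : ℝ → ℂ) : ℂ := ∫ x, (q x : ℂ) * (1 + rr u v x)

variable {q : ℝ → ℝ} {s : ℂ} {u v : ℝ → ℂ}

lemma a_ne (hq : QHyp q) (h : Jost q s u v) (x : ℝ) : u x + v x ≠ 0 := by
  have := norm_lt hq h.sys h.hs h.hs0 h.hl x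
  exact norm_pos_iff.1 (lt_of_le_of_lt (norm_nonneg _) this)

lemma rr_le (hq : QHyp q) (h : Jost q s u v) (x : ℝ) : ‖rr u v x‖ ≤ 1 := by
  have := norm_lt hq h.sys h.hs h.hs0 h.hl x
  rw [rr, norm_div]
  exact div_le_one_of_le₀ this.le (norm_nonneg _)

lemma rr_lip (hq : QHyp q) (h : Jost q s u v) : LocallyLipschitz (rr u v) := by
  have := lip_mul (lip_sub h.sys.lu h.sys.lv) (lip_inv (lip_add h.sys.lu h.sys.lv) (a_ne hq h))
  have e : rr u v = fun x => (u x - v x) * (u x + v x)⁻¹ := by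
    funext x; rw [rr, div_eq_mul_inv]
  rw [e]; exact this

lemma one_add_rr (hq : QHyp q) (h : Jost q s u v) (x : ℝ) : ‖1 + rr u v x‖ ≤ 2 := by
  refine (norm_add_le _ _).trans ?_
  have := rr_le hq h x
  simp; linarith

lemma JJ_int (hq : QHyp q) (h : Jost q s u v) :
    Integrable (fun x => (q x : ℂ) * (1 + rr u v x)) := by
  refine Integrable.mul_bdd (c := 2) hq.int.ofReal ?_ (Eventually.of_forall (one_add_rr hq h))
  exact (continuous_const.add (rr_lip hq h).continuous).aestronglyMeasurable

lemma JJ_le (hq : QHyp q) (h : Jost q s u v) : ‖JJ q u v‖ ≤ 2 * ∫ x, |q x| := by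
  rw [JJ, ← integral_const_mul]
  refine norm_integral_le_of_norm_le (hq.int.abs.const_mul 2) (Eventually.of_forall fun x => ?_)
  rw [norm_mul, Complex.norm_real, Real.norm_eq_abs, mul_comm]
  have := one_add_rr hq h x
  gcongr

def pp (q : ℝ → ℝ) (s : ℂ) (u v : ℝ → ℂ) (x : ℝ) : ℂ :=
  ∫ t in (0:ℝ)..x, s / 2 * ((q t : ℂ) * (1 + rr u v t))

lemma al_formula (hq : QHyp q) (h : Jost q s u v) (x : ℝ) :
    al s u v x = 2 * Complex.exp (-∫ t in Set.Ioi x, s / 2 * ((q t : ℂ) * (1 + rr u v t))) := by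
  have hI := (JJ_int hq h).const_mul (s/2)
  obtain ⟨p1, p2⟩ := prim_lip (g := fun t => s / 2 * ((q t : ℂ) * (1 + rr u v t))) hI.1 (by
    intro A B
    obtain ⟨M, hM⟩ := hq.bd
    refine ⟨‖s/2‖ * (M * 2), ?_⟩
    filter_upwards [hM] with x hx _
    rw [norm_mul, norm_mul, Complex.norm_real, Real.norm_eq_abs]
    have := one_add_rr hq h x
    have : 0 ≤ M := (abs_nonneg _).trans hx
    gcongr) 0
  set p : ℝ → ℂ := fun x => ∫ t in (0:ℝ)..x, s / 2 * ((q t : ℂ) * (1 + rr u v t)) with hp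
  set f : ℝ → ℂ := fun x => al s u v x * Complex.exp (-1 * p x) with hf
  have hfl : LocallyLipschitz f := by
    refine lip_mul (al_lip h.sys) (lip_cexp (lip_mul (LocallyLipschitz.const _) p1))
  have hfd : ∀ᵐ x, HasDerivAt f ((fun _ => (0:ℂ)) x) x := by
    filter_upwards [al_deriv h.sys, p2] with x h1 h2
    have := h1.mul ((h2.const_mul (-1:ℂ)).cexp)
    refine this.congr_deriv ?_
    have ha := a_ne hq h x
    have e : (1 + rr u v x) * (u x + v x) = 2 * u x := by
      rw [rr]; field_simp; ring
    simp only [al]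
    linear_combination (-1 : ℂ) * s / 2 * q x * Complex.exp (s*x) * Complex.exp (-1 * p x) * e
  have hconst : ∀ y, f y = f x := by
    intro y
    have := (ftc hfl hfd x y).2
    simp at this
    exact (sub_eq_zero.1 this.symm)
  obtain ⟨-, -, h2⟩ := jost_asymp hq h.sys h.hs h.hs0 h.hl
  have hpl : Tendsto p atTop (𝓝 (∫ t in Set.Ioi 0, s / 2 * ((q t : ℂ) * (1 + rr u v t)))) :=
    intervalIntegral_tendsto_integral_Ioi 0 hI.integrableOn tendsto_id
  have hlim : Tendsto f atTop (𝓝 (2 * Complex.exp (-1 * (∫ t in Set.Ioi 0, s / 2 * ((q t : ℂ) * (1 + rr u v t)))))) :=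
    h2.mul ((hpl.const_mul (-1)).cexp)
  have heq : f x = 2 * Complex.exp (-1 * (∫ t in Set.Ioi 0, s / 2 * ((q t : ℂ) * (1 + rr u v t)))) := by
    refine tendsto_nhds_unique (tendsto_const_nhds.congr fun y => (hconst y).symm) hlim
  have hsplit : p x + ∫ t in Set.Ioi x, s / 2 * ((q t : ℂ) * (1 + rr u v t)) = ∫ t in Set.Ioi 0, s / 2 * ((q t : ℂ) * (1 + rr u v t)) :=
    intervalIntegral.integral_interval_add_Ioi hI.integrableOn hI.integrableOn
  rw [← hsplit] at heq
  have : al s u v x = f x * Complex.exp (p x) := by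
    simp only [hf]
    rw [mul_assoc, ← Complex.exp_add]; simp
  rw [this, heq, mul_assoc, ← Complex.exp_add]
  congr 2; ring

lemma tail_le (hq : QHyp q) (h : Jost q s u v) (x : ℝ) :
    ‖∫ t in Set.Ioi x, s / 2 * ((q t : ℂ) * (1 + rr u v t))‖ ≤ ‖s‖ * ∫ x, |q x| := by
  refine (norm_integral_le_of_norm_le (g := fun t => ‖s‖ * |q t|) (hq.int.abs.const_mul _).integrableOn (Eventually.of_forall fun t => ?_)).trans ?_
  · rw [norm_mul, norm_mul, Complex.norm_real, Real.norm_eq_abs, norm_div]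
    have := one_add_rr hq h t
    calc _ ≤ ‖s‖ / ‖(2:ℂ)‖ * (|q t| * 2) := by gcongr
      _ = _ := by simp; ring
  · rw [integral_const_mul]
    exact mul_le_mul_of_nonneg_left (qint_Ioi hq x) (norm_nonneg _)

lemma al_le (hq : QHyp q) (h : Jost q s u v) (x : ℝ) :
    ‖al s u v x‖ ≤ 2 * Real.exp (‖s‖ * ∫ x, |q x|) := by
  rw [al_formula hq h, norm_mul, Complex.norm_exp]
  simp only [Complex.norm_ofNat]
  gcongr
  refine (Complex.re_le_norm _).trans ?_
  rw [norm_neg]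
  exact tail_le hq h x

lemma al_ge (hq : QHyp q) (h : Jost q s u v) (x : ℝ) :
    2 * Real.exp (-(‖s‖ * ∫ x, |q x|)) ≤ ‖al s u v x‖ := by
  rw [al_formula hq h, norm_mul, Complex.norm_exp]
  simp only [Complex.norm_ofNat, Complex.neg_re]
  gcongr
  refine (Complex.re_le_norm _).trans ?_
  exact tail_le hq h x

lemma al_bot (hq : QHyp q) (h : Jost q s u v) :
    Tendsto (al s u v) atBot (𝓝 (2 * Complex.exp (-(s / 2 * JJ q u v)))) := by
  have hI := (JJ_int hq h).const_mul (s/2)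
  have : Tendsto (fun x => ∫ t in Set.Ioi x, s / 2 * ((q t : ℂ) * (1 + rr u v t))) atBot
      (𝓝 (s / 2 * JJ q u v)) := by
    rw [JJ, ← integral_const_mul]
    exact (aecover_Ioi (μ := volume) (tendsto_id (α := ℝ) (x := atBot))).integral_tendsto_of_countably_generated hI
  refine ((this.neg.cexp).const_mul 2).congr fun x => (al_formula hq h x).symm

lemma u_le (hq : QHyp q) (h : Jost q s u v) (x : ℝ) :
    ‖Complex.exp (s * x) * u x‖ ≤ 2 * Real.exp (‖s‖ * ∫ x, |q x|) := by
  refine le_trans ?_ (al_le hq h x)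
  rw [al, norm_mul, norm_mul]
  gcongr
  have h1 := norm_lt hq h.sys h.hs h.hs0 h.hl x
  have h2 : u x = ((u x + v x) + (u x - v x)) / 2 := by ring
  have h3 : ‖u x‖ ≤ (‖u x + v x‖ + ‖u x - v x‖) / 2 := by
    conv_lhs => rw [h2]
    rw [norm_div, Complex.norm_ofNat]
    gcongr
    exact norm_add_le _ _
  linarith

lemma b_le (hq : QHyp q) (h : Jost q s u v) (x : ℝ) :
    ‖Complex.exp (s * x) * (u x - v x)‖ ≤ ‖s‖ * (2 * Real.exp (‖s‖ * ∫ x, |q x|)) * ∫ x, |q x| := by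
  obtain ⟨hB0, -, -⟩ := jost_asymp hq h.sys h.hs h.hs0 h.hl
  have h1 : ‖be s u v x‖ ≤ ‖s‖ * (2 * Real.exp (‖s‖ * ∫ x, |q x|)) * Real.exp (-(2 * s.re) * x) * ∫ t, |q t| := by
    have h2 : Tendsto (fun y => ‖be s u v y - be s u v x‖) atTop (𝓝 ‖0 - be s u v x‖) :=
      (hB0.sub_const _).norm
    rw [zero_sub, norm_neg] at h2
    refine le_of_tendsto h2 ?_
    filter_upwards [eventually_ge_atTop x] with y hy
    refine (be_diff hq h.sys h.hs hy (fun t ht => u_le hq h t)).trans ?_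
    gcongr
    exact (qint_mono hq hy).trans (qint_Ioi hq x)
  have hbe' : Complex.exp (2*s * x) * be s u v x = (Complex.exp (s * x) * (u x - v x)) := by
    rw [be, ← mul_assoc, ← Complex.exp_add]; congr 2; ring
  rw [← hbe', norm_mul, norm_exp_s]
  calc _ ≤ Real.exp ((2*s).re * x) * (‖s‖ * (2 * Real.exp (‖s‖ * ∫ x, |q x|)) * Real.exp (-(2 * s.re) * x) * ∫ t, |q t|) := by gcongr
    _ = (Real.exp ((2*s).re * x) * Real.exp (-(2 * s.re) * x)) * (‖s‖ * (2 * Real.exp (‖s‖ * ∫ x, |q x|)) * ∫ t, |q t|) := by ring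
    _ = _ := by rw [← Real.exp_add]; simp

lemma rr_small (hq : QHyp q) (h : Jost q s u v) (x : ℝ) :
    ‖rr u v x‖ ≤ ‖s‖ * (∫ x, |q x|) * Real.exp (2 * (‖s‖ * ∫ x, |q x|)) := by
  have h1 := b_le hq h x
  have h2 := al_ge hq h x
  have h0 := a_ne hq h x
  have e : rr u v x * al s u v x = Complex.exp (s * x) * (u x - v x) := by
    rw [rr, al]; field_simp
  rw [← e, norm_mul] at h1
  set N := ‖s‖ * ∫ x, |q x| with hN
  have h3 : ‖rr u v x‖ * (2 * Real.exp (-N)) ≤ N * (2 * Real.exp N) := by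
    calc _ ≤ ‖rr u v x‖ * ‖al s u v x‖ := by gcongr
      _ ≤ _ := h1
      _ = _ := by rw [hN]; ring
  have h4 : Real.exp (-N) * Real.exp N = 1 := by rw [← Real.exp_add]; simp
  have h5 : Real.exp (2 * N) = Real.exp N * Real.exp N := by rw [← Real.exp_add]; congr 1; ring
  calc ‖rr u v x‖ = (‖rr u v x‖ * (2 * Real.exp (-N))) * (Real.exp N / 2) := by linear_combination (-‖rr u v x‖) * h4
    _ ≤ (N * (2 * Real.exp N)) * (Real.exp N / 2) := by gcongr
    _ = _ := by rw [h5]; ring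

lemma JJ_low (hq : QHyp q) (h : Jost q s u v) :
    ‖JJ q u v - ((∫ x, q x : ℝ) : ℂ)‖ ≤ (∫ x, |q x|) * (‖s‖ * (∫ x, |q x|) * Real.exp (2 * (‖s‖ * ∫ x, |q x|))) := by
  have e : ((∫ x, q x : ℝ) : ℂ) = ∫ x, (q x : ℂ) := integral_ofReal.symm
  have hqi : Integrable (fun x => (q x : ℂ)) := hq.int.ofReal
  rw [e, JJ, ← integral_sub (JJ_int hq h) hqi, ← integral_mul_const]
  refine norm_integral_le_of_norm_le (hq.int.abs.mul_const _) (Eventually.of_forall fun x => ?_)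
  have : (q x : ℂ) * (1 + rr u v x) - q x = q x * rr u v x := by ring
  rw [this, norm_mul, Complex.norm_real, Real.norm_eq_abs]
  have := rr_small hq h x
  gcongr

/-- Wronskian -/
lemma wronsk (hq : QHyp q) (h : Jost q s u v) {u₂ v₂ : ℝ → ℂ} (h₂ : Sys q s u₂ v₂)
    (hb : Tendsto (be s u₂ v₂) atBot (𝓝 2))
    (ha : Tendsto (fun x : ℝ => Complex.exp (-s * x) * (u₂ x + v₂ x)) atBot (𝓝 0)) (x : ℝ) :
    u₂ x * v x - v₂ x * u x = 2 * Complex.exp (-(s / 2 * JJ q u v)) := by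
  set f : ℝ → ℂ := fun x => u₂ x * v x - v₂ x * u x with hf
  have hfl : LocallyLipschitz f := lip_sub (lip_mul h₂.lu h.sys.lv) (lip_mul h₂.lv h.sys.lu)
  have hfd : ∀ᵐ x, HasDerivAt f ((fun _ => (0:ℂ)) x) x := by
    filter_upwards [h.sys.du, h.sys.dv, h₂.du, h₂.dv] with x h1 h2 h3 h4
    have := (h3.mul h2).sub (h4.mul h1)
    refine this.congr_deriv ?_
    ring
  have hconst : ∀ y, f y = f x := by
    intro y
    have := (ftc hfl hfd x y).2
    simp at this
    exact (sub_eq_zero.1 this.symm)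
  have hbd : Tendsto (fun x : ℝ => (Complex.exp (-s * x) * (u₂ x + v₂ x)) * (Complex.exp (s * x) * (u x - v x))) atBot (𝓝 0) := by
    have h0 := ha.norm.mul_const (‖s‖ * (2 * Real.exp (‖s‖ * ∫ x, |q x|)) * ∫ x, |q x|)
    rw [norm_zero, zero_mul] at h0
    refine squeeze_zero_norm (fun x => ?_) h0
    rw [norm_mul]
    have := b_le hq h x
    gcongr
  have hlim := ((hb.mul (al_bot hq h)).sub hbd).const_mul (1/2)
  have hee : ∀ x : ℝ, Complex.exp (-s * x) * Complex.exp (s * x) = 1 := by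
    intro x; rw [← Complex.exp_add]; simp
  have h5 : Tendsto f atBot (𝓝 (1 / 2 * (2 * (2 * Complex.exp (-(s / 2 * JJ q u v))) - 0))) := by
    refine hlim.congr fun x => ?_
    simp only [be, al, hf]
    linear_combination (u₂ x * v x - v₂ x * u x) * hee x
  have := tendsto_nhds_unique (tendsto_const_nhds.congr fun y => (hconst y).symm) h5
  change f x = _
  rw [this]; ring

/-- `s` imaginary : limit of `be` at `-∞` -/
lemma be_bot (hq : QHyp q) (h : Jost q s u v) (hz : s.re = 0) :
    Tendsto (be s u v) atBot (𝓝 (∫ x, s * q x * (Complex.exp (-s * x) * u x))) := by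
  obtain ⟨hB0, -, -⟩ := jost_asymp hq h.sys h.hs h.hs0 h.hl
  have hI : Integrable (fun x : ℝ => s * q x * (Complex.exp (-s * x) * u x)) := by
    refine Integrable.mul_bdd (c := 2 * Real.exp (‖s‖ * ∫ x, |q x|)) (hq.int.ofReal.const_mul s) ?_ (Eventually.of_forall fun x => ?_)
    · exact ((lip_expmul (-s)).continuous.mul h.sys.lu.continuous).aestronglyMeasurable
    · have := u_le hq h x
      rw [norm_mul, norm_exp_s] at this ⊢
      simpa [hz] using this
  have h1 : ∀ x, be s u v x = ∫ t in Set.Ioi x, s * q t * (Complex.exp (-s * t) * u t) := by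
    intro x
    have h2 := intervalIntegral_tendsto_integral_Ioi x hI.integrableOn tendsto_id
    have h3 : Tendsto (fun y => be s u v x - be s u v y) atTop (𝓝 (be s u v x - 0)) := hB0.const_sub _
    rw [sub_zero] at h3
    refine tendsto_nhds_unique h3 (h2.congr fun y => ?_)
    have := (ftc (be_lip h.sys) (be_deriv h.sys) x y).2
    have e : (fun t : ℝ => s * q t * (Complex.exp (-s * t) * u t)) = fun t => -(-s * q t * (Complex.exp (-s * t) * u t)) := by
      funext t; ring
    rw [e, intervalIntegral.integral_neg, id, this]; ring
  have := (aecover_Ioi (μ := volume) (tendsto_id (α := ℝ) (x := atBot))).integral_tendsto_of_countably_generated hI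
  exact this.congr fun x => (h1 x).symm

lemma flux_imag (hq : QHyp q) (h : Jost q s u v) (hz : s.re = 0) :
    ‖Complex.exp (-(s / 2 * JJ q u v))‖^2 - ‖(∫ x, s * q x * (Complex.exp (-s * x) * u x)) / 2‖^2 = 1 := by
  have hle : ∀ x y : ℝ, x ≤ y → (u y * (starRingEnd ℂ) (v y)).re = (u x * (starRingEnd ℂ) (v x)).re := by
    intro x y hxy
    refine le_antisymm (flux_antitone hq h.sys h.hs hxy) ?_
    have hsy : Sys q (-s) u (fun x => - v x) := by
      refine ⟨h.sys.lu, ?_, ?_, ?_⟩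
      · simpa using lip_mul (LocallyLipschitz.const (-1:ℂ)) h.sys.lv
      · filter_upwards [h.sys.du] with x hx
        refine hx.congr_deriv ?_
        ring
      · filter_upwards [h.sys.dv] with x hx
        refine hx.neg.congr_deriv ?_
        ring
    have := flux_antitone hq hsy (by simp [hz]) hxy
    simp at this ⊢
    linarith
  have hall : ∀ x y : ℝ, (u y * (starRingEnd ℂ) (v y)).re = (u x * (starRingEnd ℂ) (v x)).re := by
    intro x y
    rcases le_total x y with hxy | hxy
    · exact hle x y hxy
    · exact (hle y x hxy).symm
  have hid : ∀ x, ‖al s u v x‖^2 - ‖be s u v x‖^2 = 4 * (u x * (starRingEnd ℂ) (v x)).re := by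
    intro x
    rw [al, be, norm_mul, norm_mul, norm_exp_s, norm_exp_s, ← normsq_id]
    simp [hz]
  have hconst : ∀ x, ‖al s u v x‖^2 - ‖be s u v x‖^2 = ‖al s u v 0‖^2 - ‖be s u v 0‖^2 := by
    intro x; rw [hid, hid, hall 0 x]
  obtain ⟨hB0, -, hA⟩ := jost_asymp hq h.sys h.hs h.hs0 h.hl
  have t1 := (hA.norm.pow 2).sub (hB0.norm.pow 2)
  have t2 := ((al_bot hq h).norm.pow 2).sub ((be_bot hq h hz).norm.pow 2)
  have e1 := tendsto_nhds_unique (tendsto_const_nhds.congr fun y => (hconst y).symm) t1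
  have e2 := tendsto_nhds_unique (tendsto_const_nhds.congr fun y => (hconst y).symm) t2
  rw [e1] at e2
  simp only [norm_mul, norm_div, Complex.norm_ofNat, norm_zero] at e2 ⊢
  linarith

end Refl

namespace Refl

lemma approx_L2 {f : ℝ → ℝ} (hfm : AEStronglyMeasurable f volume) (hf : Integrable (fun x => f x ^ 2)) {ε : ℝ} (hε : 0 < ε) :
    ∃ g : ℝ → ℝ, HasCompactSupport g ∧ ContDiff ℝ 1 g ∧ Integrable (fun x => (g x - f x)^2) ∧
      ∫ x, (g x - f x)^2 ≤ ε^2 := by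
  have h2 : MemLp f 2 volume := (memLp_two_iff_integrable_sq hfm).2 hf
  obtain ⟨g, hg1, hg2, hg3⟩ := h2.exist_eLpNorm_sub_le (by simp) (by simp) hε
  have hgL : MemLp g 2 volume := hg2.continuous.memLp_of_hasCompactSupport hg1
  have hd : MemLp (f - g) 2 volume := h2.sub hgL
  have hi : Integrable (fun x => (g x - f x)^2) := by
    have := (memLp_two_iff_integrable_sq hd.1).1 hd
    refine this.congr (Eventually.of_forall fun x => ?_)
    simp only [Pi.sub_apply]; ring
  refine ⟨g, hg1, hg2.of_le (by norm_cast), hi, ?_⟩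
  rw [hd.eLpNorm_eq_integral_rpow_norm (by simp) (by simp)] at hg3
  rw [ENNReal.ofReal_le_ofReal_iff hε.le] at hg3
  have e : ∫ x, ‖(f - g) x‖ ^ (ENNReal.toReal 2) = ∫ x, (g x - f x)^2 := by
    congr 1; funext x
    simp only [Pi.sub_apply, ENNReal.toReal_ofNat, Real.rpow_ofNat, Real.norm_eq_abs, sq_abs]; ring
  rw [e] at hg3
  have h0 : 0 ≤ ∫ x, (g x - f x)^2 := integral_nonneg fun x => sq_nonneg _
  have h3 : (∫ x, (g x - f x)^2) = ((∫ x, (g x - f x)^2) ^ (ENNReal.toReal 2)⁻¹)^2 := by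
    rw [← Real.rpow_natCast, ← Real.rpow_mul h0]; simp
  rw [h3]
  gcongr

structure NHyp (n : ℝ → ℝ) (m M : ℝ) : Prop where
  meas : Measurable n
  m0 : 0 < m
  m1 : m ≤ 1
  lo : ∀ᵐ x, m ≤ n x
  hi : ∀ᵐ x, n x ≤ M
  int : Integrable (fun x => 1 - n x)

variable {n : ℝ → ℝ} {m M : ℝ}

lemma NHyp.bdQ (h : NHyp n m M) : ∀ᵐ x, |1 - (n x)^2| ≤ 1 + M^2 := by
  filter_upwards [h.lo, h.hi] with x h1 h2
  have := h.m0
  rw [abs_le]; constructor <;> nlinarith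

lemma NHyp.qhyp (h : NHyp n m M) : QHyp (fun x => 1 - (n x)^2) := by
  have hm := h.meas
  refine ⟨?_, ⟨1 + M^2, h.bdQ⟩, ?_⟩
  · refine Integrable.mono' (h.int.abs.const_mul (1 + M)) (by fun_prop) ?_
    filter_upwards [h.lo, h.hi] with x h1 h2
    have := h.m0
    have e : 1 - (n x)^2 = (1 + n x) * (1 - n x) := by ring
    rw [e, norm_mul, Real.norm_eq_abs, Real.norm_eq_abs, abs_of_nonneg (by linarith : 0 ≤ 1 + n x)]
    gcongr
  · exact Eventually.of_forall fun x => by nlinarith [sq_nonneg (n x)]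

variable {q : ℝ → ℝ} {s : ℂ} {u v : ℝ → ℂ}

lemma rr_deriv (hq : QHyp q) (h : Jost q s u v) :
    ∀ᵐ x, HasDerivAt (rr u v) (s * (2 * rr u v x - q x / 2 * (1 + rr u v x)^2)) x := by
  filter_upwards [h.sys.du, h.sys.dv] with x h1 h2
  have ha := a_ne hq h x
  have := (h1.sub h2).div (h1.add h2) ha
  refine this.congr_deriv ?_
  simp only [rr, Pi.add_apply, Pi.sub_apply]
  field_simp
  ring

/-- pointwise algebra -/
lemma ptwise {n m M e s g' G ε : ℝ} {r d : ℂ} (hm0 : 0 < m) (hm1 : m ≤ 1) (hn : m ≤ n) (hM : n ≤ M)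
    (hs : 0 < s) (hε : 0 < ε) (hr : ‖r‖ ≤ 1) (hG : ‖d‖ ≤ G) (g : ℝ) (hd : d = r - g)
    (he : e = g - (1 - n) / (1 + n)) :
    ‖((1 - n^2 : ℝ) : ℂ) * (r - ((1 - n) / (1 + n) : ℝ))‖ ≤ ε * (1 - n^2)^2 + 1 / (2 * ε) * (1 + ((1+M)^2/m)^2) * e^2
      + 1 / (2 * ε * s * m) * (2 * ((starRingEnd ℂ) d * (s * (2 * r - ((1 - n^2 : ℝ) : ℂ) / 2 * (1 + r)^2) - g')).re + 2 * G * |g'|) := by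
  have hn0 : 0 < 1 + n := by linarith
  set ρ : ℝ := (1 - n) / (1 + n) with hρ
  set K : ℂ := ((1 + n)^2 / 2 : ℝ) * (1 - ρ * r) with hK
  have hρn : ρ * (1 + n) = 1 - n := by rw [hρ]; field_simp
  have hρn' : (ρ : ℂ) * (1 + n) = 1 - n := by exact_mod_cast hρn
  have hr' : s * (2 * r - ((1 - n^2 : ℝ) : ℂ) / 2 * (1 + r)^2) = s * K * (d + e) := by
    rw [hK, hd, he]
    push_cast
    have h1 : (1 - (n:ℂ)^2) = ρ * (1+n)^2 := by linear_combination (-1 - (n:ℂ)) * hρn'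
    have h2 : (1 - (n:ℂ))^2 = ρ^2 * (1+n)^2 := by linear_combination (-ρ * (1 + (n:ℂ)) - (1 - n)) * hρn'
    linear_combination (-(s:ℂ)*(1+r)^2/2) * h1 + (s:ℂ) * r / 2 * h2 + (s:ℂ) * r * (-1 - n) * hρn'
  have hre : |(ρ * r).re| ≤ |ρ| := by
    refine (Complex.abs_re_le_norm _).trans ?_
    rw [norm_mul, Complex.norm_real, Real.norm_eq_abs]
    nlinarith [abs_nonneg ρ]
  have hρa : |ρ| * (1 + n) = |1 - n| := by rw [← hρn, abs_mul, abs_of_pos hn0]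
  have hKre : m ≤ K.re := by
    have e1 : K.re = (1+n)^2/2 * (1 - (ρ * r).re) := by
      rw [hK, Complex.re_ofReal_mul]; simp
    rw [e1]
    have h1 : (1+n)^2/2 * (1 - |ρ|) ≤ (1+n)^2/2 * (1 - (ρ * r).re) := by
      have := (abs_le.1 hre).2
      gcongr
    have h2 : (1+n)^2/2 * (1 - |ρ|) = (1+n)/2 * ((1 + n) - |1 - n|) := by rw [← hρa]; ring
    have h3 : 2 * m ≤ (1 + n) - |1 - n| := by
      rcases abs_cases (1 - n) with ⟨h, _⟩ | ⟨h, _⟩ <;> rw [h] <;> linarith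
    nlinarith
  have hKn : ‖K‖ ≤ (1+M)^2 := by
    rw [hK, norm_mul, Complex.norm_real, Real.norm_of_nonneg (by positivity)]
    have h1 : |ρ| ≤ 1 := by
      have : |1 - n| ≤ 1 + n := by rw [abs_le]; constructor <;> linarith
      rw [← hρa] at this
      nlinarith
    have h2 : ‖1 - (ρ:ℂ) * r‖ ≤ 2 := by
      refine (norm_sub_le _ _).trans ?_
      rw [norm_mul, Complex.norm_real, Real.norm_eq_abs, norm_one]
      nlinarith [norm_nonneg r, abs_nonneg ρ]
    calc _ ≤ (1+n)^2/2 * 2 := by gcongr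
      _ = (1+n)^2 := by ring
      _ ≤ _ := by gcongr
  rw [hr']
  set X := ‖d‖ with hX
  have hX0 : 0 ≤ X := norm_nonneg _
  have hE : s * m * X^2 - s * (1+M)^2 * X * |e| - G * |g'| ≤ ((starRingEnd ℂ) d * (s * K * (d + e) - g')).re := by
    have e1 : ((starRingEnd ℂ) d * (s * K * (d + e) - g')) =
      ((s * X^2 : ℝ) : ℂ) * K + (s * (e : ℂ)) * ((starRingEnd ℂ) d * K) - (g' : ℂ) * (starRingEnd ℂ) d := by
      have : (starRingEnd ℂ) d * d = ((X^2 : ℝ) : ℂ) := by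
        rw [mul_comm, Complex.mul_conj, Complex.normSq_eq_norm_sq]
      push_cast at this ⊢
      linear_combination (s : ℂ) * K * this
    rw [e1, Complex.sub_re, Complex.add_re, Complex.re_ofReal_mul]
    have a1 : s * X^2 * m ≤ s * X^2 * K.re := by gcongr
    have a2 : |((s * (e : ℂ)) * ((starRingEnd ℂ) d * K)).re| ≤ s * |e| * (X * (1+M)^2) := by
      refine (Complex.abs_re_le_norm _).trans ?_
      rw [norm_mul, norm_mul, norm_mul, Complex.norm_real, Complex.norm_real, RCLike.norm_conj, Real.norm_of_nonneg hs.le, Real.norm_eq_abs]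
      gcongr
    have a3 : |((g' : ℂ) * (starRingEnd ℂ) d).re| ≤ |g'| * G := by
      refine (Complex.abs_re_le_norm _).trans ?_
      rw [norm_mul, Complex.norm_real, RCLike.norm_conj, Real.norm_eq_abs]
      gcongr
    have a2' := (abs_le.1 a2).1
    have a3' := (abs_le.1 a3).2
    linarith
  set Y := ((starRingEnd ℂ) d * (s * K * (d + e) - g')).re with hY
  have hL : ‖((1 - n^2 : ℝ) : ℂ) * (r - (ρ : ℝ))‖ ≤ |1 - n^2| * (X + |e|) := by
    rw [norm_mul, Complex.norm_real, Real.norm_eq_abs]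
    have : r - (ρ : ℂ) = d + (e : ℝ) := by rw [hd, he]; push_cast; ring
    rw [this]
    gcongr
    refine (norm_add_le _ _).trans ?_
    rw [Complex.norm_real, Real.norm_eq_abs]
  refine hL.trans ?_
  set κ := (1+M)^2 with hκ
  have hκ0 : 0 ≤ κ := by positivity
  have hX2 : X^2 ≤ 1 / (s * m) * (2 * Y + 2 * G * |g'|) + (κ/m)^2 * e^2 := by
    have h1 : s * m * X^2 ≤ (2 * Y + 2 * G * |g'|) + s * κ^2 / m * e^2 := by
      have h2 : 2 * (κ * X * |e|) ≤ m * X^2 + κ^2/m * e^2 := by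
        have : 0 ≤ (m * X - κ * |e|)^2 / m := by positivity
        have e3 : (m * X - κ * |e|)^2 / m = m * X^2 - 2 * (κ * X * |e|) + κ^2/m * e^2 := by
          rw [← sq_abs e]; field_simp; ring
        linarith
      have h3 := mul_le_mul_of_nonneg_left h2 hs.le
      have e4 : s * κ^2 / m * e^2 = s * (κ^2/m * e^2) := by ring
      rw [e4]
      nlinarith
    have h4 : X^2 = 1 / (s * m) * (s * m * X^2) := by field_simp
    rw [h4]
    calc _ ≤ 1 / (s * m) * ((2 * Y + 2 * G * |g'|) + s * κ^2 / m * e^2) := by gcongr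
      _ = _ := by field_simp
  have h5 : |1 - n^2| * X ≤ ε / 2 * (1 - n^2)^2 + 1 / (2 * ε) * X^2 := by
    have : 0 ≤ (ε * |1 - n^2| - X)^2 / (2 * ε) := by positivity
    have e3 : (ε * |1 - n^2| - X)^2 / (2 * ε) = ε / 2 * (1 - n^2)^2 - |1 - n^2| * X + 1 / (2 * ε) * X^2 := by
      rw [← sq_abs (1 - n^2)]; field_simp; ring
    linarith
  have h6 : |1 - n^2| * |e| ≤ ε / 2 * (1 - n^2)^2 + 1 / (2 * ε) * e^2 := by
    have : 0 ≤ (ε * |1 - n^2| - |e|)^2 / (2 * ε) := by positivity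
    have e3 : (ε * |1 - n^2| - |e|)^2 / (2 * ε) = ε / 2 * (1 - n^2)^2 - |1 - n^2| * |e| + 1 / (2 * ε) * e^2 := by
      rw [← sq_abs (1 - n^2), ← sq_abs e]; field_simp; ring
    linarith
  have h7 : 1 / (2 * ε) * X^2 ≤ 1 / (2 * ε) * (1 / (s * m) * (2 * Y + 2 * G * |g'|) + (κ/m)^2 * e^2) := by gcongr
  have h8 : 1 / (2 * ε * s * m) * (2 * Y + 2 * G * |g'|) = 1 / (2 * ε) * (1 / (s * m) * (2 * Y + 2 * G * |g'|)) := by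
    field_simp
  rw [h8]
  linarith

end Refl

namespace Refl

variable {n : ℝ → ℝ} {m M : ℝ}

lemma high (h : NHyp n m M) {ε : ℝ} (hε : 0 < ε) : ∃ C : ℝ, ∀ s : ℝ, 0 < s → ∀ u v : ℝ → ℂ,
    Jost (fun x => 1 - (n x)^2) s u v →
    ‖JJ (fun x => 1 - (n x)^2) u v - ((2 * ∫ x, (1 - n x) : ℝ) : ℂ)‖ ≤
      ε * ((∫ x, (1 - (n x)^2)^2) + (1 + ((1+M)^2/m)^2) / 2) + C / s := by
  have hq := h.qhyp
  have hm := h.meas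
  have hm0 := h.m0
  set ρ : ℝ → ℝ := fun x => (1 - n x) / (1 + n x) with hρ
  have hρm : Measurable ρ := by fun_prop
  have hρ1 : ∀ᵐ x, |ρ x| ≤ 1 ∧ |ρ x| ≤ |1 - n x| := by
    filter_upwards [h.lo] with x hx
    have h0 : 0 < 1 + n x := by linarith
    simp only [hρ]
    rw [abs_div, abs_of_pos h0]
    constructor
    · rw [div_le_one h0, abs_le]; constructor <;> linarith
    · exact div_le_self (abs_nonneg _) (by linarith)
  have hρ2 : Integrable (fun x => ρ x ^ 2) := by
    refine Integrable.mono' h.int.abs (by fun_prop) ?_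
    filter_upwards [hρ1] with x ⟨h1, h2⟩
    rw [Real.norm_of_nonneg (sq_nonneg _), ← sq_abs]
    nlinarith [abs_nonneg (ρ x)]
  have hq2 : Integrable (fun x => (1 - (n x)^2)^2) := by
    refine Integrable.mono' (hq.int.abs.const_mul (1 + M^2)) (by fun_prop) ?_
    filter_upwards [h.bdQ] with x h1
    rw [Real.norm_of_nonneg (sq_nonneg _), ← sq_abs]
    nlinarith [abs_nonneg (1 - (n x)^2)]
  obtain ⟨g, hgc, hg1, hgi, hgb⟩ := approx_L2 hρm.aestronglyMeasurable hρ2 hε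
  obtain ⟨G0, hG0⟩ := hgc.exists_bound_of_continuous hg1.continuous
  have hdc : Continuous (deriv g) := hg1.continuous_deriv (by simp)
  have hdi : Integrable (deriv g) := hdc.integrable_of_hasCompactSupport hgc.deriv
  set G := 1 + G0 with hG
  refine ⟨1 / (2 * ε * m) * (G^2 + 2 * G * ∫ x, |deriv g x|), ?_⟩
  intro s hs u v hJ
  have hG0' : 0 ≤ G0 := (norm_nonneg _).trans (hG0 0)
  set q : ℝ → ℝ := fun x => 1 - (n x)^2 with hqd
  have hqd' : ∀ x, q x = 1 - (n x)^2 := fun x => rfl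
  -- the function d
  set d : ℝ → ℂ := fun x => rr u v x - (g x : ℂ) with hd
  have hdG : ∀ x, ‖d x‖ ≤ G := by
    intro x
    refine (norm_sub_le _ _).trans ?_
    rw [Complex.norm_real]
    have := rr_le hq hJ x
    have := hG0 x
    linarith
  have hglip : LocallyLipschitz (fun x => (g x : ℂ)) :=
    (Complex.ofRealCLM.lipschitz.locallyLipschitz).comp hg1.locallyLipschitz
  have hdl : LocallyLipschitz d := lip_sub (rr_lip hq hJ) hglip
  have hdd : ∀ᵐ x, HasDerivAt d (s * (2 * rr u v x - q x / 2 * (1 + rr u v x)^2) - deriv g x) x := by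
    filter_upwards [rr_deriv hq hJ] with x hx
    have : HasDerivAt g (deriv g x) x := (hg1.differentiable (by simp) x).hasDerivAt
    exact hx.sub this.ofReal_comp
  set E : ℝ → ℝ := fun x => (d x * (starRingEnd ℂ) (d x)).re with hE
  have hEl : LocallyLipschitz E := lip_re (lip_mul hdl (lip_conj hdl))
  set E' : ℝ → ℝ := fun x => 2 * ((starRingEnd ℂ) (d x) * (s * (2 * rr u v x - q x / 2 * (1 + rr u v x)^2) - deriv g x)).re with hE'
  have hEd : ∀ᵐ x, HasDerivAt E (E' x) x := by
    filter_upwards [hdd] with x hx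
    have h3 : HasDerivAt (fun x => (starRingEnd ℂ) (d x)) ((starRingEnd ℂ) (s * (2 * rr u v x - q x / 2 * (1 + rr u v x)^2) - deriv g x)) x :=
      (Complex.conjCLE.toContinuousLinearMap.hasFDerivAt).comp_hasDerivAt x hx
    have h4 := (Complex.reCLM.hasFDerivAt (x := d x * (starRingEnd ℂ) (d x))).comp_hasDerivAt x (hx.mul h3)
    refine h4.congr_deriv ?_
    simp only [hE', Complex.reCLM_apply, Complex.add_re, Complex.mul_re, Complex.conj_re, Complex.conj_im]
    ring
  have hE0 : ∀ x, 0 ≤ E x ∧ E x ≤ G^2 := by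
    intro x
    have : E x = ‖d x‖^2 := by
      simp only [hE]; rw [Complex.mul_conj, Complex.ofReal_re, Complex.normSq_eq_norm_sq]
    rw [this]
    have := hdG x
    exact ⟨by positivity, by gcongr⟩
  -- the integrand
  have hpt : ∀ᵐ x, ‖(q x : ℂ) * (rr u v x - (ρ x : ℂ))‖ ≤ ε * (q x)^2 + 1 / (2 * ε) * (1 + ((1+M)^2/m)^2) * (g x - ρ x)^2
      + 1 / (2 * ε * s * m) * (E' x + 2 * G * |deriv g x|) := by
    filter_upwards [h.lo, h.hi] with x h1 h2
    exact ptwise hm0 h.m1 h1 h2 hs hε (rr_le hq hJ x) (hdG x) (g x) rfl rfl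
  have hJi := JJ_int hq hJ
  have hQi : Integrable (fun x => ((2 * (1 - n x) : ℝ) : ℂ)) := (h.int.const_mul 2).ofReal
  have heq : ∀ᵐ x, (q x : ℂ) * (1 + rr u v x) - ((2 * (1 - n x) : ℝ) : ℂ) = (q x : ℂ) * (rr u v x - (ρ x : ℂ)) := by
    filter_upwards [h.lo] with x hx
    have h0 : 1 + n x ≠ 0 := by linarith
    have : 2 * (1 - n x) = q x * (1 + ρ x) := by
      simp only [hρ, hqd']; field_simp; ring
    rw [this]; push_cast; ring
  have hDi : Integrable (fun x => (q x : ℂ) * (rr u v x - (ρ x : ℂ))) := (hJi.sub hQi).congr heq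
  have e0 : ((∫ x, 2*(1-n x) : ℝ):ℂ) = ∫ x, ((2*(1-n x):ℝ):ℂ) := integral_ofReal.symm
  have e1 : JJ q u v - ((2 * ∫ x, (1 - n x) : ℝ) : ℂ) = ∫ x, (q x : ℂ) * (rr u v x - (ρ x : ℂ)) := by
    rw [← integral_congr_ae heq, integral_sub hJi hQi, JJ, ← integral_const_mul, e0]
  rw [e1]
  refine (norm_integral_le_integral_norm _).trans ?_
  have hlim : Tendsto (fun N : ℝ => ∫ x in (-N)..N, ‖(q x : ℂ) * (rr u v x - (ρ x : ℂ))‖) atTop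
      (𝓝 (∫ x, ‖(q x : ℂ) * (rr u v x - (ρ x : ℂ))‖)) :=
    intervalIntegral_tendsto_integral hDi.norm tendsto_neg_atTop_atBot tendsto_id
  refine le_of_tendsto hlim ?_
  filter_upwards [eventually_ge_atTop (0:ℝ)] with N hN
  have hNN : -N ≤ N := by linarith
  obtain ⟨f1, f2⟩ := ftc hEl hEd (-N) N
  have i1 : IntervalIntegrable (fun x => ε * (q x)^2) volume (-N) N := (hq2.const_mul ε).intervalIntegrable
  have i2 : IntervalIntegrable (fun x => 1 / (2 * ε) * (1 + ((1+M)^2/m)^2) * (g x - ρ x)^2) volume (-N) N :=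
    (hgi.const_mul _).intervalIntegrable
  have i3 : IntervalIntegrable (fun x => 2 * G * |deriv g x|) volume (-N) N := (hdi.abs.const_mul _).intervalIntegrable
  have i4 := (f1.add i3).const_mul (1 / (2 * ε * s * m))
  have hmono := intervalIntegral.integral_mono_ae hNN hDi.norm.intervalIntegrable ((i1.add i2).add i4) hpt
  refine hmono.trans ?_
  have r1 : ∀ f : ℝ → ℝ, (∀ x, 0 ≤ f x) → Integrable f → ∫ x in (-N)..N, f x ≤ ∫ x, f x := by
    intro f hf hi
    rw [intervalIntegral.integral_of_le hNN]
    exact setIntegral_le_integral hi (Eventually.of_forall hf)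
  have j1 := r1 _ (fun x => sq_nonneg _) hq2
  have j2 := (r1 _ (fun x => sq_nonneg _) hgi).trans hgb
  have j3 := r1 _ (fun x => abs_nonneg _) hdi.abs
  have e2 : ∫ x in (-N)..N, ((ε * (q x)^2 + 1 / (2 * ε) * (1 + ((1+M)^2/m)^2) * (g x - ρ x)^2)
      + 1 / (2 * ε * s * m) * (E' x + 2 * G * |deriv g x|)) =
      ε * (∫ x in (-N)..N, (q x)^2) + 1 / (2 * ε) * (1 + ((1+M)^2/m)^2) * (∫ x in (-N)..N, (g x - ρ x)^2)
      + 1 / (2 * ε * s * m) * ((E N - E (-N)) + 2 * G * ∫ x in (-N)..N, |deriv g x|) := by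
    rw [intervalIntegral.integral_add (i1.add i2) i4, intervalIntegral.integral_add i1 i2, intervalIntegral.integral_const_mul, intervalIntegral.integral_const_mul,
      intervalIntegral.integral_const_mul, intervalIntegral.integral_add f1 i3, f2, intervalIntegral.integral_const_mul]
  refine (le_of_eq e2).trans ?_
  have j4 : E N - E (-N) ≤ G^2 := by
    have := (hE0 N).2; have := (hE0 (-N)).1; linarith
  have hGn : 0 ≤ G := by linarith
  calc _ ≤ ε * (∫ x, (1 - (n x)^2)^2) + 1 / (2 * ε) * (1 + ((1+M)^2/m)^2) * ε^2
      + 1 / (2 * ε * s * m) * (G^2 + 2 * G * ∫ x, |deriv g x|) := by gcongr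
    _ = _ := by field_simp

/-- the high-frequency limit -/
lemma high_lim (h : NHyp n m M) {U V : ℝ → ℝ → ℂ}
    (hJ : ∀ s : ℝ, 0 < s → Jost (fun x => 1 - (n x)^2) s (U s) (V s)) :
    Tendsto (fun s : ℝ => JJ (fun x => 1 - (n x)^2) (U s) (V s)) atTop (𝓝 ((2 * ∫ x, (1 - n x) : ℝ) : ℂ)) := by
  rw [Metric.tendsto_atTop]
  intro η hη
  set A := (∫ x, (1 - (n x)^2)^2) + (1 + ((1+M)^2/m)^2) / 2 with hA
  have hA0 : 0 ≤ A := by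
    have : 0 ≤ ∫ x, (1 - (n x)^2)^2 := integral_nonneg fun _ => sq_nonneg _
    positivity
  have hε : 0 < η / (2 * (A + 1)) := by positivity
  obtain ⟨C, hC⟩ := high h hε
  rw [← hA] at hC
  refine ⟨max 1 (2 * |C| / η + 1) , fun s hs => ?_⟩
  have hs1 : 1 ≤ s := (le_max_left _ _).trans hs
  have hs2 : 2 * |C| / η + 1 ≤ s := (le_max_right _ _).trans hs
  have hs0 : 0 < s := by linarith
  rw [dist_eq_norm]
  refine (hC s hs0 _ _ (hJ s hs0)).trans_lt ?_
  have h1 : η / (2 * (A + 1)) * A ≤ η / 2 := by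
    rw [div_mul_eq_mul_div, div_le_div_iff₀ (by positivity) (by positivity)]
    nlinarith
  have h2 : C / s < η / 2 := by
    rw [div_lt_iff₀ hs0]
    have : 2 * |C| / η < s := by linarith
    rw [div_lt_iff₀ hη] at this
    have := le_abs_self C
    linarith
  linarith

end Refl

namespace Refl

variable {q : ℝ → ℝ} {s : ℂ} {u v : ℝ → ℂ}

lemma low_lim (hq : QHyp q) {U V : ℝ → ℝ → ℂ} (hJ : ∀ t : ℝ, t ≠ 0 → Jost q (t * Complex.I) (U t) (V t)) :
    Tendsto (fun t : ℝ => ∫ y, (q y : ℂ) * (Complex.exp (-(t * Complex.I) * y) * U t y)) (𝓝[≠] 0)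
      (𝓝 ((∫ y, q y : ℝ) : ℂ)) := by
  have e : ((∫ x, q x : ℝ) : ℂ) = ∫ x, (q x : ℂ) * 1 := by simp only [mul_one]; exact integral_ofReal.symm
  rw [e]
  set I1 := ∫ x, |q x| with hI1
  have hI0 : 0 ≤ I1 := integral_nonneg fun _ => abs_nonneg _
  have hne : ∀ᶠ t : ℝ in 𝓝[≠] 0, t ≠ 0 := eventually_mem_nhdsWithin
  have hsm : ∀ᶠ t : ℝ in 𝓝[≠] 0, |t| ≤ 1 := by
    refine nhdsWithin_le_nhds ?_
    filter_upwards [Metric.ball_mem_nhds (0:ℝ) one_pos] with t ht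
    simpa using (mem_ball_zero_iff.1 ht).le
  have hns : ∀ t : ℝ, ‖(t : ℂ) * Complex.I‖ = |t| := fun t => by simp
  have hns0 : Tendsto (fun t : ℝ => ‖(t : ℂ) * Complex.I‖) (𝓝[≠] 0) (𝓝 0) := by
    simp only [hns]
    have : Tendsto (fun t : ℝ => |t|) (𝓝 0) (𝓝 |0|) := continuous_abs.tendsto 0
    rw [abs_zero] at this
    exact this.mono_left nhdsWithin_le_nhds
  have key : ∀ (t : ℝ) (y : ℝ), ‖Complex.exp (-(t * Complex.I) * y)‖ = ‖Complex.exp ((t * Complex.I) * y)‖ := by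
    intro t y; rw [norm_exp_s, norm_exp_s]; simp
  refine tendsto_integral_filter_of_dominated_convergence (fun y => |q y| * (2 * Real.exp I1)) ?_ ?_ (hq.int.abs.mul_const _) ?_
  · filter_upwards [hne] with t ht
    refine hq.int.ofReal.1.mul ?_
    exact ((lip_expmul _).continuous.mul (hJ t ht).sys.lu.continuous).aestronglyMeasurable
  · filter_upwards [hne, hsm] with t ht ht1
    refine Eventually.of_forall fun y => ?_
    rw [norm_mul, Complex.norm_real, Real.norm_eq_abs]
    gcongr
    have := u_le hq (hJ t ht) y
    rw [norm_mul, key, ← norm_mul]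
    refine this.trans ?_
    rw [hns]
    gcongr
    nlinarith
  · refine Eventually.of_forall fun y => ?_
    refine Tendsto.const_mul _ ?_
    -- al → 2
    have h1 : Tendsto (fun t : ℝ => al (t * Complex.I) (U t) (V t) y) (𝓝[≠] 0) (𝓝 2) := by
      have h2 : Tendsto (fun t : ℝ => ∫ x in Set.Ioi y, (t * Complex.I) / 2 * ((q x : ℂ) * (1 + rr (U t) (V t) x))) (𝓝[≠] 0) (𝓝 0) := by
        refine squeeze_zero_norm' ?_ (by have := hns0.mul_const I1; rwa [zero_mul] at this)
        filter_upwards [hne] with t ht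
        exact tail_le hq (hJ t ht) y
      have h3 : Tendsto (fun t : ℝ => 2 * Complex.exp (-∫ x in Set.Ioi y, (t * Complex.I) / 2 * ((q x : ℂ) * (1 + rr (U t) (V t) x)))) (𝓝[≠] 0) (𝓝 (2 * Complex.exp (-0))) :=
        ((Complex.continuous_exp.tendsto _).comp h2.neg).const_mul 2
      rw [neg_zero, Complex.exp_zero, mul_one] at h3
      refine h3.congr' ?_
      filter_upwards [hne] with t ht
      rw [al_formula hq (hJ t ht)]
    have h4 : Tendsto (fun t : ℝ => rr (U t) (V t) y) (𝓝[≠] 0) (𝓝 0) := by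
      have h5 : Tendsto (fun t : ℝ => ‖(t : ℂ) * Complex.I‖ * I1 * Real.exp (2 * (‖(t : ℂ) * Complex.I‖ * I1))) (𝓝[≠] 0) (𝓝 (0 * I1 * Real.exp (2 * (0 * I1)))) :=
        (hns0.mul_const I1).mul ((Real.continuous_exp.tendsto _).comp ((hns0.mul_const I1).const_mul 2))
      rw [zero_mul, zero_mul] at h5
      refine squeeze_zero_norm' ?_ h5
      filter_upwards [hne] with t ht
      exact rr_small hq (hJ t ht) y
    have h6 : Tendsto (fun t : ℝ => Complex.exp (-(2 * (t * Complex.I)) * y)) (𝓝[≠] 0) (𝓝 1) := by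
      have : Continuous (fun t : ℝ => Complex.exp (-(2 * (t * Complex.I)) * y)) := by fun_prop
      have := this.tendsto 0
      simp only [Complex.ofReal_zero, zero_mul, mul_zero, neg_zero, Complex.exp_zero] at this
      exact this.mono_left nhdsWithin_le_nhds
    have h7 := h6.mul (h1.mul ((h4.const_add 1).div_const 2))
    have : (1:ℂ) * (2 * ((1 + 0) / 2)) = 1 := by norm_num
    rw [this] at h7
    refine h7.congr' ?_
    filter_upwards [hne] with t ht
    have ha := a_ne hq (hJ t ht) y
    rw [exp_split (t * Complex.I) y, al, rr]
    field_simp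
    ring

lemma scat (hq : QHyp q) (h : Jost q s u v) (hz : s.re = 0) {u₂ v₂ : ℝ → ℂ}
    (hb : Tendsto (be s u₂ v₂) atBot (𝓝 2))
    (ha : Tendsto (fun x : ℝ => Complex.exp (-s * x) * (u₂ x + v₂ x)) atBot (𝓝 0)) {α β : ℂ}
    (hu : ∀ x, u x = α * u₂ x + β * (starRingEnd ℂ) (u₂ x))
    (hv : ∀ x, v x = α * v₂ x - β * (starRingEnd ℂ) (v₂ x)) :
    Complex.exp (-(s / 2 * JJ q u v)) = β ∧
    (∫ x, s * q x * (Complex.exp (-s * x) * u x)) = 2 * α := by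
  have hcs : (starRingEnd ℂ) s = -s := by
    apply Complex.ext <;> simp [hz]
  have hexp : ∀ x : ℝ, (starRingEnd ℂ) (Complex.exp (-s * x)) = Complex.exp (s * x) := by
    intro x
    rw [← Complex.exp_conj]; congr 1; simp [hcs]
  have hexp' : ∀ x : ℝ, (starRingEnd ℂ) (Complex.exp (s * x)) = Complex.exp (-s * x) := by
    intro x
    rw [← Complex.exp_conj]; congr 1; simp [hcs]
  have hn : ∀ x : ℝ, ‖Complex.exp (s * x)‖ = ‖Complex.exp (-s * x)‖ := by
    intro x; rw [← hexp, RCLike.norm_conj]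
  have ha' : Tendsto (fun x : ℝ => Complex.exp (s * x) * (u₂ x + v₂ x)) atBot (𝓝 0) := by
    rw [tendsto_zero_iff_norm_tendsto_zero] at ha ⊢
    refine ha.congr fun x => ?_
    rw [norm_mul, norm_mul, hn]
  have cc : ∀ {f : ℝ → ℂ} {z : ℂ}, Tendsto f atBot (𝓝 z) → Tendsto (fun x => (starRingEnd ℂ) (f x)) atBot (𝓝 ((starRingEnd ℂ) z)) :=
    fun hf => (Complex.continuous_conj.tendsto _).comp hf
  have t1 : Tendsto (al s u v) atBot (𝓝 (α * 0 + β * (starRingEnd ℂ) 2)) := by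
    refine ((ha'.const_mul α).add ((cc hb).const_mul β)).congr fun x => ?_
    rw [be, map_mul, map_sub, hexp, al, hu, hv]; ring
  have t2 : Tendsto (be s u v) atBot (𝓝 (α * 2 + β * (starRingEnd ℂ) 0)) := by
    refine ((hb.const_mul α).add ((cc ha').const_mul β)).congr fun x => ?_
    rw [be, map_mul, map_add, hexp', be, hu, hv]; ring
  have r1 := tendsto_nhds_unique (al_bot hq h) t1
  have r2 := tendsto_nhds_unique (be_bot hq h hz) t2
  simp only [map_ofNat, map_zero, mul_zero, zero_add, add_zero] at r1 r2
  refine ⟨?_, by rw [r2]; ring⟩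
  have : (2:ℂ) ≠ 0 := two_ne_zero
  apply mul_left_cancel₀ this
  rw [r1]; ring

lemma ae_neg {p : ℝ → Prop} (h : ∀ᵐ x, p x) : ∀ᵐ x : ℝ, p (-x) :=
  (Measure.measurePreserving_neg (volume : Measure ℝ)).quasiMeasurePreserving.ae h

lemma QHyp.neg (hq : QHyp q) : QHyp (fun x => q (-x)) := by
  obtain ⟨M, hM⟩ := hq.bd
  exact ⟨hq.int.comp_neg, ⟨M, ae_neg hM⟩, ae_neg hq.le1⟩

lemma lip_neg {f : ℝ → ℂ} (hf : LocallyLipschitz f) : LocallyLipschitz (fun x => f (-x)) := by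
  have : ContDiff ℝ 1 (fun x : ℝ => -x) := by fun_prop
  exact hf.comp this.locallyLipschitz

lemma lip_neg' {f : ℝ → ℂ} (hf : LocallyLipschitz f) : LocallyLipschitz (fun x => - f x) := by
  have : ContDiff ℝ 1 (fun x : ℂ => -x) := by fun_prop
  exact this.locallyLipschitz.comp hf

lemma minus_asymp (hq : QHyp q) (h : Sys q s u v) (hs : 0 ≤ s.re) (hs0 : s ≠ 0)
    (hl : Tendsto (fun x : ℝ => Complex.exp (-s * x) * u x) atBot (𝓝 1)) :
    Tendsto (be s u v) atBot (𝓝 2) ∧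
    Tendsto (fun x : ℝ => Complex.exp (-s * x) * (u x + v x)) atBot (𝓝 0) := by
  have hS : Sys (fun x => q (-x)) s (fun x => u (-x)) (fun x => - v (-x)) := by
    refine ⟨lip_neg h.lu, lip_neg' (lip_neg h.lv), ?_, ?_⟩
    · filter_upwards [ae_neg h.du] with x hx
      have := hx.scomp x (hasDerivAt_neg x)
      refine this.congr_deriv ?_
      simp
    · filter_upwards [ae_neg h.dv] with x hx
      have := (hx.scomp x (hasDerivAt_neg x)).neg
      refine this.congr_deriv ?_
      simp
  obtain ⟨-, h2, h3⟩ := jost_asymp hq.neg hS hs hs0 (by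
    refine (hl.comp tendsto_neg_atTop_atBot).congr fun x => ?_
    simp)
  constructor
  · refine (h3.comp tendsto_neg_atBot_atTop).congr fun x => ?_
    simp only [Function.comp, al, be]; push_cast; simp only [neg_neg]; ring_nf
  · refine (h2.comp tendsto_neg_atBot_atTop).congr fun x => ?_
    simp only [Function.comp]; push_cast; simp only [neg_neg]; ring_nf

end Refl

namespace Refl

lemma nhyp_of {c : ℝ → ℝ} (hm : Measurable c) (h1 : HypH1 c) (h2 : HypH2 c) :
    ∃ m M, NHyp (fun x => 1 / c x) m M := by
  obtain ⟨c₀, hc0, cM, hcM, hb⟩ := h1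
  obtain ⟨C, hC, δ, hδ, hd⟩ := h2
  refine ⟨min 1 (1 / cM), 1 / c₀, ⟨by fun_prop, by positivity, min_le_left _ _, ?_, ?_, ?_⟩⟩
  · filter_upwards [hb] with x hx
    refine (min_le_right _ _).trans ?_
    have : 0 < c x := hc0.trans hx.1
    exact one_div_le_one_div_of_le this hx.2
  · filter_upwards [hb] with x hx
    exact one_div_le_one_div_of_le hc0 hx.1.le
  · have hi : Integrable (fun x : ℝ => (1 + x^2) ^ (-(1 + δ) / 2)) := by
      have := integrable_rpow_neg_one_add_norm_sq (E := ℝ) (μ := volume) (r := 1 + δ) (by simp [hδ])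
      simpa using this
    refine Integrable.mono' (hi.const_mul (1 / c₀ * C)) (Measurable.aestronglyMeasurable (by fun_prop)) ?_
    filter_upwards [hb, hd] with x hx hy
    have h0 : 0 < c x := hc0.trans hx.1
    have e : 1 - 1 / c x = 1 / c x * (c x - 1) := by field_simp
    rw [e, norm_mul, Real.norm_of_nonneg (by positivity), Real.norm_eq_abs, mul_assoc]
    gcongr
    exact hx.1.le

lemma sys_of {c : ℝ → ℝ} (hm : Measurable c) {m M : ℝ} (hn : NHyp (fun x => 1 / c x) m M) {s : ℂ} (hs0 : s ≠ 0)
    {u : ℝ → ℂ} (h : SolvesHelmholtz c (Complex.I * s) u) :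
    Sys (fun x => 1 - (1 / c x)^2) s u (fun x => -(deriv u x) / s) := by
  obtain ⟨hc, hode⟩ := h
  have hcu : Continuous u := hc.continuous
  set g : ℝ → ℂ := fun x => -((Complex.I * s) ^ 2 / ((c x : ℂ) ^ 2)) * u x with hg
  have hgm : AEStronglyMeasurable g volume := by
    have : Measurable g := by fun_prop
    exact this.aestronglyMeasurable
  have hge : ∀ x, g x = s^2 * ((1 / c x : ℝ):ℂ)^2 * u x := by
    intro x
    simp only [hg]; push_cast
    rw [mul_pow, Complex.I_sq]; ring
  obtain ⟨p1, p2⟩ := prim_lip hgm (by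
    intro A B
    obtain ⟨K, hK⟩ := isCompact_Icc.exists_bound_of_continuousOn (s := Set.Icc A B) hcu.continuousOn
    refine ⟨‖s‖^2 * M^2 * K, ?_⟩
    filter_upwards [hn.lo, hn.hi] with x h1 h2 hx
    have h0 : 0 ≤ 1 / c x := hn.m0.le.trans h1
    rw [hge, norm_mul, norm_mul, norm_pow, norm_pow, Complex.norm_real, Real.norm_of_nonneg h0]
    have := hK x hx
    gcongr) 0
  have hv : (fun x => -(deriv u x) / s) = fun x => (-1 / s) * (deriv u 0 + ∫ t in (0:ℝ)..x, g t) := by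
    funext x
    rw [hode 0 x]; ring
  refine ⟨hc.locallyLipschitz, ?_, ?_, ?_⟩
  · rw [hv]
    exact lip_mul (LipschitzWith.const _).locallyLipschitz (lip_add (LipschitzWith.const _).locallyLipschitz p1)
  · refine Eventually.of_forall fun x => ?_
    have : HasDerivAt u (deriv u x) x := (hc.differentiable (by simp) x).hasDerivAt
    refine this.congr_deriv ?_
    field_simp
  · rw [hv]
    filter_upwards [p2] with x hx
    refine ((hx.const_add (deriv u 0)).const_mul (-1 / s)).congr_deriv ?_
    rw [hge]; push_cast; field_simp; ring

end Refl

namespace Refl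

structure Pack (J : ℂ → ℂ) (R : ℝ → ℂ) (Q q : ℝ) : Prop where
  bd : ∃ A, ∀ s : ℂ, 0 ≤ s.re → s ≠ 0 → ‖J s‖ ≤ A
  dcl : DiffContOnCl ℂ (fun s => Complex.exp (-(s / 2 * J s))) {s : ℂ | 0 < s.re}
  top : Tendsto (fun x : ℝ => J x) atTop (𝓝 ((2 * Q : ℝ) : ℂ))
  zero : Tendsto (fun x : ℝ => J x) (𝓝[>] 0) (𝓝 (q : ℂ))
  flux : ∀ t : ℝ, t ≠ 0 → ‖Complex.exp (-((t * Complex.I) / 2 * J (t * Complex.I)))‖^2 * (1 - ‖R (-t)‖^2) = 1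
  low : Tendsto (fun t : ℝ => R (-t) / (t * Complex.I)) (𝓝[≠] 0) (𝓝 ((q : ℂ) / 2))

lemma pack {c : ℝ → ℝ} (hm : Measurable c) (h1 : HypH1 c) (h2 : HypH2 c) {U₁ U₂ : ℂ → ℝ → ℂ}
    (hU₁ : ∀ k : ℂ, 0 ≤ k.im → IsJostPlus c k (U₁ k))
    (hU₂ : ∀ k : ℂ, 0 ≤ k.im → IsJostMinus c k (U₂ k))
    (hreg₁ : JostFamilyRegular U₁) (hreg₂ : JostFamilyRegular U₂) {T R : ℝ → ℂ}
    (hT : ∀ k : ℝ, k ≠ 0 → T k ≠ 0)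
    (hrel : ∀ k : ℝ, k ≠ 0 → ∀ x : ℝ,
      U₁ (k : ℂ) x = (R k / T k) * U₂ (k : ℂ) x +
        (1 / T k) * (starRingEnd ℂ) (U₂ (k : ℂ) x)) :
    ∃ J : ℂ → ℂ, Pack J R (∫ x, Qfun c x) (∫ x, qfun c x) := by
  obtain ⟨m, M, hn⟩ := nhyp_of hm h1 h2
  have hq := hn.qhyp
  set q : ℝ → ℝ := fun x => 1 - (1 / c x)^2 with hqd
  have hqe : qfun c = q := by funext x; simp [qfun, hqd]
  rw [hqe]
  set I1 := ∫ x, |q x| with hI1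
  set u : ℂ → ℝ → ℂ := fun s => U₁ (Complex.I * s) with hu
  set v : ℂ → ℝ → ℂ := fun s x => -(deriv (U₁ (Complex.I * s)) x) / s with hv
  set u₂ : ℂ → ℝ → ℂ := fun s => U₂ (Complex.I * s) with hu₂
  set v₂ : ℂ → ℝ → ℂ := fun s x => -(deriv (U₂ (Complex.I * s)) x) / s with hv₂
  have him : ∀ s : ℂ, (Complex.I * s).im = s.re := fun s => by simp
  have hI : Complex.I * Complex.I = -1 := Complex.I_mul_I
  have hJ : ∀ s : ℂ, 0 ≤ s.re → s ≠ 0 → Jost q s (u s) (v s) := by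
    intro s hs hs0
    obtain ⟨a1, a2⟩ := hU₁ (Complex.I * s) (by rw [him]; exact hs)
    refine ⟨sys_of hm hn hs0 a1, hs, hs0, ?_⟩
    refine a2.congr fun x => ?_
    congr 2
    linear_combination (-s * x) * hI
  have hS : ∀ s : ℂ, 0 ≤ s.re → s ≠ 0 → Sys q s (u₂ s) (v₂ s) ∧ Tendsto (be s (u₂ s) (v₂ s)) atBot (𝓝 2) ∧
      Tendsto (fun x : ℝ => Complex.exp (-s * x) * (u₂ s x + v₂ s x)) atBot (𝓝 0) := by
    intro s hs hs0
    obtain ⟨a1, a2⟩ := hU₂ (Complex.I * s) (by rw [him]; exact hs)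
    have hsys := sys_of hm hn hs0 a1
    refine ⟨hsys, minus_asymp hq hsys hs hs0 ?_⟩
    refine a2.congr fun x => ?_
    congr 2
    linear_combination (s * x) * hI
  have hW : ∀ s : ℂ, 0 ≤ s.re → s ≠ 0 → Complex.exp (-(s / 2 * JJ q (u s) (v s))) =
      (deriv (U₂ (Complex.I * s)) 0 * U₁ (Complex.I * s) 0 - U₂ (Complex.I * s) 0 * deriv (U₁ (Complex.I * s)) 0) / (2 * s) := by
    intro s hs hs0
    obtain ⟨b1, b2, b3⟩ := hS s hs hs0
    have := wronsk hq (hJ s hs hs0) b1 b2 b3 0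
    have e : Complex.exp (-(s / 2 * JJ q (u s) (v s))) = (u₂ s 0 * v s 0 - v₂ s 0 * u s 0) / 2 := by rw [this]; ring
    rw [e]
    simp only [hu, hv, hu₂, hv₂]
    field_simp
    ring
  have hsmall : ∀ s : ℂ, 0 ≤ s.re → s ≠ 0 → ‖JJ q (u s) (v s)‖ ≤ 2 * I1 := fun s hs hs0 => JJ_le hq (hJ s hs hs0)
  -- scattering relation on the imaginary axis
  have hsc : ∀ t : ℝ, t ≠ 0 → Complex.exp (-((t * Complex.I) / 2 * JJ q (u (t * Complex.I)) (v (t * Complex.I)))) = 1 / T (-t) ∧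
      (∫ x, (t * Complex.I) * q x * (Complex.exp (-(t * Complex.I) * x) * u (t * Complex.I) x)) = 2 * (R (-t) / T (-t)) := by
    intro t ht
    have hs0 : (t : ℂ) * Complex.I ≠ 0 := mul_ne_zero (by exact_mod_cast ht) Complex.I_ne_zero
    have hre : ((t : ℂ) * Complex.I).re = 0 := by simp
    have hk : Complex.I * ((t : ℂ) * Complex.I) = ((-t : ℝ) : ℂ) := by
      push_cast; linear_combination (t : ℂ) * hI
    obtain ⟨b1, b2, b3⟩ := hS _ hre.ge hs0
    have hd2 : Differentiable ℝ (U₂ ((-t : ℝ) : ℂ)) := (hU₂ ((-t : ℝ) : ℂ) (by simp)).1.1.differentiable (by simp)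
    refine scat hq (hJ _ hre.ge hs0) hre b2 b3 ?_ ?_
    · intro x
      simp only [hu, hu₂, hk]
      exact hrel (-t) (by simpa using ht) x
    · intro x
      simp only [hv, hv₂, hk]
      have e1 : U₁ ((-t : ℝ) : ℂ) = fun x => (R (-t) / T (-t)) * U₂ ((-t : ℝ) : ℂ) x +
        (1 / T (-t)) * (starRingEnd ℂ) (U₂ ((-t : ℝ) : ℂ) x) := funext (hrel (-t) (by simpa using ht))
      have e2 : HasDerivAt (U₁ ((-t : ℝ) : ℂ)) ((R (-t) / T (-t)) * deriv (U₂ ((-t : ℝ) : ℂ)) x +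
        (1 / T (-t)) * (starRingEnd ℂ) (deriv (U₂ ((-t : ℝ) : ℂ)) x)) x := by
        rw [e1]
        have h0 := (hd2 x).hasDerivAt
        have h3 : HasDerivAt (fun x => (starRingEnd ℂ) (U₂ ((-t : ℝ) : ℂ) x)) ((starRingEnd ℂ) (deriv (U₂ ((-t : ℝ) : ℂ)) x)) x :=
          (Complex.conjCLE.toContinuousLinearMap.hasFDerivAt).comp_hasDerivAt x h0
        exact (h0.const_mul _).add (h3.const_mul _)
      rw [e2.deriv, map_div₀, map_neg, map_mul, Complex.conj_I, Complex.conj_ofReal]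
      field_simp
      ring
  have hGlow : Tendsto (fun s : ℂ => Complex.exp (-(s / 2 * JJ q (u s) (v s)))) (𝓝[{s : ℂ | 0 ≤ s.re}] 0) (𝓝 1) := by
    have a1 : Tendsto (fun s : ℂ => s / 2 * JJ q (u s) (v s)) (𝓝[{s : ℂ | 0 ≤ s.re}] 0) (𝓝 0) := by
      have a2 : Tendsto (fun s : ℂ => ‖s‖ * I1) (𝓝[{s : ℂ | 0 ≤ s.re}] 0) (𝓝 0) := by
        have : Continuous (fun s : ℂ => ‖s‖ * I1) := by fun_prop
        have := this.tendsto 0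
        simp only [norm_zero, zero_mul] at this
        exact this.mono_left nhdsWithin_le_nhds
      refine squeeze_zero_norm' ?_ a2
      filter_upwards [self_mem_nhdsWithin] with s hs
      by_cases hs0 : s = 0
      · simp [hs0]
      · rw [norm_mul, norm_div]
        have := hsmall s hs hs0
        calc _ ≤ ‖s‖ / ‖(2:ℂ)‖ * (2 * I1) := by gcongr
          _ = _ := by simp; ring
    have := (Complex.continuous_exp.tendsto _).comp a1.neg
    rw [neg_zero, Complex.exp_zero] at this
    exact this
  refine ⟨fun s => JJ q (u s) (v s), ⟨2 * I1, hsmall⟩, ⟨?_, ?_⟩, ?_, ?_, ?_, ?_⟩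
  · -- differentiability
    have hmap : Set.MapsTo (fun s : ℂ => Complex.I * s) {s : ℂ | 0 < s.re} {k : ℂ | 0 < k.im} := by
      intro s hs; simpa using hs
    have hd : DifferentiableOn ℂ (fun s : ℂ => Complex.I * s) {s : ℂ | 0 < s.re} := by fun_prop
    have d1 := (hreg₁ 0).1.comp hd hmap
    have d2 := (hreg₁ 0).2.2.1.comp hd hmap
    have d3 := (hreg₂ 0).1.comp hd hmap
    have d4 := (hreg₂ 0).2.2.1.comp hd hmap
    have hne : ∀ s ∈ {s : ℂ | 0 < s.re}, (2 * s) ≠ 0 := by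
      intro s hs h0
      have : s = 0 := by simpa using h0
      rw [this] at hs; simp at hs
    have hd' : DifferentiableOn ℂ (fun s : ℂ => 2 * s) {s : ℂ | 0 < s.re} := by fun_prop
    refine (((d4.mul d1).sub (d3.mul d2)).div hd' hne).congr ?_
    intro s hs
    exact hW s (le_of_lt hs) (by intro h0; rw [h0] at hs; simp at hs)
  · have hcl : closure {s : ℂ | 0 < s.re} = {s : ℂ | 0 ≤ s.re} := Complex.closure_setOfPred_lt_re 0
    rw [hcl]
    intro s hs
    by_cases hs0 : s = 0
    · rw [hs0, ContinuousWithinAt]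
      simpa using hGlow
    · have hmap : Set.MapsTo (fun s : ℂ => Complex.I * s) {s : ℂ | 0 ≤ s.re} {k : ℂ | 0 ≤ k.im} := by
        intro s hs; simpa using hs
      have hd : ContinuousOn (fun s : ℂ => Complex.I * s) {s : ℂ | 0 ≤ s.re} := by fun_prop
      have d1 := ((hreg₁ 0).2.1.comp hd hmap) s hs
      have d2 := ((hreg₁ 0).2.2.2.comp hd hmap) s hs
      have d3 := ((hreg₂ 0).2.1.comp hd hmap) s hs
      have d4 := ((hreg₂ 0).2.2.2.comp hd hmap) s hs
      have hd' : ContinuousWithinAt (fun s : ℂ => 2 * s) {s : ℂ | 0 ≤ s.re} s := by fun_prop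
      refine (((d4.mul d1).sub (d3.mul d2)).div hd' (by simpa using hs0)).congr_of_eventuallyEq ?_ ?_
      · have : ∀ᶠ z in 𝓝[{s : ℂ | 0 ≤ s.re}] s, z ≠ 0 := nhdsWithin_le_nhds (isOpen_ne.mem_nhds hs0)
        filter_upwards [this, self_mem_nhdsWithin] with z hz hz'
        exact hW z hz' hz
      · exact hW s hs hs0
  · exact high_lim hn (U := fun x => u x) (V := fun x => v x) (fun s hs => hJ s (by simpa using hs.le) (by exact_mod_cast hs.ne'))
  · rw [tendsto_iff_norm_sub_tendsto_zero]
    have a2 : Tendsto (fun x : ℝ => I1 * (|x| * I1 * Real.exp (2 * (|x| * I1)))) (𝓝[>] 0) (𝓝 0) := by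
      have : Continuous (fun x : ℝ => I1 * (|x| * I1 * Real.exp (2 * (|x| * I1)))) := by fun_prop
      have := this.tendsto 0
      simp only [abs_zero, zero_mul, mul_zero] at this
      exact this.mono_left nhdsWithin_le_nhds
    refine squeeze_zero' (Eventually.of_forall fun _ => norm_nonneg _) ?_ a2
    filter_upwards [self_mem_nhdsWithin] with x hx
    have hx' : 0 < x := hx
    have := JJ_low hq (hJ x (by simpa using hx'.le) (by exact_mod_cast hx'.ne'))
    rw [Complex.norm_real, Real.norm_eq_abs] at this
    exact this
  · intro t ht
    have hs0 : (t : ℂ) * Complex.I ≠ 0 := mul_ne_zero (by exact_mod_cast ht) Complex.I_ne_zero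
    have hre : ((t : ℂ) * Complex.I).re = 0 := by simp
    obtain ⟨r1, r2⟩ := hsc t ht
    have := flux_imag hq (hJ _ hre.ge hs0) hre
    rw [r2] at this
    rw [r1] at this ⊢
    rw [mul_div_cancel_left₀ _ (two_ne_zero), norm_div, norm_div, norm_one] at this
    rw [norm_div, norm_one]
    linear_combination this
  · have b1 := low_lim hq (U := fun t => u (t * Complex.I)) (V := fun t => v (t * Complex.I)) (by
      intro t ht
      have hs0 : (t : ℂ) * Complex.I ≠ 0 := mul_ne_zero (by exact_mod_cast ht) Complex.I_ne_zero
      have hre : ((t : ℂ) * Complex.I).re = 0 := by simp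
      exact hJ _ hre.ge hs0)
    have b2 : Tendsto (fun t : ℝ => Complex.exp (-((t * Complex.I) / 2 * JJ q (u (t * Complex.I)) (v (t * Complex.I))))) (𝓝[≠] 0) (𝓝 1) := by
      refine hGlow.comp (f := fun t : ℝ => (t : ℂ) * Complex.I) ?_
      refine tendsto_nhdsWithin_iff.2 ⟨?_, Eventually.of_forall fun t => by simp⟩
      have : Continuous (fun t : ℝ => (t : ℂ) * Complex.I) := by fun_prop
      have := this.tendsto 0
      simp only [Complex.ofReal_zero, zero_mul] at this
      exact this.mono_left nhdsWithin_le_nhds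
    have b3 := (b1.div_const 2).div b2 one_ne_zero
    rw [div_one] at b3
    refine b3.congr' ?_
    filter_upwards [eventually_mem_nhdsWithin] with t ht
    have ht : t ≠ 0 := ht
    have hs0 : (t : ℂ) * Complex.I ≠ 0 := mul_ne_zero (by exact_mod_cast ht) Complex.I_ne_zero
    obtain ⟨r1, r2⟩ := hsc t ht
    have hT0 := hT (-t) (by simpa using ht)
    have e3 : (∫ x, (t * Complex.I) * q x * (Complex.exp (-(t * Complex.I) * x) * u (t * Complex.I) x)) =
      (t * Complex.I) * ∫ x, q x * (Complex.exp (-(t * Complex.I) * x) * u (t * Complex.I) x) := by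
      rw [← integral_const_mul]; congr 1; funext x; ring
    rw [e3] at r2
    simp only [Pi.div_apply]
    rw [r1]
    have e4 : (∫ x, q x * (Complex.exp (-(t * Complex.I) * x) * u (t * Complex.I) x)) = 2 * (R (-t) / T (-t)) / (t * Complex.I) := by
      rw [← r2]; exact (mul_div_cancel_left₀ _ hs0).symm
    rw [e4]
    field_simp

end Refl

namespace Refl

lemma Pack.one {J₁ J₂ : ℂ → ℂ} {R₁ R₂ : ℝ → ℂ} {Q₁ Q₂ q₁ q₂ : ℝ} (h₁ : Pack J₁ R₁ Q₁ q₁) (h₂ : Pack J₂ R₂ Q₂ q₂)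
    (hR : ∀ k : ℝ, k ≠ 0 → R₁ k = R₂ k) : Q₂ ≤ Q₁ := by
  have hqq : q₁ = q₂ := by
    have a := h₁.low
    have b : Tendsto (fun t : ℝ => R₁ (-t) / (t * Complex.I)) (𝓝[≠] 0) (𝓝 ((q₂ : ℂ) / 2)) := by
      refine h₂.low.congr' ?_
      filter_upwards [eventually_mem_nhdsWithin] with t ht
      rw [hR (-t) (by simpa using ht)]
    have := tendsto_nhds_unique a b
    have h2 : (q₁ : ℂ) = q₂ := by linear_combination 2 * this
    exact_mod_cast h2
  refine le_of_forall_pos_le_add fun η hη => ?_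
  set τ : ℝ := Q₁ - Q₂ + η with hτ
  suffices h0 : 0 ≤ τ by linarith
  set F : ℂ → ℂ := fun s => Complex.exp (-(τ * s)) * ((Complex.exp (-(s / 2 * J₁ s)))⁻¹ * Complex.exp (-(s / 2 * J₂ s))) with hF
  have hFn : ∀ s, ‖F s‖ = Real.exp (-(τ * s.re) + ((s / 2 * J₁ s).re - (s / 2 * J₂ s).re)) := by
    intro s
    simp only [hF]
    rw [norm_mul, norm_mul, norm_inv, Complex.norm_exp, Complex.norm_exp, Complex.norm_exp, ← Real.exp_neg, ← Real.exp_add, ← Real.exp_add]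
    congr 1
    simp only [Complex.neg_re, Complex.re_ofReal_mul]; ring
  have hFx : ∀ x : ℝ, ‖F x‖ = Real.exp (x * (((J₁ x).re - (J₂ x).re) / 2 - τ)) := by
    intro x
    rw [hFn]
    congr 1
    have : ∀ z : ℂ, ((x : ℂ) / 2 * z).re = x / 2 * z.re := by
      intro z
      have : (x : ℂ) / 2 * z = ((x / 2 : ℝ) : ℂ) * z := by push_cast; ring
      rw [this, Complex.re_ofReal_mul]
    rw [this, this, Complex.ofReal_re]; ring
  obtain ⟨A₁, hA₁⟩ := h₁.bd
  obtain ⟨A₂, hA₂⟩ := h₂.bd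
  have hd : DiffContOnCl ℂ F {z | 0 < z.re} := by
    have e1 : DiffContOnCl ℂ (fun s : ℂ => Complex.exp (-(τ * s))) {z | 0 < z.re} := by
      have : Differentiable ℂ (fun s : ℂ => Complex.exp (-(τ * s))) := by fun_prop
      exact this.diffContOnCl
    exact e1.smul ((h₁.dcl.inv (fun x _ => Complex.exp_ne_zero _)).smul h₂.dcl)
  have hpl : ∀ x : ℝ, 0 < x → ‖F x‖ ≤ 1 := by
    intro x hx
    refine PhragmenLindelof.right_half_plane_of_bounded_on_real hd ⟨1, by norm_num, |τ| + A₁ + A₂, ?_⟩ ?_ ?_ (by simpa using hx.le)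
    · refine Asymptotics.IsBigO.of_bound 1 ?_
      refine Filter.Eventually.filter_mono inf_le_right ?_
      rw [eventually_principal]
      intro s hs
      have hs' : 0 < s.re := hs
      have hs0 : s ≠ 0 := by rintro rfl; simp at hs'
      rw [one_mul, hFn, Real.norm_of_nonneg (Real.exp_nonneg _), Real.rpow_one]
      refine Real.exp_le_exp.2 ?_
      have b0 : -(τ * s.re) ≤ |τ| * ‖s‖ := by
        refine (neg_le_abs _).trans ?_
        rw [abs_mul]
        gcongr
        exact Complex.abs_re_le_norm s
      have bb : ∀ (z : ℂ) (A : ℝ), ‖z‖ ≤ A → |(s / 2 * z).re| ≤ A * ‖s‖ := by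
        intro z A hz
        refine (Complex.abs_re_le_norm _).trans ?_
        rw [norm_mul, norm_div, Complex.norm_ofNat]
        have : 0 ≤ A := (norm_nonneg _).trans hz
        have h1 : ‖s‖ / 2 * ‖z‖ ≤ ‖s‖ / 2 * A := by gcongr
        nlinarith [norm_nonneg s]
      have b1 := (abs_le.1 (bb _ _ (hA₁ s hs'.le hs0))).2
      have b2 := (abs_le.1 (bb _ _ (hA₂ s hs'.le hs0))).1
      linarith
    · have t1 := (Complex.continuous_re.tendsto _).comp h₁.top
      have t2 := (Complex.continuous_re.tendsto _).comp h₂.top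
      have t3 := ((t1.sub t2).div_const 2).sub_const τ
      have e : (((2 * Q₁ : ℝ) : ℂ).re - ((2 * Q₂ : ℝ) : ℂ).re) / 2 - τ = -η := by
        rw [Complex.ofReal_re, Complex.ofReal_re, hτ]; ring
      rw [e] at t3
      have t4 := t3.eventually (gt_mem_nhds (show -η < 0 by linarith))
      refine isBoundedUnder_of_eventually_le (a := 1) ?_
      filter_upwards [t4, eventually_ge_atTop (0:ℝ)] with y hy hy0
      rw [hFx]
      refine Real.exp_le_one_iff.2 ?_
      simp only [Function.comp] at hy
      exact mul_nonpos_of_nonneg_of_nonpos hy0 hy.le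
    · intro t
      by_cases ht : t = 0
      · simp [hF, ht]
      · have f1 := h₁.flux t ht
        have f2 := h₂.flux t ht
        rw [hR (-t) (by simpa using ht)] at f1
        have hne : 1 - ‖R₂ (-t)‖^2 ≠ 0 := by
          intro h0; rw [h0, mul_zero] at f1; exact zero_ne_one f1
        have f3 := mul_right_cancel₀ hne (f1.trans f2.symm)
        have f4 := (sq_eq_sq₀ (norm_nonneg _) (norm_nonneg _)).1 f3
        simp only [hF]
        rw [norm_mul, norm_mul, norm_inv, f4, inv_mul_cancel₀ (norm_ne_zero_iff.2 (Complex.exp_ne_zero _)), mul_one, Complex.norm_exp]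
        simp
  have hle : ∀ x : ℝ, 0 < x → ((J₁ x).re - (J₂ x).re) / 2 ≤ τ := by
    intro x hx
    have := hpl x hx
    rw [hFx, Real.exp_le_one_iff] at this
    by_contra hcon
    push Not at hcon
    have : 0 < x * (((J₁ x).re - (J₂ x).re) / 2 - τ) := mul_pos hx (by linarith)
    linarith
  have t1 := (Complex.continuous_re.tendsto _).comp h₁.zero
  have t2 := (Complex.continuous_re.tendsto _).comp h₂.zero
  have t3 := (t1.sub t2).div_const 2
  have e : ((q₁ : ℂ).re - (q₂ : ℂ).re) / 2 = 0 := by rw [hqq]; simp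
  rw [e] at t3
  refine le_of_tendsto t3 ?_
  filter_upwards [self_mem_nhdsWithin] with x hx
  exact hle x hx

end Refl

/-- If the reflection coefficients of `c₁` and `c₂` coincide then `∫ Q₁ = ∫ Q₂`. -/
theorem reflection_determines_int_Q
    (c₁ c₂ : ℝ → ℝ) (hm₁ : Measurable c₁) (hm₂ : Measurable c₂)
    (h1₁ : HypH1 c₁) (h2₁ : HypH2 c₁) (h1₂ : HypH1 c₂) (h2₂ : HypH2 c₂)
    (U₁ U₂ V₁ V₂ : ℂ → ℝ → ℂ)
    (hU₁ : ∀ k : ℂ, 0 ≤ k.im → IsJostPlus c₁ k (U₁ k))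
    (hU₂ : ∀ k : ℂ, 0 ≤ k.im → IsJostMinus c₁ k (U₂ k))
    (hV₁ : ∀ k : ℂ, 0 ≤ k.im → IsJostPlus c₂ k (V₁ k))
    (hV₂ : ∀ k : ℂ, 0 ≤ k.im → IsJostMinus c₂ k (V₂ k))
    (hregU₁ : JostFamilyRegular U₁) (hregU₂ : JostFamilyRegular U₂)
    (hregV₁ : JostFamilyRegular V₁) (hregV₂ : JostFamilyRegular V₂)
    (T₁ T₂ R₂₁ R₂₂ : ℝ → ℂ)
    (hT₁ : ∀ k : ℝ, k ≠ 0 → T₁ k ≠ 0) (hT₂ : ∀ k : ℝ, k ≠ 0 → T₂ k ≠ 0)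
    (hrel₁ : ∀ k : ℝ, k ≠ 0 → ∀ x : ℝ,
      U₁ (k : ℂ) x = (R₂₁ k / T₁ k) * U₂ (k : ℂ) x +
        (1 / T₁ k) * (starRingEnd ℂ) (U₂ (k : ℂ) x))
    (hrel₂ : ∀ k : ℝ, k ≠ 0 → ∀ x : ℝ,
      V₁ (k : ℂ) x = (R₂₂ k / T₂ k) * V₂ (k : ℂ) x +
        (1 / T₂ k) * (starRingEnd ℂ) (V₂ (k : ℂ) x))
    (hR : ∀ k : ℝ, k ≠ 0 → R₂₁ k = R₂₂ k) :
    ∫ x : ℝ, Qfun c₁ x = ∫ x : ℝ, Qfun c₂ x := by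

  obtain ⟨J₁, p₁⟩ := Refl.pack hm₁ h1₁ h2₁ hU₁ hU₂ hregU₁ hregU₂ hT₁ hrel₁
  obtain ⟨J₂, p₂⟩ := Refl.pack hm₂ h1₂ h2₂ hV₁ hV₂ hregV₁ hregV₂ hT₂ hrel₂
  exact le_antisymm (p₂.one p₁ fun k hk => (hR k hk).symm) (p₁.one p₂ hR)
end
end

section
/- Let c₁ and c₂ each satisfy [H1] and [H2], and for j = 1, 2 suppose the Jost solutions U_{1,j}, U_{2,j} : ℝ × {Im k ≥ 0} → ℂ at each k depend holomorphically on k in {Im k > 0} and continuously on {Im k ≥ 0} (together with their x-derivatives). For each real k ≠ 0 let T_j(k) ≠ 0 and R₂(k; c_j) be the scattering coefficients of c_j, determined by U_{1,j}(·,k) = (R₂(k;c_j)/T_j(k)) U_{2,j}(·,k) + (1/T_j(k)) conj(U_{2,j}(·,k)). If R₂(k; c₁) = R₂(k; c₂) for all real k ≠ 0, then T₁(k) = T₂(k) for all real k ≠ 0; that is, the reflection coefficient uniquely determines the transmission coefficient. -/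
open MeasureTheory Filter Topology

noncomputable section

theorem rdt_zero_free_exp (g : ℂ → ℂ) (hg : Differentiable ℂ g) (h0 : ∀ z, g z ≠ 0) (C : ℝ)
    (hC : 0 < C) (hb : ∀ z, ‖g z‖ ≤ Real.exp (C * (1 + ‖z‖))) :
    ∃ a b : ℂ, ∀ z, g z = Complex.exp (a + b * z) := by
  have hd : Differentiable ℂ (fun z => deriv g z / g z) := by
    have := hg.deriv
    exact this.div hg h0
  obtain ⟨L, hL0, hL⟩ := hd.isExactOn_univ.with_val_at 0 (Complex.log (g 0))
  have hLd : Differentiable ℂ L := fun z => (hL z (Set.mem_univ _)).differentiableAt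
  have hexp : ∀ z, g z = Complex.exp (L z) := by
    have hder : ∀ z, HasDerivAt (fun z => g z * Complex.exp (-L z)) 0 z := by
      intro z
      have h1 := (hg z).hasDerivAt.mul ((hL z (Set.mem_univ _)).neg.cexp)
      refine h1.congr_deriv ?_
      have := h0 z
      field_simp
      ring
    have hc := is_const_of_deriv_eq_zero (fun z => (hder z).differentiableAt)
      (fun z => (hder z).deriv)
    intro z
    have h2 := hc z 0
    simp only [hL0] at h2
    rw [Complex.exp_neg, Complex.exp_neg, Complex.exp_log (h0 0), mul_inv_cancel₀ (h0 0)] at h2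
    field_simp at h2
    exact h2
  have hre : ∀ z, (L z).re ≤ C * (1 + ‖z‖) := by
    intro z
    have := hb z
    rw [hexp z, Complex.norm_exp] at this
    exact Real.exp_le_exp.1 this
  have hgrow : ∀ z, ‖L z‖ ≤ 2 * (C * (3 + 2 * ‖z‖)) + 3 * ‖L 0‖ := by
    intro z
    have h1 := Complex.borelCaratheodory (f := L) (M := C * (3 + 2 * ‖z‖)) (R := 2 * ‖z‖ + 2) (z := z)
      (by positivity) hLd.differentiableOn
      (by
        intro w hw
        have : ‖w‖ < 2 * ‖z‖ + 2 := by simpa using hw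
        show (L w).re ≤ _
        refine (hre w).trans ?_
        refine mul_le_mul_of_nonneg_left ?_ hC.le
        linarith) (by positivity) (by simp; linarith [norm_nonneg z])
    refine h1.trans ?_
    have hz := norm_nonneg z
    have hp : 0 < 2 * ‖z‖ + 2 - ‖z‖ := by linarith
    gcongr
    · rw [div_le_iff₀ hp]
      have : 0 ≤ 2 * (C * (3 + 2 * ‖z‖)) := by positivity
      nlinarith
    · rw [div_le_iff₀ hp]
      have := norm_nonneg (L 0)
      nlinarith
  have hbd : ∀ z, ‖deriv L z‖ ≤ 2 * (C * 5) + 3 * ‖L 0‖ := by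
    intro z
    have hz := norm_nonneg z
    have h1 := Complex.norm_deriv_le_of_forall_mem_sphere_norm_le (f := L) (c := z)
      (R := 1 + 2 * ‖z‖) (C := 2 * (C * (3 + 2 * (1 + 3 * ‖z‖))) + 3 * ‖L 0‖) (by positivity)
      (hLd.diffContOnCl) (by
        intro w hw
        refine (hgrow w).trans ?_
        have h3 : ‖w - z‖ = 1 + 2 * ‖z‖ := by simpa using hw
        have : ‖w‖ ≤ 1 + 3 * ‖z‖ := by
          have := norm_add_le (w - z) z
          rw [sub_add_cancel, h3] at this
          linarith
        gcongr)
    refine h1.trans ?_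
    rw [div_le_iff₀ (by positivity)]
    have := norm_nonneg (L 0)
    nlinarith [mul_nonneg hC.le hz, mul_nonneg this hz]
  have hconst : ∀ z, deriv L z = deriv L 0 := by
    intro z
    apply (hLd.deriv).apply_eq_apply_of_bounded
    rw [isBounded_iff_forall_norm_le]
    exact ⟨_, by rintro _ ⟨w, rfl⟩; exact hbd w⟩
  refine ⟨L 0, deriv L 0, fun z => ?_⟩
  rw [hexp z]
  congr 1
  have hder : ∀ z, HasDerivAt (fun z => L z - deriv L 0 * z) 0 z := by
    intro z
    have h1 := (hLd z).hasDerivAt.sub ((hasDerivAt_id z).const_mul (deriv L 0))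
    refine h1.congr_deriv ?_
    rw [hconst z]; simp
  have hc := is_const_of_deriv_eq_zero (fun z => (hder z).differentiableAt)
      (fun z => (hder z).deriv) z 0
  simp at hc
  linear_combination hc

/-- a continuous function holomorphic off the real axis is entire -/
theorem rdt_painleve (g : ℂ → ℂ) (hc : Continuous g)
    (hd : ∀ z : ℂ, z.im ≠ 0 → DifferentiableAt ℂ g z) : Differentiable ℂ g := by
  rw [← differentiableOn_univ, ← Complex.isConservativeOn_and_continuousOn_iff_isDifferentiableOn
    isOpen_univ]
  refine ⟨?_, hc.continuousOn⟩
  -- rectangles on one side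
  have key : ∀ z w : ℂ, 0 ≤ z.im * w.im →
    (∫ x : ℝ in z.re..w.re, g (x + z.im * Complex.I)) -
      (∫ x : ℝ in z.re..w.re, g (x + w.im * Complex.I)) +
      Complex.I • (∫ y : ℝ in z.im..w.im, g (w.re + y * Complex.I)) -
      Complex.I • (∫ y : ℝ in z.im..w.im, g (z.re + y * Complex.I)) = 0 := by
    intro z w hzw
    apply Complex.integral_boundary_rect_eq_zero_of_continuousOn_of_differentiableOn g z w
      hc.continuousOn
    intro x hx
    refine (hd x ?_).differentiableWithinAt
    have h2 := hx.2
    simp only [Set.mem_preimage, Set.mem_Ioo, min_lt_iff, lt_max_iff] at h2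
    intro h0
    rw [h0] at h2
    rcases h2 with ⟨h | h, h' | h'⟩ <;> nlinarith
  intro z w _
  rw [← add_eq_zero_iff_eq_neg, Complex.wedgeIntegral_add_wedgeIntegral_eq]
  have k1 := key z ⟨w.re, 0⟩ (by simp)
  have k2 := key ⟨z.re, 0⟩ w (by simp)
  simp only at k1 k2
  have i1 : ∀ a b c : ℝ, IntervalIntegrable (fun y : ℝ => g (c + y * Complex.I)) volume a b :=
    fun a b c => (by fun_prop : Continuous (fun y : ℝ => g (c + y * Complex.I))).intervalIntegrable _ _
  rw [← intervalIntegral.integral_add_adjacent_intervals (i1 z.im 0 w.re) (i1 0 w.im w.re),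
    ← intervalIntegral.integral_add_adjacent_intervals (i1 z.im 0 z.re) (i1 0 w.im z.re)]
  simp only [smul_eq_mul] at *
  linear_combination k1 + k2

theorem rdt_complex (f : ℂ → ℂ) (hc : ContinuousOn f {k : ℂ | 0 ≤ k.im})
    (hd : DifferentiableOn ℂ f {k : ℂ | 0 < k.im})
    (h0 : ∀ z : ℂ, 0 ≤ z.im → f z ≠ 0) (hr : ∀ x : ℝ, ‖f x‖ = 1) (C : ℝ) (hC : 0 < C)
    (hb : ∀ z : ℂ, 0 ≤ z.im → ‖f z‖ ≤ Real.exp (C * (1 + ‖z‖)))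
    (hb' : ∀ z : ℂ, 0 ≤ z.im → ‖f z‖⁻¹ ≤ Real.exp (C * (1 + ‖z‖)))
    (hf1 : f 0 = 1)
    (ho : Tendsto (fun x : ℝ => (f x - 1) / x) (𝓝[≠] 0) (𝓝 0)) (x : ℝ) : f x = 1 := by
  classical
  set g : ℂ → ℂ := fun z => if 0 ≤ z.im then f z else ((starRingEnd ℂ) (f ((starRingEnd ℂ) z)))⁻¹
    with hgdef
  have hfr : frontier {z : ℂ | 0 ≤ z.im} = {z | z.im = 0} := by
    have := Complex.frontier_setOfPred_le_im 0
    simpa using this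
  have hconjr : ∀ z : ℂ, z.im = 0 → (starRingEnd ℂ) z = z := fun z hz =>
    Complex.conj_eq_iff_im.2 hz
  have hgc : Continuous g := by
    rw [hgdef]
    refine continuous_if ?_ ?_ ?_
    · intro a ha
      rw [hfr] at ha
      have ha' : a.im = 0 := ha
      rw [hconjr a ha]
      have h1 : ‖f a‖ = 1 := by
        have := hr a.re
        rwa [show ((a.re : ℝ) : ℂ) = a from Complex.ext (by simp) (by simp [ha'])] at this
      have h2 : (starRingEnd ℂ) (f a) * f a = 1 := by
        rw [mul_comm, Complex.mul_conj, Complex.normSq_eq_norm_sq, h1]; simp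
      exact eq_inv_of_mul_eq_one_right h2
    · refine hc.mono ?_
      rw [IsClosed.closure_eq]
      exact isClosed_le continuous_const Complex.continuous_im
    · have hsub : ∀ a ∈ closure {a : ℂ | ¬ 0 ≤ a.im}, a.im ≤ 0 := by
        intro a ha
        have : {a : ℂ | ¬ 0 ≤ a.im} ⊆ {a : ℂ | a.im ≤ 0} := fun b hb => by
          have hb2 : ¬ 0 ≤ b.im := hb
          exact (not_le.1 hb2).le
        have := closure_minimal this (isClosed_le Complex.continuous_im continuous_const) ha
        exact this
      refine ContinuousOn.inv₀ ?_ ?_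
      · refine Complex.continuous_conj.comp_continuousOn (hc.comp Complex.continuous_conj.continuousOn ?_)
        intro a ha
        have := hsub a ha
        simpa using this
      · intro a ha
        have := h0 ((starRingEnd ℂ) a) (by simpa using hsub a ha)
        simpa using this
  have hgd : Differentiable ℂ g := by
    refine rdt_painleve g hgc ?_
    intro z hz
    rcases lt_or_gt_of_ne hz with h | h
    · have hopen : IsOpen {w : ℂ | w.im < 0} := isOpen_lt Complex.continuous_im continuous_const
      have : g =ᶠ[𝓝 z] fun z => ((starRingEnd ℂ) (f ((starRingEnd ℂ) z)))⁻¹ := by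
        filter_upwards [hopen.mem_nhds h] with w hw
        have hw' : w.im < 0 := hw
        simp [hgdef, not_le.2 hw']
      refine DifferentiableAt.congr_of_eventuallyEq ?_ this
      refine DifferentiableAt.inv ?_ ?_
      · have h3 : DifferentiableAt ℂ f ((starRingEnd ℂ) z) :=
          hd.differentiableAt ((isOpen_lt continuous_const Complex.continuous_im).mem_nhds (by simpa using h))
        have := h3.conj_conj
        simpa [Function.comp_def] using this
      · have := h0 ((starRingEnd ℂ) z) (by simpa using h.le)
        simpa using this
    · have hopen : IsOpen {w : ℂ | 0 < w.im} := isOpen_lt continuous_const Complex.continuous_im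
      have : g =ᶠ[𝓝 z] f := by
        filter_upwards [hopen.mem_nhds h] with w hw
        have hw' : 0 < w.im := hw
        simp [hgdef, hw'.le]
      exact (hd.differentiableAt (hopen.mem_nhds h)).congr_of_eventuallyEq this
  have hg0 : ∀ z, g z ≠ 0 := by
    intro z
    by_cases hz : 0 ≤ z.im
    · simpa [hgdef, hz] using h0 z hz
    · have := h0 ((starRingEnd ℂ) z) (by simpa using (not_le.1 hz).le)
      simpa [hgdef, hz] using this
  have hgb : ∀ z, ‖g z‖ ≤ Real.exp (C * (1 + ‖z‖)) := by
    intro z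
    by_cases hz : 0 ≤ z.im
    · simpa [hgdef, hz] using hb z hz
    · have := hb' ((starRingEnd ℂ) z) (by simpa using (not_le.1 hz).le)
      simpa [hgdef, hz] using this
  obtain ⟨a, b, hab⟩ := rdt_zero_free_exp g hgd hg0 C hC hgb
  have hgf : ∀ x : ℝ, g x = f x := fun x => by simp [hgdef]
  have ha : Complex.exp a = 1 := by
    have h1 := hab 0
    have h2 := hgf 0
    simp at h1 h2
    rw [← h1, h2, hf1]
  have hab' : ∀ z, g z = Complex.exp (b * z) := by
    intro z; rw [hab, Complex.exp_add, ha, one_mul]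
  have hb0 : b = 0 := by
    have hder : HasDerivAt (fun x : ℝ => f x) b 0 := by
      have h1 : HasDerivAt (fun z : ℂ => Complex.exp (b * z)) b ((0 : ℝ) : ℂ) := by
        have := ((hasDerivAt_id ((0 : ℝ) : ℂ)).const_mul b).cexp
        simpa using this
      have h2 := h1.comp_ofReal
      refine h2.congr_of_eventuallyEq (Eventually.of_forall fun y => ?_)
      simp only
      rw [← hgf, hab']
    rw [hasDerivAt_iff_tendsto_slope] at hder
    refine tendsto_nhds_unique hder (ho.congr ?_)
    intro y
    simp [slope_def_module, hf1]
    ring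
  rw [← hgf, hab', hb0]; simp


/-- measurable with a continuous pointwise bound -/
def RdtAdm (g : ℝ → ℂ) : Prop :=
  AEStronglyMeasurable g ∧ ∃ B : ℝ → ℝ, Continuous B ∧ ∀ᵐ x : ℝ, ‖g x‖ ≤ B x

theorem RdtAdm.of_cont {g : ℝ → ℂ} (hg : Continuous g) : RdtAdm g :=
  ⟨hg.aestronglyMeasurable, fun x => ‖g x‖, hg.norm, Eventually.of_forall fun _ => le_rfl⟩

theorem RdtAdm.add {g h : ℝ → ℂ} (hg : RdtAdm g) (hh : RdtAdm h) :
    RdtAdm (fun x => g x + h x) := by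
  obtain ⟨m1, B1, c1, b1⟩ := hg
  obtain ⟨m2, B2, c2, b2⟩ := hh
  refine ⟨m1.add m2, fun x => B1 x + B2 x, c1.add c2, ?_⟩
  filter_upwards [b1, b2] with x h1 h2
  exact (norm_add_le _ _).trans (add_le_add h1 h2)

theorem RdtAdm.mul {g h : ℝ → ℂ} (hg : RdtAdm g) (hh : RdtAdm h) :
    RdtAdm (fun x => g x * h x) := by
  obtain ⟨m1, B1, c1, b1⟩ := hg
  obtain ⟨m2, B2, c2, b2⟩ := hh
  refine ⟨m1.mul m2, fun x => B1 x * B2 x, c1.mul c2, ?_⟩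
  filter_upwards [b1, b2] with x h1 h2
  rw [norm_mul]
  exact mul_le_mul h1 h2 (norm_nonneg _) ((norm_nonneg _).trans h1)

theorem RdtAdm.locInt {g : ℝ → ℂ} (hg : RdtAdm g) : LocallyIntegrable g := by
  obtain ⟨m1, B1, c1, b1⟩ := hg
  refine (c1.locallyIntegrable).mono m1 ?_
  filter_upwards [b1] with x hx
  exact hx.trans (le_abs_self _)

theorem RdtAdm.intInt {g : ℝ → ℂ} (hg : RdtAdm g) (a b : ℝ) : IntervalIntegrable g volume a b :=
  intervalIntegrable_iff.mpr <|
      (hg.locInt.integrableOn_isCompact isCompact_uIcc).mono_set Set.uIoc_subset_uIcc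

theorem rdt_ac {F g : ℝ → ℂ} (hg : RdtAdm g)
    (hF : ∀ a b : ℝ, F b = F a + ∫ x in a..b, g x) (a b : ℝ) :
    AbsolutelyContinuousOnInterval F a b := by
  obtain ⟨m1, B, cB, bB⟩ := hg
  obtain ⟨M, hM⟩ := (isCompact_uIcc (a := a) (b := b)).exists_bound_of_continuousOn cB.continuousOn
  have hM0 : 0 ≤ M := (norm_nonneg _).trans (hM a Set.left_mem_uIcc)
  refine LipschitzOnWith.absolutelyContinuousOnInterval (K := ⟨M, hM0⟩) ?_
  refine LipschitzOnWith.of_dist_le_mul ?_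
  intro x hx y hy
  rw [dist_eq_norm, hF y x, add_sub_cancel_left, Real.dist_eq]
  refine intervalIntegral.norm_integral_le_of_norm_le_const_ae ?_
  filter_upwards [bB] with t ht htm
  have h2 : t ∈ Set.uIcc a b :=
    Set.uIcc_subset_uIcc hy hx (Set.uIoc_subset_uIcc htm)
  exact ht.trans ((le_abs_self _).trans (hM t h2))

theorem rdt_ftc {h : ℝ → ℂ} (hh : ContDiff ℝ 1 h) (a b : ℝ) :
    h b = h a + ∫ x in a..b, deriv h x := by
  rw [intervalIntegral.integral_deriv_eq_sub']
  · ring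
  · rfl
  · intro x _; exact (hh.differentiable one_ne_zero) x
  · exact (hh.continuous_deriv le_rfl).continuousOn

theorem rdt_cont {F g : ℝ → ℂ} (hg : RdtAdm g)
    (hF : ∀ a b : ℝ, F b = F a + ∫ x in a..b, g x) : Continuous F := by
  have : F = fun b => F 0 + ∫ x in (0:ℝ)..b, g x := funext fun b => hF 0 b
  rw [this]
  exact continuous_const.add (intervalIntegral.continuous_primitive (fun a b => hg.intInt a b) 0)

theorem rdt_prod {h v g : ℝ → ℂ} (hh : ContDiff ℝ 1 h) (hg : RdtAdm g)
    (hv : ∀ a b : ℝ, v b = v a + ∫ x in a..b, g x) (a b : ℝ) :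
    h b * v b = h a * v a + ∫ x in a..b, (deriv h x * v x + h x * g x) := by
  have hvc := rdt_cont hg hv
  have hhd := hh.continuous_deriv le_rfl
  have adm : RdtAdm (fun x => deriv h x * v x + h x * g x) :=
    (RdtAdm.of_cont (hhd.mul hvc)).add ((RdtAdm.of_cont hh.continuous).mul hg)
  set G : ℝ → ℂ := fun x => deriv h x * v x + h x * g x with hG
  have ac1 := rdt_ac (RdtAdm.of_cont hhd) (rdt_ftc hh) a b
  have ac2 := rdt_ac hg hv a b
  have ac3 : AbsolutelyContinuousOnInterval (fun y => ∫ x in a..y, G x) a b := by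
    refine rdt_ac adm ?_ a b
    intro x y
    rw [intervalIntegral.integral_add_adjacent_intervals (adm.intInt _ _) (adm.intInt _ _)]
  have ac : AbsolutelyContinuousOnInterval (fun y => h y • v y - ∫ x in a..y, G x) a b :=
    (ac1.smul ac2).sub ac3
  obtain ⟨C, hC⟩ := ac.const_of_ae_hasDerivAt_zero (by
    filter_upwards [LocallyIntegrable.ae_hasDerivAt_integral hg.locInt,
      LocallyIntegrable.ae_hasDerivAt_integral adm.locInt]
      with x h1 h2 _
    have e1 : HasDerivAt v (g x) x := by
      refine ((h1 a).const_add (v a)).congr_of_eventuallyEq (Eventually.of_forall fun y => hv a y)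
    have e2 := (((hh.differentiable one_ne_zero) x).hasDerivAt.mul e1).sub (h2 a)
    refine e2.congr_deriv ?_
    simp [hG])
  have e1 := hC a Set.left_mem_uIcc
  have e2 := hC b Set.right_mem_uIcc
  simp at e1 e2
  rw [← e1] at e2
  linear_combination e2

/-- potential with integrable continuous majorant -/
structure RdtPot (c ρ : ℝ → ℝ) : Prop where
  meas : Measurable c
  cont : Continuous ρ
  nn : ∀ x, 0 ≤ ρ x
  int : Integrable ρ
  ae : ∀ᵐ x : ℝ, 0 < c x ∧ |1 - 1 / c x ^ 2| ≤ ρ x ∧ |1 - 1 / c x| ≤ ρ x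

theorem rdt_pot {c : ℝ → ℝ} (hm : Measurable c) (h1 : HypH1 c) (h2 : HypH2 c) :
    ∃ ρ, RdtPot c ρ := by
  obtain ⟨c₀, hc₀, cM, _, hb⟩ := h1
  obtain ⟨C, hC, δ, hδ, hD⟩ := h2
  refine ⟨fun x => (1 + c₀⁻¹) * (c₀⁻¹ * (C * (1 + x ^ 2) ^ (-(1 + δ) / 2))), hm, ?_, ?_, ?_, ?_⟩
  · refine continuous_const.mul (continuous_const.mul (continuous_const.mul ?_))
    refine Continuous.rpow_const (by fun_prop) (fun x => Or.inl (by positivity))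
  · intro x; positivity
  · refine Integrable.const_mul (Integrable.const_mul (Integrable.const_mul ?_ _) _) _
    have := integrable_rpow_neg_one_add_norm_sq (E := ℝ) (μ := volume) (r := 1 + δ) (by simp [hδ])
    simpa using this
  · filter_upwards [hb, hD] with x hx hDx
    have hcx : 0 < c x := hc₀.trans hx.1
    set D := C * (1 + x ^ 2) ^ (-(1 + δ) / 2) with hDdef
    have hD0 : 0 ≤ D := (abs_nonneg _).trans hDx
    have hinv : (c x)⁻¹ ≤ c₀⁻¹ := inv_anti₀ hc₀ hx.1.le
    have e1 : |1 - 1 / c x| ≤ c₀⁻¹ * D := by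
      have : 1 - 1 / c x = (c x)⁻¹ * (c x - 1) := by field_simp
      rw [this, abs_mul, abs_of_pos (inv_pos.2 hcx)]
      exact mul_le_mul hinv hDx (abs_nonneg _) (by positivity)
    refine ⟨hcx, ?_, ?_⟩
    · have : 1 - 1 / c x ^ 2 = (1 + (c x)⁻¹) * (1 - 1 / c x) := by field_simp; ring
      rw [this, abs_mul, abs_of_pos (by positivity)]
      exact mul_le_mul (by linarith) e1 (abs_nonneg _) (by positivity)
    · refine e1.trans ?_
      have : 0 ≤ c₀⁻¹ * (c₀⁻¹ * D) := by positivity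
      linarith

theorem RdtPot.refl {c ρ : ℝ → ℝ} (h : RdtPot c ρ) : RdtPot (fun x => c (-x)) (fun x => ρ (-x)) where
  meas := h.meas.comp measurable_neg
  cont := h.cont.comp continuous_neg
  nn := fun _ => h.nn _
  int := h.int.comp_neg
  ae := (Measure.measurePreserving_neg (volume : Measure ℝ)).quasiMeasurePreserving.ae h.ae

theorem RdtPot.adm {c ρ : ℝ → ℝ} (h : RdtPot c ρ) : RdtAdm (fun x => (1 : ℂ) / (c x : ℂ) ^ 2) := by
  refine ⟨?_, fun x => 1 + ρ x, continuous_const.add h.cont, ?_⟩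
  · have := h.meas
    exact (by fun_prop : Measurable (fun x => (1 : ℂ) / (c x : ℂ) ^ 2)).aestronglyMeasurable
  · filter_upwards [h.ae] with x hx
    have : ((1 : ℂ) / (c x : ℂ) ^ 2) = ((1 / c x ^ 2 : ℝ) : ℂ) := by push_cast; rfl
    rw [this, Complex.norm_real, Real.norm_eq_abs]
    have h2 := abs_sub_comm 1 (1 / c x ^ 2) ▸ hx.2.1
    have h3 := abs_add_le (1 / c x ^ 2 - 1) 1
    rw [sub_add_cancel, abs_one] at h3
    linarith


theorem rdt_deriv_lim {m p : ℝ → ℂ} {a L : ℂ} (hm : ∀ x, HasDerivAt m (p x) x)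
    (h1 : Tendsto m atTop (𝓝 a)) (h2 : Tendsto p atTop (𝓝 L)) : L = 0 := by
  rw [← norm_le_zero_iff]
  refine le_of_forall_pos_le_add fun ε hε => ?_
  rw [zero_add]
  have ev := (Metric.tendsto_atTop.1 h2) ε hε
  obtain ⟨X, hX⟩ := ev
  have h3 : Tendsto (fun x : ℝ => ‖(m (x + 1) - L * ((x + 1 : ℝ) : ℂ)) - (m x - L * (x : ℂ))‖) atTop
      (𝓝 ‖(a - a) - L‖) := by
    refine Tendsto.norm ?_
    have h4 := h1.comp (tendsto_atTop_add_const_right atTop (1 : ℝ) tendsto_id)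
    refine ((h4.sub h1).sub (tendsto_const_nhds (x := L))).congr fun x => ?_
    simp only [Function.comp, id]; push_cast; ring
  rw [sub_self, zero_sub, norm_neg] at h3
  refine le_of_tendsto h3 ?_
  filter_upwards [eventually_ge_atTop X] with x hx
  have := (convex_Ici X).norm_image_sub_le_of_norm_hasDerivWithin_le
    (f := fun y : ℝ => m y - L * (y : ℂ)) (f' := fun y => p y - L) (C := ε)
    (fun y _ => by
      have := ((hm y).sub ((Complex.ofRealCLM.hasDerivAt (x := y)).const_mul L))
      refine HasDerivAt.hasDerivWithinAt (this.congr_deriv ?_)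
      simp) (fun y hy => by rw [← dist_eq_norm]; exact (hX y hy).le)
      (x := x) (y := x + 1) hx (Set.mem_Ici.2 (by linarith))
  simpa using this

theorem rdt_gron_back {φ ρ : ℝ → ℝ} {κ I Q : ℝ} (hφ : Continuous φ) (hρ : Continuous ρ)
    (hφ0 : ∀ x, 0 ≤ φ x) (hρ0 : ∀ x, 0 ≤ ρ x) (hκ : 0 ≤ κ)
    (hI : Tendsto (fun x => ∫ t in (0:ℝ)..x, ρ t * φ t) atTop (𝓝 I))
    (hQ : Tendsto (fun x => ∫ t in (0:ℝ)..x, ρ t) atTop (𝓝 Q))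
    (hb : ∀ x, 0 ≤ x → φ x ≤ 1 + κ * (I - ∫ t in (0:ℝ)..x, ρ t * φ t)) :
    ∀ x, 0 ≤ x → 1 + κ * (I - ∫ t in (0:ℝ)..x, ρ t * φ t) ≤ Real.exp (κ * Q) := by
  set H : ℝ → ℝ := fun x => 1 + κ * (I - ∫ t in (0:ℝ)..x, ρ t * φ t) with hH
  set E : ℝ → ℝ := fun x => H x * Real.exp (κ * ∫ t in (0:ℝ)..x, ρ t) with hE
  have dH : ∀ x, HasDerivAt H (-(κ * (ρ x * φ x))) x := by
    intro x
    have := ((intervalIntegral.integral_hasDerivAt_right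
      ((hρ.mul hφ).intervalIntegrable 0 x) ((hρ.mul hφ).stronglyMeasurableAtFilter _ _)
      (hρ.mul hφ).continuousAt).const_sub I).const_mul κ |>.const_add 1
    refine this.congr_deriv (by simp only [Pi.mul_apply]; ring)
  have dR : ∀ x, HasDerivAt (fun x => ∫ t in (0:ℝ)..x, ρ t) (ρ x) x := fun x =>
    intervalIntegral.integral_hasDerivAt_right
      (hρ.intervalIntegrable 0 x) (hρ.stronglyMeasurableAtFilter _ _) hρ.continuousAt
  have dE : ∀ x, HasDerivAt E (κ * ρ x * (H x - φ x) * Real.exp (κ * ∫ t in (0:ℝ)..x, ρ t)) x := by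
    intro x
    refine ((dH x).mul ((dR x).const_mul κ).exp).congr_deriv (by ring)
  have mono : MonotoneOn E (Set.Ici 0) := by
    refine monotoneOn_of_deriv_nonneg (convex_Ici 0)
      (fun x _ => (dE x).continuousAt.continuousWithinAt)
      (fun x _ => (dE x).differentiableAt.differentiableWithinAt) ?_
    intro x hx
    rw [interior_Ici] at hx
    rw [(dE x).deriv]
    have h1 := hb x (le_of_lt hx)
    have : 0 ≤ H x - φ x := sub_nonneg.2 h1
    have := hρ0 x
    positivity
  have limE : Tendsto E atTop (𝓝 (Real.exp (κ * Q))) := by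
    have h1 : Tendsto H atTop (𝓝 (1 + κ * (I - I))) :=
      ((hI.const_sub I).const_mul κ).const_add 1
    have h2 := h1.mul ((Real.continuous_exp.tendsto _).comp (hQ.const_mul κ))
    simpa using h2
  intro x hx
  have h1 : E x ≤ Real.exp (κ * Q) := by
    refine ge_of_tendsto limE ?_
    filter_upwards [eventually_ge_atTop x] with y hy
    exact mono hx (hx.trans hy) hy
  have hH0 : 0 ≤ H x := (hφ0 x).trans (hb x hx)
  have hR0 : 0 ≤ ∫ t in (0:ℝ)..x, ρ t := intervalIntegral.integral_nonneg hx (fun t _ => hρ0 t)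
  have h2 : 1 ≤ Real.exp (κ * ∫ t in (0:ℝ)..x, ρ t) := Real.one_le_exp (by positivity)
  exact (le_mul_of_one_le_right hH0 h2).trans h1

theorem rdt_gron_fwd {G ρ : ℝ → ℝ} {κ L Q : ℝ} (hG : Continuous G) (hρ : Continuous ρ)
    (hρ0 : ∀ x, 0 ≤ ρ x) (hκ : 0 ≤ κ)
    (hL : Tendsto G atTop (𝓝 L))
    (hQ : Tendsto (fun x => ∫ t in (0:ℝ)..x, ρ t) atTop (𝓝 Q))
    (hb : ∀ x, 0 ≤ x → G x ≤ G 0 + κ * ∫ t in (0:ℝ)..x, ρ t * G t) :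
    L ≤ G 0 * Real.exp (κ * Q) := by
  set H : ℝ → ℝ := fun x => G 0 + κ * ∫ t in (0:ℝ)..x, ρ t * G t with hH
  set E : ℝ → ℝ := fun x => H x * Real.exp (-(κ * ∫ t in (0:ℝ)..x, ρ t)) with hE
  have dH : ∀ x, HasDerivAt H (κ * (ρ x * G x)) x := by
    intro x
    exact ((intervalIntegral.integral_hasDerivAt_right
      ((hρ.mul hG).intervalIntegrable 0 x) ((hρ.mul hG).stronglyMeasurableAtFilter _ _)
      (hρ.mul hG).continuousAt)).const_mul κ |>.const_add _
  have dR : ∀ x, HasDerivAt (fun x => ∫ t in (0:ℝ)..x, ρ t) (ρ x) x := fun x =>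
    intervalIntegral.integral_hasDerivAt_right
      (hρ.intervalIntegrable 0 x) (hρ.stronglyMeasurableAtFilter _ _) hρ.continuousAt
  have dE : ∀ x, HasDerivAt E
      (-(κ * ρ x * (H x - G x) * Real.exp (-(κ * ∫ t in (0:ℝ)..x, ρ t)))) x := by
    intro x
    refine ((dH x).mul ((dR x).const_mul κ).neg.exp).congr_deriv (by simp only [Pi.neg_apply]; ring)
  have mono : AntitoneOn E (Set.Ici 0) := by
    refine antitoneOn_of_deriv_nonpos (convex_Ici 0)
      (fun x _ => (dE x).continuousAt.continuousWithinAt)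
      (fun x _ => (dE x).differentiableAt.differentiableWithinAt) ?_
    intro x hx
    rw [interior_Ici] at hx
    rw [(dE x).deriv]
    have h1 := hb x (le_of_lt hx)
    have : 0 ≤ H x - G x := sub_nonneg.2 h1
    have := hρ0 x
    rw [neg_nonpos]
    positivity
  have lim : Tendsto (fun x => G x * Real.exp (-(κ * ∫ t in (0:ℝ)..x, ρ t))) atTop
      (𝓝 (L * Real.exp (-(κ * Q)))) :=
    hL.mul ((Real.continuous_exp.tendsto _).comp (hQ.const_mul κ).neg)
  have h1 : L * Real.exp (-(κ * Q)) ≤ G 0 := by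
    refine le_of_tendsto lim ?_
    filter_upwards [eventually_ge_atTop 0] with x hx
    have h2 := mono (Set.mem_Ici.2 le_rfl) (Set.mem_Ici.2 hx) hx
    have h3 : E 0 = G 0 := by simp [hE, hH]
    rw [h3] at h2
    refine le_trans ?_ h2
    exact mul_le_mul_of_nonneg_right (hb x hx) (Real.exp_pos _).le
  rw [Real.exp_neg, ← div_eq_mul_inv, div_le_iff₀ (Real.exp_pos _)] at h1
  exact h1

theorem rdt_sigma {c ρ : ℝ → ℝ} (hp : RdtPot c ρ) {k : ℂ} {u : ℝ → ℂ} (hu : SolvesHelmholtz c k u)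
    (σ : ℂ) (hσ : σ ^ 2 = - k ^ 2) (a b : ℝ) :
    Complex.exp (-(σ * b)) * (deriv u b + σ * u b) = Complex.exp (-(σ * a)) * (deriv u a + σ * u a)
      + ∫ t in a..b, k ^ 2 * ((1 - 1 / (c t : ℂ) ^ 2) * (Complex.exp (-(σ * t)) * u t)) := by
  have uc := hu.1.continuous
  have udc := hu.1.continuous_deriv le_rfl
  have adm1 : RdtAdm (fun x => -(k ^ 2 / ((c x : ℂ) ^ 2)) * u x) := by
    have := ((RdtAdm.of_cont (continuous_const (y := -k ^ 2))).mul hp.adm).mul (RdtAdm.of_cont uc)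
    convert this using 2
    ring
  have adm2 : RdtAdm (fun x => σ * deriv u x) := RdtAdm.of_cont (by fun_prop)
  have hd : ∀ t : ℝ, HasDerivAt (fun t : ℝ => Complex.exp (-(σ * t)))
      (-σ * Complex.exp (-(σ * t))) t := by
    intro t
    have := ((Complex.ofRealCLM.hasDerivAt (x := t)).const_mul σ).neg.cexp
    refine this.congr_deriv ?_
    simp; ring
  have hh : ContDiff ℝ 1 (fun t : ℝ => Complex.exp (-(σ * t))) := by
    refine ContDiff.cexp (ContDiff.neg (contDiff_const.mul ?_))
    exact Complex.ofRealCLM.contDiff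
  have := rdt_prod (v := fun x => deriv u x + σ * u x) hh (adm1.add adm2) (by
    intro x y
    rw [intervalIntegral.integral_add (adm1.intInt _ _) (adm2.intInt _ _), hu.2 x y,
      intervalIntegral.integral_const_mul]
    have := rdt_ftc hu.1 x y
    linear_combination σ * this) a b
  rw [this]
  congr 1
  refine intervalIntegral.integral_congr fun t _ => ?_
  rw [(hd t).deriv]
  linear_combination (-(Complex.exp (-(σ * t)) * u t)) * hσ


/-- the normalised Jost function -/
def rdtM (k : ℂ) (u : ℝ → ℂ) (x : ℝ) : ℂ := Complex.exp (-(Complex.I * k * (x : ℂ))) * u x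

theorem rdtM_cont {k : ℂ} {u : ℝ → ℂ} (hu : Continuous u) : Continuous (rdtM k u) := by
  unfold rdtM; fun_prop

theorem rdt_bdd {c : ℝ → ℝ} {k : ℂ} {u : ℝ → ℂ} (hu : IsJostPlus c k u) :
    ∃ M, ∀ x, 0 ≤ x → ‖rdtM k u x‖ ≤ M := by
  have hc : Continuous (rdtM k u) := rdtM_cont hu.1.1.continuous
  have h1 : Tendsto (fun x => ‖rdtM k u x‖) atTop (𝓝 ‖(1:ℂ)‖) := hu.2.norm
  have h2 := h1.eventually (gt_mem_nhds (show ‖(1:ℂ)‖ < 2 by simp))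
  obtain ⟨X, hX⟩ := eventually_atTop.1 h2
  obtain ⟨M, hM⟩ := (isCompact_Icc (a := (0:ℝ)) (b := X)).exists_bound_of_continuousOn hc.continuousOn
  refine ⟨max M 2, fun x hx => ?_⟩
  rcases le_total x X with h | h
  · exact (hM x ⟨hx, h⟩).trans (le_max_left _ _)
  · exact (hX x h).le.trans (le_max_right _ _)

theorem rdt_intRho {c ρ : ℝ → ℝ} (hp : RdtPot c ρ) {k : ℂ} {u : ℝ → ℂ} (hu : IsJostPlus c k u) :
    IntegrableOn (fun t => ρ t * ‖rdtM k u t‖) (Set.Ioi 0) := by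
  obtain ⟨M, hM⟩ := rdt_bdd hu
  have hc : Continuous (rdtM k u) := rdtM_cont hu.1.1.continuous
  refine ((hp.int.integrableOn (s := Set.Ioi 0)).mul_const M).mono'
    (hp.cont.mul hc.norm).aestronglyMeasurable ?_
  filter_upwards [ae_restrict_mem measurableSet_Ioi] with t ht
  rw [Real.norm_of_nonneg (mul_nonneg (hp.nn t) (norm_nonneg _))]
  exact mul_le_mul_of_nonneg_left (hM t (le_of_lt ht)) (hp.nn t)

theorem RdtPot.qadm {c ρ : ℝ → ℝ} (hp : RdtPot c ρ) : RdtAdm (fun t => (1 - 1 / (c t : ℂ) ^ 2)) := by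
  have := (RdtAdm.of_cont (continuous_const (y := (1:ℂ)))).add
    ((RdtAdm.of_cont (continuous_const (y := (-1:ℂ)))).mul hp.adm)
  convert this using 2
  ring

theorem RdtPot.qbd {c ρ : ℝ → ℝ} (hp : RdtPot c ρ) :
    ∀ᵐ t : ℝ, ‖(1 - 1 / (c t : ℂ) ^ 2)‖ ≤ ρ t := by
  filter_upwards [hp.ae] with x hx
  have : (1 - (1 : ℂ) / (c x : ℂ) ^ 2) = ((1 - 1 / c x ^ 2 : ℝ) : ℂ) := by push_cast; rfl
  rw [this, Complex.norm_real, Real.norm_eq_abs]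
  exact hx.2.1

theorem rdt_norm_exp1 (k : ℂ) (x : ℝ) :
    ‖Complex.exp (-(Complex.I * k * (x : ℂ)))‖ = Real.exp (k.im * x) := by
  rw [Complex.norm_exp]; simp

theorem rdt_norm_exp2 (k : ℂ) (x : ℝ) :
    ‖Complex.exp (Complex.I * k * (x : ℂ))‖ = Real.exp (-(k.im * x)) := by
  rw [Complex.norm_exp]; simp

/-- increments of a sigma-combination -/
theorem rdt_incr {c ρ : ℝ → ℝ} (hp : RdtPot c ρ) {k : ℂ} {u : ℝ → ℂ} (hu : SolvesHelmholtz c k u)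
    (σ : ℂ) (hσ : σ ^ 2 = - k ^ 2) {x y K : ℝ} (hxy : x ≤ y)
    (hK : ∀ t, x ≤ t → ‖Complex.exp (-(σ * t)) * u t‖ ≤ K * ‖rdtM k u t‖) :
    ‖Complex.exp (-(σ * y)) * (deriv u y + σ * u y)
      - Complex.exp (-(σ * x)) * (deriv u x + σ * u x)‖
      ≤ ‖k‖ ^ 2 * K * ∫ t in x..y, ρ t * ‖rdtM k u t‖ := by
  rw [rdt_sigma hp hu σ hσ x y, add_sub_cancel_left]
  rw [← intervalIntegral.integral_const_mul]
  have hc : Continuous (rdtM k u) := rdtM_cont hu.1.continuous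
  refine intervalIntegral.norm_integral_le_of_norm_le hxy ?_
    ((continuous_const.mul (hp.cont.mul hc.norm)).intervalIntegrable _ _)
  filter_upwards [hp.qbd] with t ht htm
  have h1 := hK t htm.1.le
  rw [norm_mul, norm_pow, norm_mul]
  calc _ ≤ ‖k‖ ^ 2 * (ρ t * (K * ‖rdtM k u t‖)) := by gcongr; exact hp.nn t
    _ = _ := by ring

theorem rdt_split {c : ℝ → ℝ} {k : ℂ} {u : ℝ → ℂ} (hu : SolvesHelmholtz c k u) (x : ℝ) :
    HasDerivAt (rdtM k u) (Complex.exp (-(Complex.I * k * x)) * (deriv u x - Complex.I * k * u x)) x := by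
  have h1 : HasDerivAt u (deriv u x) x := (hu.1.differentiable one_ne_zero x).hasDerivAt
  have h2 := ((Complex.ofRealCLM.hasDerivAt (x := x)).const_mul (Complex.I * k)).neg.cexp
  refine (h2.mul h1).congr_deriv ?_
  simp; ring

theorem rdt_lim {c ρ : ℝ → ℝ} (hp : RdtPot c ρ) {k : ℂ} {u : ℝ → ℂ}
    (hu : IsJostPlus c k u) :
    Tendsto (fun x : ℝ => Complex.exp (-(Complex.I * k * x)) * (deriv u x - Complex.I * k * u x))
      atTop (𝓝 0) := by
  have hI := rdt_intRho hp hu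
  have hc : Continuous (rdtM k u) := rdtM_cont hu.1.1.continuous
  have hq : IntegrableOn (fun t : ℝ => k ^ 2 * ((1 - 1 / (c t : ℂ) ^ 2) *
      (Complex.exp (-(Complex.I * k * t)) * u t))) (Set.Ioi 0) := by
    refine Integrable.const_mul (hI.mono' ?_ ?_) _
    · exact (hp.qadm.1.mul hc.aestronglyMeasurable).restrict
    · filter_upwards [ae_restrict_of_ae hp.qbd] with t ht
      rw [norm_mul]
      exact mul_le_mul_of_nonneg_right ht (norm_nonneg _)
  have h1 := intervalIntegral_tendsto_integral_Ioi 0 hq tendsto_id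
  obtain ⟨LA, hA⟩ : ∃ LA, Tendsto (fun x : ℝ => Complex.exp (-(Complex.I * k * x)) *
      (deriv u x + Complex.I * k * u x)) atTop (𝓝 LA) := by
    refine ⟨_, (h1.const_add (Complex.exp (-(Complex.I * k * (0:ℝ))) *
      (deriv u 0 + Complex.I * k * u 0))).congr fun x => ?_⟩
    rw [rdt_sigma hp hu.1 (Complex.I * k) (by rw [mul_pow, Complex.I_sq]; ring) 0 x]
    rfl
  have hP := hA.sub (hu.2.const_mul (2 * Complex.I * k))
  have hP' : Tendsto (fun x : ℝ => Complex.exp (-(Complex.I * k * x)) * (deriv u x - Complex.I * k * u x))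
      atTop (𝓝 (LA - 2 * Complex.I * k * 1)) := hP.congr fun x => by ring
  have h0 := rdt_deriv_lim (rdt_split hu.1) hu.2 hP'
  rw [h0] at hP'
  exact hP'

theorem rdt_lim' {c ρ : ℝ → ℝ} (hp : RdtPot c ρ) {k : ℂ} {u : ℝ → ℂ}
    (hu : IsJostPlus c k u) :
    Tendsto (fun x : ℝ => Complex.exp (-(Complex.I * k * x)) * deriv u x) atTop (𝓝 (Complex.I * k)) := by
  have := (rdt_lim hp hu).add (hu.2.const_mul (Complex.I * k))
  rw [zero_add, mul_one] at this
  exact this.congr fun x => by ring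

/-- the tail integral bounds -/
theorem rdt_tail {c ρ : ℝ → ℝ} (hp : RdtPot c ρ) {k : ℂ} (hk : 0 ≤ k.im) {u : ℝ → ℂ}
    (hu : IsJostPlus c k u) {I : ℝ}
    (hI : Tendsto (fun x => ∫ t in (0:ℝ)..x, ρ t * ‖rdtM k u t‖) atTop (𝓝 I)) (x : ℝ) :
    ‖2 * Complex.I * k - Complex.exp (-(Complex.I * k * x)) * (deriv u x + Complex.I * k * u x)‖
      ≤ ‖k‖ ^ 2 * (I - ∫ t in (0:ℝ)..x, ρ t * ‖rdtM k u t‖) ∧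
    ‖Complex.exp (-(Complex.I * k * x)) * (deriv u x - Complex.I * k * u x)‖
      ≤ ‖k‖ ^ 2 * (I - ∫ t in (0:ℝ)..x, ρ t * ‖rdtM k u t‖) := by
  have hc : Continuous (rdtM k u) := rdtM_cont hu.1.1.continuous
  have hcc : Continuous (fun t => ρ t * ‖rdtM k u t‖) := hp.cont.mul hc.norm
  have hJ : Tendsto (fun y => ∫ t in x..y, ρ t * ‖rdtM k u t‖) atTop
      (𝓝 (I - ∫ t in (0:ℝ)..x, ρ t * ‖rdtM k u t‖)) := by
    refine (hI.sub_const _).congr fun y => ?_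
    exact intervalIntegral.integral_interval_sub_left (hcc.intervalIntegrable _ _)
      (hcc.intervalIntegrable _ _)
  constructor
  · have hA : Tendsto (fun x : ℝ => Complex.exp (-(Complex.I * k * x)) * (deriv u x + Complex.I * k * u x))
        atTop (𝓝 (2 * Complex.I * k)) := by
      have := (rdt_lim hp hu).add (hu.2.const_mul (2 * Complex.I * k))
      rw [zero_add, mul_one] at this
      exact this.congr fun x => by ring
    refine le_of_tendsto_of_tendsto (hA.sub_const _).norm (hJ.const_mul (‖k‖ ^ 2)) ?_
    filter_upwards [eventually_ge_atTop x] with y hy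
    have := rdt_incr hp hu.1 (Complex.I * k) (by rw [mul_pow, Complex.I_sq]; ring) (K := 1) hy
      (fun t _ => by rw [one_mul]; exact le_rfl)
    rwa [mul_one] at this
  · have hB : Tendsto (fun y : ℝ => Complex.exp (Complex.I * k * y) * (deriv u y - Complex.I * k * u y))
        atTop (𝓝 0) := by
      have hn := (rdt_lim hp hu).norm
      rw [norm_zero] at hn
      refine squeeze_zero_norm' ?_ hn
      filter_upwards [eventually_ge_atTop 0] with y hy
      rw [norm_mul, norm_mul, rdt_norm_exp1, rdt_norm_exp2]
      refine mul_le_mul_of_nonneg_right (Real.exp_le_exp.2 ?_) (norm_nonneg _)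
      have := mul_nonneg hk hy
      linarith
    have key : ‖Complex.exp (Complex.I * k * x) * (deriv u x - Complex.I * k * u x)‖
        ≤ ‖k‖ ^ 2 * Real.exp (-(2 * k.im * x)) * (I - ∫ t in (0:ℝ)..x, ρ t * ‖rdtM k u t‖) := by
      have h1 := (hB.sub_const
        (Complex.exp (Complex.I * k * x) * (deriv u x - Complex.I * k * u x))).norm
      rw [zero_sub, norm_neg] at h1
      refine le_of_tendsto_of_tendsto h1 (hJ.const_mul (‖k‖ ^ 2 * Real.exp (-(2 * k.im * x)))) ?_
      filter_upwards [eventually_ge_atTop x] with y hy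
      have := rdt_incr hp hu.1 (-(Complex.I * k)) (by rw [neg_sq, mul_pow, Complex.I_sq]; ring)
        (K := Real.exp (-(2 * k.im * x))) hy (fun t ht => by
          rw [rdtM, norm_mul, norm_mul, neg_mul, neg_neg, rdt_norm_exp1, rdt_norm_exp2, ← mul_assoc,
            ← Real.exp_add]
          refine mul_le_mul_of_nonneg_right (Real.exp_le_exp.2 ?_) (norm_nonneg _)
          nlinarith)
      simpa only [neg_mul, neg_neg, ← sub_eq_add_neg] using this
    rw [norm_mul, rdt_norm_exp2] at key
    rw [norm_mul, rdt_norm_exp1]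
    have h3 : Real.exp (k.im * x) = Real.exp (2 * k.im * x) * Real.exp (-(k.im * x)) := by
      rw [← Real.exp_add]; congr 1; ring
    rw [h3, mul_assoc]
    refine (mul_le_mul_of_nonneg_left key (Real.exp_pos _).le).trans (le_of_eq ?_)
    rw [Real.exp_neg (2 * k.im * x)]
    field_simp

theorem rdt_bounds {c ρ : ℝ → ℝ} (hp : RdtPot c ρ) {k : ℂ} (hk : 0 ≤ k.im) (hk0 : k ≠ 0) {u : ℝ → ℂ}
    (hu : IsJostPlus c k u) :
    (∀ x, 0 ≤ x → ‖rdtM k u x‖ ≤ Real.exp (‖k‖ * ∫ t in Set.Ioi 0, ρ t)) ∧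
    ‖u 0 - 1‖ ≤ Real.exp (‖k‖ * ∫ t in Set.Ioi 0, ρ t) - 1 ∧
    ‖deriv u 0 - Complex.I * k * u 0‖ ≤ ‖k‖ * (Real.exp (‖k‖ * ∫ t in Set.Ioi 0, ρ t) - 1) := by
  have hc : Continuous (rdtM k u) := rdtM_cont hu.1.1.continuous
  have hI := intervalIntegral_tendsto_integral_Ioi 0 (rdt_intRho hp hu) tendsto_id
  have hQ := intervalIntegral_tendsto_integral_Ioi 0 (hp.int.integrableOn) tendsto_id
  simp only [id] at hI hQ
  set I := ∫ t in Set.Ioi 0, ρ t * ‖rdtM k u t‖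
  set Q := ∫ t in Set.Ioi 0, ρ t
  have hkp : 0 < ‖k‖ := norm_pos_iff.2 hk0
  have h1 : ∀ x, ‖rdtM k u x - 1‖ ≤ ‖k‖ * (I - ∫ t in (0:ℝ)..x, ρ t * ‖rdtM k u t‖) := by
    intro x
    obtain ⟨ha, hb⟩ := rdt_tail hp hk hu hI x
    set J := I - ∫ t in (0:ℝ)..x, ρ t * ‖rdtM k u t‖
    have e : 2 * Complex.I * k * (rdtM k u x - 1) =
        -(2 * Complex.I * k - Complex.exp (-(Complex.I * k * x)) * (deriv u x + Complex.I * k * u x))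
        - Complex.exp (-(Complex.I * k * x)) * (deriv u x - Complex.I * k * u x) := by
      unfold rdtM; ring
    have h2 := congrArg norm e
    have h3 := norm_sub_le (-(2 * Complex.I * k - Complex.exp (-(Complex.I * k * x)) * (deriv u x + Complex.I * k * u x))) (Complex.exp (-(Complex.I * k * x)) * (deriv u x - Complex.I * k * u x))
    rw [← h2, norm_neg] at h3
    simp only [norm_mul, Complex.norm_I, Complex.norm_ofNat, mul_one] at h3
    rw [← norm_mul] at h3
    have h4 : 2 * ‖k‖ * ‖rdtM k u x - 1‖ ≤ 2 * ‖k‖ * (‖k‖ * J) := by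
      simp only [norm_mul] at h3 ha hb
      nlinarith
    exact le_of_mul_le_mul_left h4 (by positivity)
  have h2 := rdt_gron_back (κ := ‖k‖) hc.norm hp.cont (fun _ => norm_nonneg _) hp.nn hkp.le hI hQ
    (fun x _ => by
      have h3 := norm_add_le (rdtM k u x - 1) 1
      rw [sub_add_cancel, norm_one] at h3
      linarith [h1 x])
  have m0 : rdtM k u 0 = u 0 := by simp [rdtM]
  refine ⟨fun x hx => ?_, ?_, ?_⟩
  · have h3 := norm_add_le (rdtM k u x - 1) 1
    rw [sub_add_cancel, norm_one] at h3
    linarith [h1 x, h2 x hx]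
  · have := h1 0
    rw [m0] at this
    linarith [h2 0 le_rfl]
  · have h3 := (rdt_tail hp hk hu hI 0).2
    simp only [Complex.ofReal_zero, mul_zero, neg_zero, Complex.exp_zero, one_mul] at h3
    have h4 := h2 0 le_rfl
    refine h3.trans ?_
    rw [sq, mul_assoc]
    exact mul_le_mul_of_nonneg_left (by linarith) hkp.le

theorem rdt_intq {c ρ : ℝ → ℝ} (hp : RdtPot c ρ) {k : ℂ} {u : ℝ → ℂ}
    (hu : IsJostPlus c k u) {h : ℝ → ℂ} (hh : Continuous h) (hb : ∀ t, 0 < t → ‖h t‖ ≤ 2) :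
    IntegrableOn (fun t : ℝ => ((1 - 1 / (c t : ℂ) ^ 2) * (h t * rdtM k u t))) (Set.Ioi 0) := by
  have hc : Continuous (rdtM k u) := rdtM_cont hu.1.1.continuous
  refine ((rdt_intRho hp hu).const_mul 2).mono' ?_ ?_
  · exact (hp.qadm.1.mul (hh.mul hc).aestronglyMeasurable).restrict
  · filter_upwards [ae_restrict_of_ae hp.qbd, ae_restrict_mem measurableSet_Ioi] with t ht ht0
    rw [norm_mul, norm_mul]
    calc _ ≤ ρ t * (2 * ‖rdtM k u t‖) := by
          gcongr
          · exact hp.nn t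
          · exact hb t ht0
      _ = _ := by ring

/-- representation of the value at zero -/
theorem rdt_repr {c ρ : ℝ → ℝ} (hp : RdtPot c ρ) {k : ℝ} {u : ℝ → ℂ}
    (hu : IsJostPlus c k u) :
    2 * Complex.I * k * (u 0 - 1) = -(k : ℂ) ^ 2 * ∫ t in Set.Ioi (0:ℝ), ((1 - 1 / (c t : ℂ) ^ 2) *
      ((1 - Complex.exp (2 * Complex.I * k * t)) * rdtM k u t)) := by
  have hn : ∀ t : ℝ, ‖Complex.exp (2 * Complex.I * k * t)‖ = 1 := by
    intro t; rw [Complex.norm_exp]; simp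
  have i1 := rdt_intq hp hu (h := fun t => (1 - Complex.exp (2 * Complex.I * k * t))) (by fun_prop)
    (fun t _ => by
      refine (norm_sub_le _ _).trans ?_
      rw [hn t, norm_one]; norm_num)
  have h1 := (intervalIntegral_tendsto_integral_Ioi 0 i1 tendsto_id).const_mul (-(k:ℂ)^2)
  simp only [id] at h1
  have hP := rdt_lim hp hu
  have hB : Tendsto (fun y : ℝ => Complex.exp (Complex.I * k * y) * (deriv u y - Complex.I * k * u y))
      atTop (𝓝 0) := by
    rw [tendsto_zero_iff_norm_tendsto_zero] at hP ⊢
    refine hP.congr fun y => ?_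
    rw [norm_mul, norm_mul, rdt_norm_exp1, rdt_norm_exp2]; simp
  have hA : Tendsto (fun x : ℝ => Complex.exp (-(Complex.I * k * x)) * (deriv u x + Complex.I * k * u x))
        atTop (𝓝 (2 * Complex.I * k)) := by
    have := (rdt_lim hp hu).add (hu.2.const_mul (2 * Complex.I * k))
    rw [zero_add, mul_one] at this
    exact this.congr fun x => by ring
  refine tendsto_nhds_unique ?_ h1
  have h2 := (hA.sub hB).const_sub (2 * Complex.I * k * u 0)
  rw [show 2 * Complex.I * k * u 0 - (2 * Complex.I * k - 0) = 2 * Complex.I * k * (u 0 - 1) by ring] at h2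
  refine h2.congr fun x => ?_
  have eA := rdt_sigma hp hu.1 (Complex.I * k) (by rw [mul_pow, Complex.I_sq]; ring) 0 x
  have eB := rdt_sigma hp hu.1 (-(Complex.I * k)) (by rw [neg_sq, mul_pow, Complex.I_sq]; ring) 0 x
  simp only [neg_mul, neg_neg, ← sub_eq_add_neg, Complex.ofReal_zero, mul_zero, neg_zero,
    Complex.exp_zero, one_mul] at eA eB
  rw [eA, eB]
  have uc := hu.1.1.continuous
  have j1 : IntervalIntegrable (fun t : ℝ => (k:ℂ) ^ 2 * ((1 - 1 / (c t : ℂ) ^ 2) * (Complex.exp (-(Complex.I * k * t)) * u t))) volume 0 x :=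
    ((hp.qadm.mul (RdtAdm.of_cont (by fun_prop))).intInt 0 x).const_mul _
  have j2 : IntervalIntegrable (fun t : ℝ => (k:ℂ) ^ 2 * ((1 - 1 / (c t : ℂ) ^ 2) * (Complex.exp (Complex.I * k * t) * u t))) volume 0 x :=
    ((hp.qadm.mul (RdtAdm.of_cont (by fun_prop))).intInt 0 x).const_mul _
  rw [← intervalIntegral.integral_const_mul]
  have e3 := intervalIntegral.integral_sub j1 j2
  have e4 : ∫ t in (0:ℝ)..x, -(k:ℂ) ^ 2 * ((1 - 1 / (c t : ℂ) ^ 2) *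
      ((1 - Complex.exp (2 * Complex.I * k * t)) * rdtM k u t)) = - ∫ t in (0:ℝ)..x,
      ((k:ℂ) ^ 2 * ((1 - 1 / (c t : ℂ) ^ 2) * (Complex.exp (-(Complex.I * k * t)) * u t)) -
       (k:ℂ) ^ 2 * ((1 - 1 / (c t : ℂ) ^ 2) * (Complex.exp (Complex.I * k * t) * u t))) := by
    rw [← intervalIntegral.integral_neg]
    refine intervalIntegral.integral_congr fun t _ => ?_
    have e5 : Complex.exp (Complex.I * k * t) =
        Complex.exp (2 * Complex.I * k * t) * Complex.exp (-(Complex.I * k * t)) := by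
      rw [← Complex.exp_add]; congr 1; ring
    simp only [rdtM]
    rw [e5]; ring
  rw [e4, e3]; ring

theorem rdt_small {c ρ : ℝ → ℝ} (hp : RdtPot c ρ) {U : ℂ → ℝ → ℂ}
    (hu : ∀ k : ℝ, IsJostPlus c k (U k)) :
    Tendsto (fun k : ℝ => (U k 0 - 1) / k) (𝓝[≠] 0) (𝓝 0) := by
  have key : Tendsto (fun k : ℝ => ∫ t in Set.Ioi (0:ℝ), ((1 - 1 / (c t : ℂ) ^ 2) *
      ((1 - Complex.exp (2 * Complex.I * k * t)) * rdtM k (U k) t))) (𝓝[≠] 0)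
      (𝓝 (∫ t in Set.Ioi (0:ℝ), (0:ℂ))) := by
    set Q := ∫ t in Set.Ioi 0, ρ t
    have hQ : 0 ≤ Q := integral_nonneg hp.nn
    have hn : ∀ k t : ℝ, ‖Complex.exp (2 * Complex.I * k * t)‖ = 1 := by
      intro k t; rw [Complex.norm_exp]; simp
    have hev : ∀ᶠ k : ℝ in 𝓝[≠] 0, k ≠ 0 ∧ ‖(k:ℂ)‖ ≤ 1 := by
      refine (eventually_mem_nhdsWithin (a := (0:ℝ)) (s := {0}ᶜ)).and ?_
      refine eventually_nhdsWithin_of_eventually_nhds ?_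
      filter_upwards [Metric.closedBall_mem_nhds (0:ℝ) one_pos] with k hk
      simpa using hk
    refine tendsto_integral_filter_of_dominated_convergence (fun t => ρ t * (2 * Real.exp Q)) ?_ ?_ ?_ ?_
    · refine Eventually.of_forall fun k => ?_
      have hc : Continuous (rdtM k (U k)) := rdtM_cont (hu k).1.1.continuous
      exact (hp.qadm.1.mul (Continuous.aestronglyMeasurable (by fun_prop))).restrict
    · filter_upwards [hev] with k hk
      have hb := (rdt_bounds hp (k := k) (by simp) (by exact_mod_cast hk.1) (hu k)).1
      filter_upwards [ae_restrict_of_ae hp.qbd, ae_restrict_mem measurableSet_Ioi] with t ht ht0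
      rw [norm_mul, norm_mul]
      have h1 : ‖1 - Complex.exp (2 * Complex.I * k * t)‖ ≤ 2 := by
        refine (norm_sub_le _ _).trans ?_
        rw [hn k t, norm_one]; norm_num
      have h2 : ‖rdtM k (U k) t‖ ≤ Real.exp Q := by
        refine (hb t (le_of_lt ht0)).trans (Real.exp_le_exp.2 ?_)
        exact mul_le_of_le_one_left hQ hk.2
      have := hp.nn t
      gcongr
    · exact hp.int.integrableOn.mul_const _
    · filter_upwards [ae_restrict_mem measurableSet_Ioi] with t ht0
      have l1 : Tendsto (fun k : ℝ => ‖(1 - 1 / (c t : ℂ) ^ 2)‖ * (‖1 - Complex.exp (2 * Complex.I * k * t)‖ * Real.exp Q)) (𝓝[≠] 0) (𝓝 0) := by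
        have : Continuous (fun k : ℝ => ‖(1 - 1 / (c t : ℂ) ^ 2)‖ * (‖1 - Complex.exp (2 * Complex.I * k * t)‖ * Real.exp Q)) := by fun_prop
        have h2 := (this.tendsto 0).mono_left (nhdsWithin_le_nhds (s := {0}ᶜ))
        simpa using h2
      refine squeeze_zero_norm' ?_ l1
      filter_upwards [hev] with k hk
      have hb := (rdt_bounds hp (k := k) (by simp) (by exact_mod_cast hk.1) (hu k)).1
      have h2 : ‖rdtM k (U k) t‖ ≤ Real.exp Q := by
        refine (hb t (le_of_lt ht0)).trans (Real.exp_le_exp.2 ?_)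
        exact mul_le_of_le_one_left hQ hk.2
      rw [norm_mul, norm_mul]
      gcongr
  rw [integral_zero] at key
  have h2 := key.const_mul (Complex.I / 2)
  rw [mul_zero] at h2
  refine h2.congr' ?_
  filter_upwards [eventually_mem_nhdsWithin (a := (0:ℝ)) (s := {0}ᶜ)] with k hk
  have hk' : (k:ℂ) ≠ 0 := by exact_mod_cast hk
  have e := rdt_repr hp (hu k)
  set X := ∫ t in Set.Ioi (0:ℝ), ((1 - 1 / (c t : ℂ) ^ 2) *
      ((1 - Complex.exp (2 * Complex.I * k * t)) * rdtM k (U k) t))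
  rw [eq_div_iff hk']
  have h3 : (2 * Complex.I * k) * (Complex.I / 2 * X * k) = (2 * Complex.I * k) * (U k 0 - 1) := by
    rw [e]; linear_combination (k^2 * X) * Complex.I_sq
  exact mul_left_cancel₀ (by simp [hk']) h3


theorem rdt_re_le {F g : ℝ → ℂ} {w : ℝ → ℝ} (hg : RdtAdm g) (hw : Continuous w) {a b : ℝ} (hab : a ≤ b)
    (hF : F b = F a + ∫ x in a..b, g x) (hle : ∀ᵐ x : ℝ, (g x).re ≤ w x) :
    (F b).re ≤ (F a).re + ∫ x in a..b, w x := by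
  rw [hF, Complex.add_re]
  have h1 := Complex.reCLM.intervalIntegral_comp_comm (hg.intInt a b)
  simp only [Complex.reCLM_apply] at h1
  rw [← h1]
  have i1 : IntervalIntegrable (fun x => (g x).re) volume a b := by
    have := hg.intInt a b
    exact ⟨this.1.re, this.2.re⟩
  have := intervalIntegral.integral_mono_ae hab i1 (hw.intervalIntegrable a b) hle
  linarith

/-- weighted flux -/
def rdtG (s : ℝ) (k : ℂ) (u : ℝ → ℂ) (x : ℝ) : ℂ :=
  -(((Real.exp (s * x) : ℝ) : ℂ) * (Complex.I * (starRingEnd ℂ) k * (starRingEnd ℂ) (u x)) * deriv u x)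

theorem rdt_fluxrepr {c ρ : ℝ → ℝ} (hp : RdtPot c ρ) {k : ℂ} {u : ℝ → ℂ}
    (hu : SolvesHelmholtz c k u) (s : ℝ) :
    ∃ g : ℝ → ℂ, RdtAdm g ∧ (∀ a b, rdtG s k u b = rdtG s k u a + ∫ x in a..b, g x) ∧
      ∀ x, (g x).re = s * (rdtG s k u x).re
        - k.im * Real.exp (s * x) * (‖deriv u x‖ ^ 2 + ‖k‖ ^ 2 * ‖u x‖ ^ 2 / c x ^ 2) := by
  have uc := hu.1.continuous
  have udc := hu.1.continuous_deriv le_rfl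
  set h : ℝ → ℂ := fun x => -(((Real.exp (s * x) : ℝ) : ℂ) * (Complex.I * (starRingEnd ℂ) k * (starRingEnd ℂ) (u x))) with hh
  have hE : ContDiff ℝ 1 (fun x : ℝ => ((Real.exp (s * x) : ℝ) : ℂ)) :=
    Complex.ofRealCLM.contDiff.comp (Real.contDiff_exp.comp (contDiff_const.mul contDiff_id))
  have hC : ContDiff ℝ 1 (fun x : ℝ => (starRingEnd ℂ) (u x)) :=
    Complex.conjCLE.contDiff.comp hu.1
  have hcd : ContDiff ℝ 1 h := (hE.mul (contDiff_const.mul hC)).neg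
  have dh : ∀ x, deriv h x = s * h x - ((Real.exp (s * x) : ℝ) : ℂ) *
      (Complex.I * (starRingEnd ℂ) k * (starRingEnd ℂ) (deriv u x)) := by
    intro x
    have h1 : HasDerivAt u (deriv u x) x := (hu.1.differentiable one_ne_zero x).hasDerivAt
    have h2 : HasDerivAt (fun x => (starRingEnd ℂ) (u x)) ((starRingEnd ℂ) (deriv u x)) x :=
      Complex.conjCLE.hasFDerivAt.comp_hasDerivAt x h1
    have h3 : HasDerivAt (fun x : ℝ => ((Real.exp (s * x) : ℝ) : ℂ)) ((Real.exp (s * x) * s : ℝ) : ℂ) x := by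
      have := ((hasDerivAt_id x).const_mul s).exp
      simp only [id, mul_one] at this
      exact this.ofReal_comp
    have h4 := (h3.mul (h2.const_mul (Complex.I * (starRingEnd ℂ) k))).neg
    have h5 : HasDerivAt h _ x := h4
    rw [h5.deriv, hh]
    push_cast; ring
  have adm1 : RdtAdm (fun x => -(k ^ 2 / ((c x : ℂ) ^ 2)) * u x) := by
    have := ((RdtAdm.of_cont (continuous_const (y := -k ^ 2))).mul hp.adm).mul (RdtAdm.of_cont uc)
    convert this using 2
    ring
  refine ⟨fun x => deriv h x * deriv u x + h x * (-(k ^ 2 / ((c x : ℂ) ^ 2)) * u x), ?_, ?_, ?_⟩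
  · exact (RdtAdm.of_cont ((hcd.continuous_deriv le_rfl).mul udc)).add
      ((RdtAdm.of_cont hcd.continuous).mul adm1)
  · intro a b
    have := rdt_prod (v := deriv u) hcd adm1 hu.2 a b
    have e0 : ∀ y, rdtG s k u y = h y * deriv u y := fun y => by simp only [rdtG, hh]; ring
    rw [e0, e0]
    exact this
  · intro x
    have e0 : rdtG s k u x = h x * deriv u x := by simp only [rdtG, hh]; ring
    have e1 : deriv h x * deriv u x + h x * (-(k ^ 2 / ((c x : ℂ) ^ 2)) * u x) =
      s * (h x * deriv u x) - ((Real.exp (s * x) : ℝ) : ℂ) *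
      (Complex.I * (starRingEnd ℂ) k * ((‖deriv u x‖ ^ 2 : ℝ) : ℂ)
       - Complex.I * k * ((‖k‖ ^ 2 * ‖u x‖ ^ 2 / c x ^ 2 : ℝ) : ℂ)) := by
      rw [dh x]
      have n1 := Complex.conj_mul' (deriv u x)
      have n2 := Complex.conj_mul' (u x)
      have n3 := Complex.conj_mul' k
      push_cast
      rw [← n1, ← n2, ← n3, hh]
      push_cast
      ring
    simp only [e1, ← e0]
    simp only [Complex.sub_re, Complex.re_ofReal_mul]
    have r1 : ∀ (z : ℂ) (r : ℝ), (Complex.I * z * (r:ℂ)).re = - z.im * r := by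
      intro z r; simp [Complex.mul_re]
    rw [r1, r1, Complex.conj_im]
    ring

theorem rdt_flux {c ρ : ℝ → ℝ} (hp : RdtPot c ρ) {k : ℂ} (hk : 0 < k.im) {u : ℝ → ℂ}
    (hu : IsJostPlus c k u) :
    ‖k‖ ^ 2 ≤ -(Complex.I * (starRingEnd ℂ) k * (starRingEnd ℂ) (u 0) * deriv u 0).re *
      Real.exp (2 * k.im * ∫ t in Set.Ioi 0, ρ t) := by
  have uc := hu.1.1.continuous
  have udc := hu.1.1.continuous_deriv le_rfl
  have hk0 : k ≠ 0 := by rintro rfl; simp at hk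
  have hQ := intervalIntegral_tendsto_integral_Ioi 0 (hp.int.integrableOn) tendsto_id
  simp only [id] at hQ
  have hGc : ∀ s, Continuous (fun x => (rdtG s k u x).re) := by
    intro s
    unfold rdtG
    refine Complex.continuous_re.comp ?_
    have : Continuous (fun x => (starRingEnd ℂ) (u x)) := Complex.continuous_conj.comp uc
    fun_prop
  -- limit
  have hlim : Tendsto (fun x => (rdtG (2 * k.im) k u x).re) atTop (𝓝 (‖k‖ ^ 2)) := by
    have l1 := (Complex.continuous_conj.tendsto _).comp hu.2
    have l2 := ((l1.const_mul (Complex.I * (starRingEnd ℂ) k)).mul (rdt_lim' hp hu)).neg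
    have l3 := (Complex.continuous_re.tendsto _).comp l2
    have e : (-(Complex.I * (starRingEnd ℂ) k * (starRingEnd ℂ) 1 * (Complex.I * k))).re = ‖k‖ ^ 2 := by
      have : -(Complex.I * (starRingEnd ℂ) k * (starRingEnd ℂ) 1 * (Complex.I * k)) = ((‖k‖ ^ 2 : ℝ) : ℂ) := by
        push_cast
        rw [← Complex.conj_mul', map_one]
        linear_combination (-((starRingEnd ℂ) k * k)) * Complex.I_sq
      rw [this, Complex.ofReal_re]
    rw [e] at l3
    refine l3.congr fun x => ?_
    simp only [Function.comp, rdtG, map_mul]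
    congr 1
    have e2 : ((Real.exp (2 * k.im * x) : ℝ) : ℂ) =
        (starRingEnd ℂ) (Complex.exp (-(Complex.I * k * x))) * Complex.exp (-(Complex.I * k * x)) := by
      rw [Complex.conj_mul', rdt_norm_exp1]
      rw [← Complex.ofReal_pow, ← Real.exp_nat_mul]
      congr 2; push_cast; ring
    rw [e2]; ring
  have hGe : ∀ s x, (rdtG s k u x).re = Real.exp (s * x) * (rdtG 0 k u x).re := by
    intro s x
    simp only [rdtG, zero_mul, Real.exp_zero, Complex.ofReal_one, one_mul, mul_assoc, Complex.neg_re,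
      Complex.re_ofReal_mul]
    ring
  -- positivity
  have hanti : ∀ a b, a ≤ b → (rdtG 0 k u b).re ≤ (rdtG 0 k u a).re := by
    intro a b hab
    obtain ⟨g, hg, hF, hre⟩ := rdt_fluxrepr hp hu.1 0
    have := rdt_re_le (F := rdtG 0 k u) (w := fun _ => 0) hg continuous_const hab (hF a b) (by
      filter_upwards with x
      rw [hre x]
      have : 0 ≤ k.im * Real.exp (0 * x) * (‖deriv u x‖ ^ 2 + ‖k‖ ^ 2 * ‖u x‖ ^ 2 / c x ^ 2) := by
        positivity
      linarith)
    simpa using this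
  have hpos : ∀ x, 0 ≤ (rdtG 0 k u x).re := by
    intro x
    have h1 := hlim.eventually (lt_mem_nhds (show 0 < ‖k‖ ^ 2 by positivity))
    obtain ⟨y, hy1, hy2⟩ := (h1.and (eventually_ge_atTop x)).exists
    rw [hGe] at hy1
    have := (pos_iff_pos_of_mul_pos hy1).1 (Real.exp_pos _)
    exact this.le.trans (hanti x y hy2)
  have hfin := rdt_gron_fwd (κ := 2 * k.im) (hGc (2 * k.im)) hp.cont hp.nn (by positivity) hlim hQ (by
    intro x hx
    obtain ⟨g, hg, hF, hre⟩ := rdt_fluxrepr hp hu.1 (2 * k.im)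
    have := rdt_re_le (F := rdtG (2 * k.im) k u)
      (w := fun t => 2 * k.im * (ρ t * (rdtG (2 * k.im) k u t).re)) hg
      (continuous_const.mul (hp.cont.mul (hGc _))) hx (hF 0 x) (by
      filter_upwards [hp.ae] with t ht
      obtain ⟨hc, -, hr⟩ := ht
      rw [hre t]
      rw [hGe (2 * k.im) t]
      set E := Real.exp (2 * k.im * t)
      set P := (rdtG 0 k u t).re with hPdef
      have hP0 : 0 ≤ P := hpos t
      have hE0 : 0 < E := Real.exp_pos _
      have hPle : P ≤ ‖k‖ * ‖u t‖ * ‖deriv u t‖ := by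
        refine (Complex.re_le_norm _).trans (le_of_eq ?_)
        simp [rdtG]
      have h2 : 2 * P * (1 / c t) ≤ ‖deriv u t‖ ^ 2 + ‖k‖ ^ 2 * ‖u t‖ ^ 2 / c t ^ 2 := by
        have h3 : 0 ≤ 1 / c t := by positivity
        have h4 := mul_le_mul_of_nonneg_right hPle h3
        have h5 := sq_nonneg (‖deriv u t‖ - ‖k‖ * ‖u t‖ * (1 / c t))
        have h6 : ‖k‖ ^ 2 * ‖u t‖ ^ 2 / c t ^ 2 = (‖k‖ * ‖u t‖ * (1 / c t)) ^ 2 := by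
          field_simp
        rw [h6]
        nlinarith
      have h7 : 1 - 1 / c t ≤ ρ t := (le_abs_self _).trans hr
      have h8 : 0 ≤ k.im * E := by positivity
      have h9 := mul_le_mul_of_nonneg_left h2 h8
      have h10 := mul_le_mul_of_nonneg_left h7 (show 0 ≤ 2 * (k.im * E * P) by positivity)
      nlinarith)
    rwa [intervalIntegral.integral_const_mul] at this)
  refine hfin.trans (le_of_eq ?_)
  simp [rdtG]

/-- reflection -/
theorem rdt_refl {c : ℝ → ℝ} {k : ℂ} {u : ℝ → ℂ} (hu : IsJostMinus c k u) :
    IsJostPlus (fun x => c (-x)) k (fun x => u (-x)) := by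
  have hd : ∀ x, deriv (fun x => u (-x)) x = - deriv u (-x) := fun x => deriv_comp_neg u x
  refine ⟨⟨hu.1.1.comp contDiff_neg, fun a b => ?_⟩, ?_⟩
  · rw [hd, hd, hu.1.2 (-a) (-b)]
    have := intervalIntegral.integral_comp_neg (a := a) (b := b)
      (fun x => -(k ^ 2 / ((c x : ℂ) ^ 2)) * u x)
    rw [this, intervalIntegral.integral_symm (-b) (-a)]
    ring
  · refine (hu.2.comp tendsto_neg_atTop_atBot).congr fun x => ?_
    simp [Function.comp]


/-- Wronskian at zero -/
def rdtW (U V : ℂ → ℝ → ℂ) (k : ℂ) : ℂ := deriv (U k) 0 * V k 0 - U k 0 * deriv (V k) 0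

/-- normalised Wronskian -/
def rdtF (U V : ℂ → ℝ → ℂ) (k : ℂ) : ℂ := if k = 0 then 1 else rdtW U V k / (2 * Complex.I * k)

theorem rdt_W_upper {c ρ : ℝ → ℝ} (hp : RdtPot c ρ) {U V : ℂ → ℝ → ℂ} {k : ℂ} (hk : 0 ≤ k.im)
    (hU : IsJostPlus c k (U k)) (hV : IsJostMinus c k (V k)) :
    ‖rdtF U V k - 1‖ ≤ 2 * (Real.exp (‖k‖ * ((∫ t in Set.Ioi 0, ρ t) + ∫ t in Set.Ioi 0, ρ (-t))) - 1) := by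
  by_cases hk0 : k = 0
  · simp [rdtF, hk0]
  obtain ⟨-, h1, h2⟩ := rdt_bounds hp hk hk0 hU
  obtain ⟨-, h3, h4⟩ := rdt_bounds hp.refl hk hk0 (rdt_refl hV)
  rw [deriv_comp_neg] at h4
  simp only [neg_zero] at h3 h4
  set Q1 := ∫ t in Set.Ioi 0, ρ t
  set Q2 := ∫ t in Set.Ioi 0, ρ (-t)
  rw [mul_add, Real.exp_add]
  set e1 := Real.exp (‖k‖ * Q1)
  set e2 := Real.exp (‖k‖ * Q2)
  have hkp : 0 < ‖k‖ := norm_pos_iff.2 hk0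
  rw [rdtF, if_neg hk0, rdtW]
  set u := U k 0
  set v := V k 0
  set u' := deriv (U k) 0
  set v' := deriv (V k) 0
  have he1 : 1 ≤ e1 := by linarith [norm_nonneg (u - 1)]
  have he2 : 1 ≤ e2 := by linarith [norm_nonneg (v - 1)]
  have nz : 2 * Complex.I * k ≠ 0 := by simp [hk0]
  rw [div_sub_one nz, norm_div, div_le_iff₀ (norm_pos_iff.2 nz)]
  have n2 : ‖2 * Complex.I * k‖ = 2 * ‖k‖ := by simp
  rw [n2]
  have hu : ‖u‖ ≤ e1 := by
    have := norm_add_le (u - 1) 1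
    rw [sub_add_cancel, norm_one] at this; linarith
  have hv : ‖v‖ ≤ e2 := by
    have := norm_add_le (v - 1) 1
    rw [sub_add_cancel, norm_one] at this; linarith
  have e : u' * v - u * v' - 2 * Complex.I * k =
      (2 * Complex.I * k) * ((u - 1) * v + (v - 1)) + ((u' - Complex.I * k * u) * v
        + u * (-v' - Complex.I * k * v)) := by ring
  rw [e]
  have b1 : ‖(u - 1) * v + (v - 1)‖ ≤ (e1 - 1) * e2 + (e2 - 1) := by
    refine (norm_add_le _ _).trans (add_le_add ?_ h3)
    rw [norm_mul]
    exact mul_le_mul h1 hv (norm_nonneg _) (by linarith)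
  have b2 : ‖(u' - Complex.I * k * u) * v‖ ≤ ‖k‖ * (e1 - 1) * e2 := by
    rw [norm_mul]
    exact mul_le_mul h2 hv (norm_nonneg _) (mul_nonneg hkp.le (by linarith))
  have b3 : ‖u * (-v' - Complex.I * k * v)‖ ≤ e1 * (‖k‖ * (e2 - 1)) := by
    rw [norm_mul]
    exact mul_le_mul hu h4 (norm_nonneg _) (by linarith)
  have b4 : ‖(2 * Complex.I * k) * ((u - 1) * v + (v - 1))‖ ≤ 2 * ‖k‖ * ((e1 - 1) * e2 + (e2 - 1)) := by
    rw [norm_mul, n2]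
    exact mul_le_mul_of_nonneg_left b1 (by positivity)
  refine (norm_add_le _ _).trans ((add_le_add b4 ((norm_add_le _ _).trans (add_le_add b2 b3))).trans ?_)
  have : 0 ≤ ‖k‖ * ((e1 - 1) + (e2 - 1)) := mul_nonneg hkp.le (by linarith)
  nlinarith

theorem rdt_W_lower {c ρ : ℝ → ℝ} (hp : RdtPot c ρ) {U V : ℂ → ℝ → ℂ} {k : ℂ} (hk : 0 < k.im)
    (hU : IsJostPlus c k (U k)) (hV : IsJostMinus c k (V k)) :
    1 ≤ ‖rdtF U V k‖ * Real.exp (‖k‖ * ((∫ t in Set.Ioi 0, ρ t) + ∫ t in Set.Ioi 0, ρ (-t))) := by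
  have hk0 : k ≠ 0 := by rintro rfl; simp at hk
  have h1 := rdt_flux hp hk hU
  have h2 := rdt_flux hp.refl hk (rdt_refl hV)
  rw [deriv_comp_neg] at h2
  simp only [neg_zero] at h2
  have hQ1 : 0 ≤ ∫ t in Set.Ioi 0, ρ t := integral_nonneg hp.nn
  have hQ2 : 0 ≤ ∫ t in Set.Ioi 0, ρ (-t) := integral_nonneg (fun x => hp.nn (-x))
  set Q1 := ∫ t in Set.Ioi 0, ρ t
  set Q2 := ∫ t in Set.Ioi 0, ρ (-t)
  have hkp : 0 < ‖k‖ := norm_pos_iff.2 hk0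
  rw [rdtF, if_neg hk0, rdtW]
  set u := U k 0
  set v := V k 0
  set u' := deriv (U k) 0
  set v' := deriv (V k) 0
  set P1 := -(Complex.I * (starRingEnd ℂ) k * (starRingEnd ℂ) u * u').re with hP1
  set P2 := -(Complex.I * (starRingEnd ℂ) k * (starRingEnd ℂ) v * -v').re with hP2
  have k2 : 0 < ‖k‖ ^ 2 := by positivity
  have hu0 : u ≠ 0 := by
    intro h; simp [hP1, h] at h1; exact hk0 h1
  have hv0 : v ≠ 0 := by
    intro h; simp [hP2, h] at h2; exact hk0 h2
  set α := Real.exp (k.im * Q1) with hα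
  set β := Real.exp (k.im * Q2) with hβ
  have a2 : Real.exp (2 * k.im * Q1) = α ^ 2 := by
    rw [hα, ← Real.exp_nat_mul]; congr 1; push_cast; ring
  have b2 : Real.exp (2 * k.im * Q2) = β ^ 2 := by
    rw [hβ, ← Real.exp_nat_mul]; congr 1; push_cast; ring
  rw [a2] at h1
  rw [b2] at h2
  have hα0 : 0 < α := Real.exp_pos _
  have hβ0 : 0 < β := Real.exp_pos _
  have key : P1 * ‖v‖ ^ 2 + P2 * ‖u‖ ^ 2 ≤ ‖k‖ * ‖u‖ * ‖v‖ * ‖u' * v - u * v'‖ := by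
    have e : -(Complex.I * (starRingEnd ℂ) k * (starRingEnd ℂ) u * (starRingEnd ℂ) v * (u' * v - u * v'))
        = ((‖v‖ ^ 2 : ℝ) : ℂ) * (-(Complex.I * (starRingEnd ℂ) k * (starRingEnd ℂ) u * u'))
        + ((‖u‖ ^ 2 : ℝ) : ℂ) * (-(Complex.I * (starRingEnd ℂ) k * (starRingEnd ℂ) v * -v')) := by
      push_cast
      rw [← Complex.conj_mul', ← Complex.conj_mul']
      ring
    have h3 := Complex.re_le_norm (-(Complex.I * (starRingEnd ℂ) k * (starRingEnd ℂ) u * (starRingEnd ℂ) v * (u' * v - u * v')))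
    have h4 := congrArg Complex.re e
    rw [Complex.add_re, Complex.re_ofReal_mul, Complex.re_ofReal_mul, Complex.neg_re, Complex.neg_re (Complex.I * (starRingEnd ℂ) k * (starRingEnd ℂ) u * u'), Complex.neg_re (Complex.I * (starRingEnd ℂ) k * (starRingEnd ℂ) v * -v')] at h4
    rw [← hP1, ← hP2] at h4
    rw [Complex.neg_re] at h3
    have h5 : ‖-(Complex.I * (starRingEnd ℂ) k * (starRingEnd ℂ) u * (starRingEnd ℂ) v * (u' * v - u * v'))‖
       = ‖k‖ * ‖u‖ * ‖v‖ * ‖u' * v - u * v'‖ := by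
      rw [norm_neg]; simp only [norm_mul, RCLike.norm_conj, Complex.norm_I, one_mul]
    rw [h5] at h3
    linarith
  have nz : 2 * Complex.I * k ≠ 0 := by simp [hk0]
  have n2 : ‖2 * Complex.I * k‖ = 2 * ‖k‖ := by simp
  rw [norm_div, n2]
  set W := ‖u' * v - u * v'‖
  have hu1 : 0 < ‖u‖ := norm_pos_iff.2 hu0
  have hv1 : 0 < ‖v‖ := norm_pos_iff.2 hv0
  have main : 2 * ‖k‖ ≤ W * (α * β) := by
    -- multiply key by (alpha beta)^2
    have s1 : ‖k‖ ^ 2 * (‖v‖ * β) ^ 2 ≤ P1 * ‖v‖ ^ 2 * (α * β) ^ 2 := by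
      have := mul_le_mul_of_nonneg_right h1 (show 0 ≤ (‖v‖ * β) ^ 2 by positivity)
      nlinarith
    have s2 : ‖k‖ ^ 2 * (‖u‖ * α) ^ 2 ≤ P2 * ‖u‖ ^ 2 * (α * β) ^ 2 := by
      have := mul_le_mul_of_nonneg_right h2 (show 0 ≤ (‖u‖ * α) ^ 2 by positivity)
      nlinarith
    have s3 := mul_le_mul_of_nonneg_right key (show 0 ≤ (α * β) ^ 2 by positivity)
    have s4 := mul_nonneg k2.le (sq_nonneg (‖v‖ * β - ‖u‖ * α))
    have s5 : (‖k‖ * ‖u‖ * ‖v‖ * (α * β)) * (2 * ‖k‖) ≤ (‖k‖ * ‖u‖ * ‖v‖ * (α * β)) * (W * (α * β)) := by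
      nlinarith
    exact le_of_mul_le_mul_left s5 (by positivity)
  have hexp : α * β ≤ Real.exp (‖k‖ * (Q1 + Q2)) := by
    rw [hα, hβ, ← Real.exp_add, ← mul_add]
    refine Real.exp_le_exp.2 (mul_le_mul_of_nonneg_right ?_ (by linarith))
    exact (le_abs_self _).trans (Complex.abs_im_le_norm k)
  have hW0 : 0 ≤ W := norm_nonneg _
  rw [div_mul_eq_mul_div, le_div_iff₀ (by positivity), one_mul]
  exact main.trans (mul_le_mul_of_nonneg_left hexp hW0)

theorem rdtF_cont {c ρ : ℝ → ℝ} (hp : RdtPot c ρ) {U V : ℂ → ℝ → ℂ}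
    (hU : ∀ k : ℂ, 0 ≤ k.im → IsJostPlus c k (U k)) (hV : ∀ k : ℂ, 0 ≤ k.im → IsJostMinus c k (V k))
    (rU : JostFamilyRegular U) (rV : JostFamilyRegular V) :
    ContinuousOn (rdtF U V) {k : ℂ | 0 ≤ k.im} := by
  intro k hk
  by_cases hk0 : k = 0
  · subst hk0
    set Q := (∫ t in Set.Ioi 0, ρ t) + ∫ t in Set.Ioi 0, ρ (-t) with hQ
    have h1 : Continuous (fun k : ℂ => 2 * (Real.exp (‖k‖ * Q) - 1)) := by fun_prop
    have h2 := (h1.tendsto 0).mono_left (nhdsWithin_le_nhds (s := {k : ℂ | 0 ≤ k.im}))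
    simp only [norm_zero, zero_mul, Real.exp_zero, sub_self, mul_zero] at h2
    have h3 : rdtF U V 0 = 1 := by simp [rdtF]
    rw [ContinuousWithinAt, h3, tendsto_iff_norm_sub_tendsto_zero]
    refine squeeze_zero' (Eventually.of_forall fun _ => norm_nonneg _) ?_ h2
    filter_upwards [self_mem_nhdsWithin] with z hz
    exact rdt_W_upper hp hz (hU z hz) (hV z hz)
  · have h1 : ContinuousWithinAt (fun z => rdtW U V z / (2 * Complex.I * z)) {k : ℂ | 0 ≤ k.im} k := by
      obtain ⟨-, a1, -, a2⟩ := rU 0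
      obtain ⟨-, b1, -, b2⟩ := rV 0
      refine ContinuousWithinAt.div (((a2 k hk).mul (b1 k hk)).sub ((a1 k hk).mul (b2 k hk)))
        (by fun_prop) (by simp [hk0])
    refine h1.congr_of_eventuallyEq ?_ (by simp [rdtF, hk0])
    filter_upwards [eventually_nhdsWithin_of_eventually_nhds (isOpen_ne.eventually_mem hk0)] with z hz
    simp only [rdtF, if_neg hz]

theorem rdtF_diff {U V : ℂ → ℝ → ℂ}
    (rU : JostFamilyRegular U) (rV : JostFamilyRegular V) :
    DifferentiableOn ℂ (rdtF U V) {k : ℂ | 0 < k.im} := by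
  obtain ⟨a1, -, a2, -⟩ := rU 0
  obtain ⟨b1, -, b2, -⟩ := rV 0
  have hne : ∀ z : ℂ, z ∈ {k : ℂ | 0 < k.im} → z ≠ 0 := by
    rintro z hz rfl; simp at hz
  have h1 : DifferentiableOn ℂ (fun z => rdtW U V z / (2 * Complex.I * z)) {k : ℂ | 0 < k.im} :=
    DifferentiableOn.div ((a2.mul b1).sub (a1.mul b2)) (by fun_prop) (fun z hz => by
      simp [hne z hz])
  refine h1.congr fun z hz => ?_
  simp only [rdtF, if_neg (hne z hz)]

theorem rdt_unit {c ρ : ℝ → ℝ} (hp : RdtPot c ρ) {k : ℝ} (hk : k ≠ 0) {u v : ℝ → ℂ}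
    (hu : IsJostPlus c k u) (hv : IsJostMinus c k v) {T R : ℂ} (hT : T ≠ 0)
    (hW : ∀ x : ℝ, T * (deriv u x * v x - u x * deriv v x) = 2 * Complex.I * (k : ℂ))
    (hrel : ∀ x : ℝ, u x = (R / T) * v x + (1 / T) * (starRingEnd ℂ) (v x)) :
    ‖T‖ ^ 2 = 1 - ‖R‖ ^ 2 := by
  have hd : ∀ x, deriv u x = (R / T) * deriv v x + (1 / T) * (starRingEnd ℂ) (deriv v x) := by
    intro x
    have h1 : HasDerivAt v (deriv v x) x := (hv.1.1.differentiable one_ne_zero x).hasDerivAt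
    have h2 : HasDerivAt (fun x => (starRingEnd ℂ) (v x)) ((starRingEnd ℂ) (deriv v x)) x :=
      Complex.conjCLE.hasFDerivAt.comp_hasDerivAt x h1
    have h3 := (h1.const_mul (R / T)).add (h2.const_mul (1 / T))
    rw [← h3.deriv]
    congr 1
    funext y
    exact hrel y
  have hv2 : ∀ x, (starRingEnd ℂ) (deriv v x) * v x - (starRingEnd ℂ) (v x) * deriv v x
      = 2 * Complex.I * (k : ℂ) := by
    intro x
    rw [← hW x, hd x, hrel x]
    field_simp
    ring
  have hfl : ∀ x, (starRingEnd ℂ) (deriv u x) * u x - (starRingEnd ℂ) (u x) * deriv u x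
      = ((‖R / T‖ ^ 2 : ℝ) - (‖1 / T‖ ^ 2 : ℝ)) * (2 * Complex.I * (k : ℂ)) := by
    intro x
    rw [← hv2 x, hd x, hrel x]
    push_cast
    rw [← Complex.conj_mul', ← Complex.conj_mul']
    simp only [map_add, map_mul, Complex.conj_conj]
    ring
  have l1 := (((Complex.continuous_conj.tendsto _).comp (rdt_lim' hp hu)).mul hu.2).sub
    (((Complex.continuous_conj.tendsto _).comp hu.2).mul (rdt_lim' hp hu))
  have l2 : Tendsto (fun x : ℝ => ((‖R / T‖ ^ 2 : ℝ) - (‖1 / T‖ ^ 2 : ℝ)) * (2 * Complex.I * (k : ℂ)))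
      atTop (𝓝 ((starRingEnd ℂ) (Complex.I * k) * 1 - (starRingEnd ℂ) 1 * (Complex.I * k))) := by
    refine l1.congr fun x => ?_
    rw [← hfl x]
    simp only [Function.comp, map_mul]
    have e1 : (starRingEnd ℂ) (Complex.exp (-(Complex.I * k * x))) * Complex.exp (-(Complex.I * k * x)) = 1 := by
      rw [Complex.conj_mul', rdt_norm_exp1]; simp
    linear_combination ((starRingEnd ℂ) (deriv u x) * u x - (starRingEnd ℂ) (u x) * deriv u x) * e1
  have e := tendsto_nhds_unique tendsto_const_nhds l2
  simp only [map_mul, Complex.conj_I, Complex.conj_ofReal, map_one] at e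
  have nz : 2 * Complex.I * (k:ℂ) ≠ 0 := by simp [hk]
  have e2 : (((‖R / T‖ ^ 2 - ‖1 / T‖ ^ 2 : ℝ)) : ℂ) = ((-1 : ℝ) : ℂ) := by
    refine mul_right_cancel₀ nz ?_
    push_cast
    push_cast at e
    rw [e]; ring
  have e3 := Complex.ofReal_injective e2
  have hTn : 0 < ‖T‖ := norm_pos_iff.2 hT
  rw [norm_div, norm_div, norm_one] at e3
  field_simp at e3
  linarith

theorem rdtF_real {U V : ℂ → ℝ → ℂ} {k : ℝ} (hk : k ≠ 0) {T : ℂ} (hT : T ≠ 0)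
    (hW : T * (deriv (U k) 0 * V k 0 - U k 0 * deriv (V k) 0) = 2 * Complex.I * (k : ℂ)) :
    rdtF U V k = 1 / T := by
  have hk' : (k:ℂ) ≠ 0 := by exact_mod_cast hk
  rw [rdtF, if_neg hk', rdtW, ← hW]
  have : deriv (U k) 0 * V k 0 - U k 0 * deriv (V k) 0 ≠ 0 := by
    intro h
    rw [h, mul_zero] at hW
    have : 2 * Complex.I * (k:ℂ) ≠ 0 := by simp [hk]
    exact this hW.symm
  field_simp


/-- two-sided control of the normalised Wronskian -/
theorem rdt_ctrl {c ρ : ℝ → ℝ} (hp : RdtPot c ρ) {U V : ℂ → ℝ → ℂ}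
    (hU : ∀ k : ℂ, 0 ≤ k.im → IsJostPlus c k (U k)) (hV : ∀ k : ℂ, 0 ≤ k.im → IsJostMinus c k (V k))
    {T R : ℝ → ℂ} (hT : ∀ k : ℝ, k ≠ 0 → T k ≠ 0)
    (hW : ∀ k : ℝ, k ≠ 0 → ∀ x : ℝ,
      T k * (deriv (U (k : ℂ)) x * V (k : ℂ) x - U (k : ℂ) x * deriv (V (k : ℂ)) x)
        = 2 * Complex.I * (k : ℂ))
    (hrel : ∀ k : ℝ, k ≠ 0 → ∀ x : ℝ,
      U (k : ℂ) x = (R k / T k) * V (k : ℂ) x + (1 / T k) * (starRingEnd ℂ) (V (k : ℂ) x)) :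
    ∃ C : ℝ, 0 < C ∧ ∀ z : ℂ, 0 ≤ z.im → rdtF U V z ≠ 0 ∧
      ‖rdtF U V z‖ ≤ Real.exp (C * (1 + ‖z‖)) ∧ ‖rdtF U V z‖⁻¹ ≤ Real.exp (C * (1 + ‖z‖)) := by
  have hQ1 : 0 ≤ ∫ t in Set.Ioi 0, ρ t := integral_nonneg hp.nn
  have hQ2 : 0 ≤ ∫ t in Set.Ioi 0, ρ (-t) := integral_nonneg (fun x => hp.nn (-x))
  set Q := (∫ t in Set.Ioi 0, ρ t) + ∫ t in Set.Ioi 0, ρ (-t) with hQ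
  have hQ0 : 0 ≤ Q := by linarith
  refine ⟨1 + Q, by linarith, fun z hz => ?_⟩
  have hup := rdt_W_upper hp hz (hU z hz) (hV z hz)
  rw [← hQ] at hup
  have hlow : 1 ≤ ‖rdtF U V z‖ * Real.exp (‖z‖ * Q) := by
    have hexp1 : 1 ≤ Real.exp (‖z‖ * Q) := Real.one_le_exp (by positivity)
    rcases hz.lt_or_eq with h | h
    · exact rdt_W_lower hp h (hU z hz) (hV z hz)
    · have hz' : z = ((z.re : ℝ) : ℂ) := by
        apply Complex.ext <;> simp [← h]
      have h1 : 1 ≤ ‖rdtF U V z‖ := by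
        by_cases h0 : z.re = 0
        · rw [hz', h0]; simp [rdtF]
        · rw [hz', rdtF_real h0 (hT _ h0) (hW _ h0 0)]
          have h2 := rdt_unit hp h0 (hU _ (by simp)) (hV _ (by simp)) (hT _ h0) (hW _ h0) (hrel _ h0)
          have h3 : 0 < ‖T z.re‖ := norm_pos_iff.2 (hT _ h0)
          rw [norm_div, norm_one, le_div_iff₀ h3, one_mul]
          nlinarith [sq_nonneg ‖R z.re‖]
      nlinarith
  have hpos : 0 < ‖rdtF U V z‖ := by
    by_contra hcon
    have : ‖rdtF U V z‖ = 0 := le_antisymm (not_lt.1 hcon) (norm_nonneg _)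
    rw [this, zero_mul] at hlow
    linarith
  refine ⟨norm_pos_iff.1 hpos, ?_, ?_⟩
  · have h1 := norm_add_le (rdtF U V z - 1) 1
    rw [sub_add_cancel, norm_one] at h1
    have h2 : (2:ℝ) ≤ Real.exp 1 := by linarith [Real.add_one_le_exp (1:ℝ)]
    have h3 : Real.exp 1 * Real.exp (‖z‖ * Q) ≤ Real.exp ((1 + Q) * (1 + ‖z‖)) := by
      rw [← Real.exp_add]
      refine Real.exp_le_exp.2 ?_
      nlinarith [norm_nonneg z]
    have h4 := mul_le_mul_of_nonneg_right h2 (Real.exp_pos (‖z‖ * Q)).le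
    linarith
  · have h1 : ‖rdtF U V z‖⁻¹ ≤ Real.exp (‖z‖ * Q) := by
      rw [inv_le_iff_one_le_mul₀ hpos]; linarith
    refine h1.trans (Real.exp_le_exp.2 ?_)
    nlinarith [norm_nonneg z]

theorem rdt_small' {c ρ : ℝ → ℝ} (hp : RdtPot c ρ) {U : ℂ → ℝ → ℂ}
    (hu : ∀ k : ℝ, IsJostMinus c k (U k)) :
    Tendsto (fun k : ℝ => (U k 0 - 1) / k) (𝓝[≠] 0) (𝓝 0) := by
  have := rdt_small hp.refl (U := fun k x => U k (-x)) (fun k => rdt_refl (hu k))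
  simpa only [neg_zero] using this


/-- The reflection coefficient uniquely determines the transmission coefficient. -/
theorem reflection_determines_transmission
    (c₁ c₂ : ℝ → ℝ) (hm₁ : Measurable c₁) (hm₂ : Measurable c₂)
    (h1₁ : HypH1 c₁) (h2₁ : HypH2 c₁) (h1₂ : HypH1 c₂) (h2₂ : HypH2 c₂)
    (U₁ U₂ V₁ V₂ : ℂ → ℝ → ℂ)
    (hU₁ : ∀ k : ℂ, 0 ≤ k.im → IsJostPlus c₁ k (U₁ k))
    (hU₂ : ∀ k : ℂ, 0 ≤ k.im → IsJostMinus c₁ k (U₂ k))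
    (hV₁ : ∀ k : ℂ, 0 ≤ k.im → IsJostPlus c₂ k (V₁ k))
    (hV₂ : ∀ k : ℂ, 0 ≤ k.im → IsJostMinus c₂ k (V₂ k))
    (hregU₁ : JostFamilyRegular U₁) (hregU₂ : JostFamilyRegular U₂)
    (hregV₁ : JostFamilyRegular V₁) (hregV₂ : JostFamilyRegular V₂)
    (T₁ T₂ R₂₁ R₂₂ : ℝ → ℂ)
    (hT₁ : ∀ k : ℝ, k ≠ 0 → T₁ k ≠ 0) (hT₂ : ∀ k : ℝ, k ≠ 0 → T₂ k ≠ 0)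
    (hW₁ : ∀ k : ℝ, k ≠ 0 → ∀ x : ℝ,
      T₁ k * (deriv (U₁ (k : ℂ)) x * U₂ (k : ℂ) x -
        U₁ (k : ℂ) x * deriv (U₂ (k : ℂ)) x) = 2 * Complex.I * (k : ℂ))
    (hW₂ : ∀ k : ℝ, k ≠ 0 → ∀ x : ℝ,
      T₂ k * (deriv (V₁ (k : ℂ)) x * V₂ (k : ℂ) x -
        V₁ (k : ℂ) x * deriv (V₂ (k : ℂ)) x) = 2 * Complex.I * (k : ℂ))
    (hrel₁ : ∀ k : ℝ, k ≠ 0 → ∀ x : ℝ,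
      U₁ (k : ℂ) x = (R₂₁ k / T₁ k) * U₂ (k : ℂ) x +
        (1 / T₁ k) * (starRingEnd ℂ) (U₂ (k : ℂ) x))
    (hrel₂ : ∀ k : ℝ, k ≠ 0 → ∀ x : ℝ,
      V₁ (k : ℂ) x = (R₂₂ k / T₂ k) * V₂ (k : ℂ) x +
        (1 / T₂ k) * (starRingEnd ℂ) (V₂ (k : ℂ) x))
    (hR : ∀ k : ℝ, k ≠ 0 → R₂₁ k = R₂₂ k) :
    ∀ k : ℝ, k ≠ 0 → T₁ k = T₂ k := by
  obtain ⟨ρ₁, hp₁⟩ := rdt_pot hm₁ h1₁ h2₁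
  obtain ⟨ρ₂, hp₂⟩ := rdt_pot hm₂ h1₂ h2₂
  obtain ⟨C₁, hC₁, hb₁⟩ := rdt_ctrl hp₁ hU₁ hU₂ hT₁ hW₁ hrel₁
  obtain ⟨C₂, hC₂, hb₂⟩ := rdt_ctrl hp₂ hV₁ hV₂ hT₂ hW₂ hrel₂
  have hun₁ : ∀ k : ℝ, k ≠ 0 → ‖T₁ k‖ ^ 2 = 1 - ‖R₂₁ k‖ ^ 2 := fun k hk =>
    rdt_unit hp₁ hk (hU₁ _ (by simp)) (hU₂ _ (by simp)) (hT₁ _ hk) (hW₁ _ hk) (hrel₁ _ hk)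
  have hun₂ : ∀ k : ℝ, k ≠ 0 → ‖T₂ k‖ ^ 2 = 1 - ‖R₂₁ k‖ ^ 2 := fun k hk => by
    rw [hR k hk]
    exact rdt_unit hp₂ hk (hV₁ _ (by simp)) (hV₂ _ (by simp)) (hT₂ _ hk) (hW₂ _ hk) (hrel₂ _ hk)
  have hF₁ : ∀ k : ℝ, k ≠ 0 → rdtF U₁ U₂ k = 1 / T₁ k := fun k hk =>
    rdtF_real hk (hT₁ k hk) (hW₁ k hk 0)
  have hF₂ : ∀ k : ℝ, k ≠ 0 → rdtF V₁ V₂ k = 1 / T₂ k := fun k hk =>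
    rdtF_real hk (hT₂ k hk) (hW₂ k hk 0)
  have hc₁ := rdtF_cont hp₁ hU₁ hU₂ hregU₁ hregU₂
  have hc₂ := rdtF_cont hp₂ hV₁ hV₂ hregV₁ hregV₂
  have hd₁ := rdtF_diff hregU₁ hregU₂
  have hd₂ := rdtF_diff hregV₁ hregV₂
  have hF00 : rdtF U₁ U₂ 0 = 1 := by simp [rdtF]
  have hF01 : rdtF V₁ V₂ 0 = 1 := by simp [rdtF]
  have hf : ∀ k : ℝ, k ≠ 0 → rdtF U₁ U₂ k / rdtF V₁ V₂ k = T₂ k / T₁ k := fun k hk => by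
    rw [hF₁ k hk, hF₂ k hk]
    have := hT₁ k hk
    have := hT₂ k hk
    field_simp
  have key := rdt_complex (fun z => rdtF U₁ U₂ z / rdtF V₁ V₂ z)
    (hc₁.div hc₂ fun z hz => (hb₂ z hz).1)
    (hd₁.div hd₂ fun z hz => (hb₂ z (le_of_lt hz)).1)
    (fun z hz => div_ne_zero (hb₁ z hz).1 (hb₂ z hz).1)
    (fun x => by
      by_cases hx : x = 0
      · simp [hx, hF00, hF01]
      · simp only [hf x hx]
        have h1 : ‖T₂ x‖ ^ 2 = ‖T₁ x‖ ^ 2 := by rw [hun₁ x hx, hun₂ x hx]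
        have h2 : ‖T₂ x‖ = ‖T₁ x‖ := (sq_eq_sq₀ (norm_nonneg _) (norm_nonneg _)).1 h1
        rw [norm_div, h2, div_self (norm_ne_zero_iff.2 (hT₁ x hx))])
    (C₁ + C₂) (by linarith)
    (fun z hz => by
      simp only [norm_div]
      rw [div_eq_mul_inv, add_mul, Real.exp_add]
      exact mul_le_mul (hb₁ z hz).2.1 (hb₂ z hz).2.2 (by positivity) (Real.exp_pos _).le)
    (fun z hz => by
      simp only [norm_div]
      rw [inv_div, div_eq_mul_inv, add_mul, Real.exp_add, mul_comm]
      exact mul_le_mul (hb₁ z hz).2.2 (hb₂ z hz).2.1 (norm_nonneg _) (Real.exp_pos _).le)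
    (by simp [hF00, hF01])
    (by
      have a1 := rdt_small hp₁ (U := U₁) (fun k => hU₁ k (by simp))
      have b1 := rdt_small' hp₁ (U := U₂) (fun k => hU₂ k (by simp))
      have a2 := rdt_small hp₂ (U := V₁) (fun k => hV₁ k (by simp))
      have b2 := rdt_small' hp₂ (U := V₂) (fun k => hV₂ k (by simp))
      have hbd : Tendsto (fun k : ℝ => Real.exp (C₁ * (1 + ‖(k:ℂ)‖)) *
          (2 * ‖(U₂ k 0 - 1) / (k:ℂ)‖ + 2 * ‖(V₂ k 0 - 1) / (k:ℂ)‖ +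
            ‖(U₁ k 0 - 1) / (k:ℂ)‖ + ‖(V₁ k 0 - 1) / (k:ℂ)‖)) (𝓝[≠] 0) (𝓝 0) := by
        have e1 : Continuous (fun k : ℝ => Real.exp (C₁ * (1 + ‖(k:ℂ)‖))) := by fun_prop
        have e2 := (e1.tendsto 0).mono_left (nhdsWithin_le_nhds (s := {0}ᶜ))
        have e3 := e2.mul ((((b1.norm.const_mul 2).add (b2.norm.const_mul 2)).add a1.norm).add a2.norm)
        simpa using e3
      refine squeeze_zero_norm' ?_ hbd
      filter_upwards [eventually_mem_nhdsWithin (a := (0:ℝ)) (s := {0}ᶜ)] with k hk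
      have hk : k ≠ 0 := hk
      have hk' : (k:ℂ) ≠ 0 := by exact_mod_cast hk
      have t1 := hT₁ k hk
      have t2 := hT₂ k hk
      have r1 := hrel₁ k hk 0
      have r2 := hrel₂ k hk 0
      rw [← hR k hk] at r2
      simp only [hf k hk]
      have hR1 : ‖R₂₁ k‖ ≤ 1 := by nlinarith [hun₁ k hk, sq_nonneg ‖T₁ k‖, norm_nonneg (R₂₁ k)]
      have hT1 : ‖T₁ k‖ ≤ 1 := by nlinarith [hun₁ k hk, sq_nonneg ‖R₂₁ k‖, norm_nonneg (T₁ k)]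
      have hT2 : ‖T₂ k‖ ≤ 1 := by nlinarith [hun₂ k hk, sq_nonneg ‖R₂₁ k‖, norm_nonneg (T₂ k)]
      have hinv : ‖(T₁ k)⁻¹‖ ≤ Real.exp (C₁ * (1 + ‖(k:ℂ)‖)) := by
        have := (hb₁ k (by simp)).2.1
        rwa [hF₁ k hk, one_div] at this
      set A1 := (U₁ k 0 - 1) / (k:ℂ) with hA1
      set A2 := (V₁ k 0 - 1) / (k:ℂ) with hA2
      set B1 := (U₂ k 0 - 1) / (k:ℂ) with hB1
      set B2 := (V₂ k 0 - 1) / (k:ℂ) with hB2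
      have uA1 : U₁ k 0 = 1 + k * A1 := by rw [hA1]; field_simp; ring
      have uA2 : V₁ k 0 = 1 + k * A2 := by rw [hA2]; field_simp; ring
      have uB1 : U₂ k 0 = 1 + k * B1 := by rw [hB1]; field_simp; ring
      have uB2 : V₂ k 0 = 1 + k * B2 := by rw [hB2]; field_simp; ring
      rw [uA1, uB1] at r1
      rw [uA2, uB2] at r2
      simp only [map_add, map_mul, map_one, Complex.conj_ofReal] at r1 r2
      field_simp at r1 r2
      have e : (T₂ k / T₁ k - 1) / (k:ℂ) = (T₁ k)⁻¹ * (R₂₁ k * (B2 - B1) + ((starRingEnd ℂ) B2 - (starRingEnd ℂ) B1)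
          + T₁ k * A1 - T₂ k * A2) := by
        have e1 : T₂ k - T₁ k = k * (R₂₁ k * (B2 - B1) + ((starRingEnd ℂ) B2 - (starRingEnd ℂ) B1)
          + T₁ k * A1 - T₂ k * A2) := by linear_combination r2 - r1
        have e2 : T₂ k / T₁ k - 1 = (T₁ k)⁻¹ * (T₂ k - T₁ k) := by field_simp
        rw [e2, e1]
        field_simp
      rw [e, norm_mul]
      refine mul_le_mul hinv ?_ (norm_nonneg _) (Real.exp_pos _).le
      have n1 : ‖R₂₁ k * (B2 - B1)‖ ≤ ‖B2‖ + ‖B1‖ := by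
        rw [norm_mul]
        exact (mul_le_of_le_one_left (norm_nonneg _) hR1).trans (norm_sub_le _ _)
      have n2 : ‖(starRingEnd ℂ) B2 - (starRingEnd ℂ) B1‖ ≤ ‖B2‖ + ‖B1‖ := by
        refine (norm_sub_le _ _).trans ?_
        simp only [RCLike.norm_conj, le_refl]
      have n3 : ‖T₁ k * A1‖ ≤ ‖A1‖ := by
        rw [norm_mul]; exact mul_le_of_le_one_left (norm_nonneg _) hT1
      have n4 : ‖T₂ k * A2‖ ≤ ‖A2‖ := by
        rw [norm_mul]; exact mul_le_of_le_one_left (norm_nonneg _) hT2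
      refine (norm_sub_le _ _).trans ?_
      refine (add_le_add ((norm_add_le _ _).trans (add_le_add (norm_add_le _ _) le_rfl)) le_rfl).trans ?_
      linarith)
  intro k hk
  have h1 := key k
  simp only [hf k hk] at h1
  exact ((div_eq_one_iff_eq (hT₁ k hk)).1 h1).symm
end
end
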